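/- A sequence (μ̄_n)_n in 𝓜_Ω converges to μ̄ ∈ 𝓜_Ω with respect to the weak cut metric if and only if the random arrays A(μ̄_n) converge to A(μ̄) in distribution, i.e., for every k and all a_{ij}∈Ω, lim_n P[∀ i,j≤k: A_{ij}(μ̄_n)=a_{ij}] = P[∀ i,j≤k: A_{ij}(μ̄)=a_{ij}]. -/

import Mathlib

open MeasureTheory Set Filter Topology

noncomputable section

namespace Paper

/-- Lebesgue measure restricted to `[0,1)`, representing the unit interval. -/
def lam01 : Measure ℝ := volume.restrict (Set.Ico (0:ℝ) 1)

instance : IsProbabilityMeasure lam01 :=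
  ⟨by simp [lam01, Real.volume_Ico]⟩

variable (Ω : Type) [Fintype Ω]

/-- The simplex `P(Ω) ⊆ ℝ^Ω` of probability vectors. -/
def simplex : Set (Ω → ℝ) := {p | (∀ ω, 0 ≤ p ω) ∧ ∑ ω, p ω = 1}

/-- `Σ_Ω = L¹([0,1), P(Ω))`: elements of `L¹([0,1), ℝ^Ω)` taking values in the simplex a.e. -/
def SigmaSp := {f : MeasureTheory.Lp (Ω → ℝ) 1 lam01 // ∀ᵐ x ∂lam01, f x ∈ simplex Ω}

instance : TopologicalSpace (SigmaSp Ω) := by unfold SigmaSp; infer_instance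
instance : MeasurableSpace (SigmaSp Ω) := borel _
instance : BorelSpace (SigmaSp Ω) := ⟨rfl⟩

/-- Evaluation of (a representative of) an element of `Σ_Ω`. -/
def ev (f : SigmaSp Ω) (x : ℝ) : Ω → ℝ := f.1 x

/-- Probability measures on `Σ_Ω`. -/
abbrev PM := ProbabilityMeasure (SigmaSp Ω)

/-- `γ` is a coupling of `μ` and `ν`. -/
def IsCoupling (μ ν : PM Ω) (γ : Measure (SigmaSp Ω × SigmaSp Ω)) : Prop :=
  γ.map Prod.fst = (μ : Measure (SigmaSp Ω)) ∧ γ.map Prod.snd = (ν : Measure (SigmaSp Ω))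

/-- Total variation norm of a vector in `ℝ^Ω`. -/
def tv (v : Ω → ℝ) : ℝ := (∑ ω, |v ω|) / 2

/-- The inner `sup` of the cut metric, for a given coupling `γ` and rearrangement `s`. -/
def cutPair (γ : Measure (SigmaSp Ω × SigmaSp Ω)) (s : ℝ → ℝ) : ℝ :=
  ⨆ (B : Set (SigmaSp Ω × SigmaSp Ω)) (_ : MeasurableSet B) (U : Set ℝ) (_ : MeasurableSet U),
    tv Ω (fun ω => ∫ p in B, (∫ x in U, (ev Ω p.1 x ω - ev Ω p.2 (s x) ω) ∂lam01) ∂γ)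

/-- The strong cut metric `Cut□`. -/
def CutD (μ ν : PM Ω) : ℝ := ⨅ (γ : {γ // IsCoupling Ω μ ν γ}), cutPair Ω γ.1 id

/-- `S_{[0,1)}`: Lebesgue-measure-preserving measurable self-maps of `[0,1)`. -/
def IsMPS (s : ℝ → ℝ) : Prop :=
  MeasurePreserving s lam01 lam01 ∧ MapsTo s (Ico (0:ℝ) 1) (Ico (0:ℝ) 1)

/-- The weak cut metric `cut□`. -/
def cutd (μ ν : PM Ω) : ℝ :=
  ⨅ (γ : {γ // IsCoupling Ω μ ν γ}) (s : {s // IsMPS s}), cutPair Ω γ.1 s.1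


/-- The probability `P[∀ i,j ≤ k : A_{ij}(μ) = a_{ij}]` for the exchangeable random array
`A(μ)`: with `(Σ_i)_{i≤k}` i.i.d. from `μ`, `(x_j)_{j≤k}` i.i.d. uniform on `[0,1)`, and
`A_{ij}` drawn independently from `Σ_i(x_j) ∈ P(Ω)`, this probability equals
`E ∏_{i,j≤k} Σ_i(x_j)(a_{ij})`. -/
def arrayProb (μ : PM Ω) (kk : ℕ) (a : Fin kk → Fin kk → Ω) : ℝ :=
  ∫ f : Fin kk → SigmaSp Ω,
    (∫ x : Fin kk → ℝ, (∏ i, ∏ j, ev Ω (f i) (x j) (a i j))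
      ∂(Measure.pi fun _ : Fin kk => lam01))
    ∂(Measure.pi fun _ : Fin kk => (μ : Measure (SigmaSp Ω)))

variable {Ω}

/-! Array probabilities are decorated bipartite densities, and a counting lemma makes them
Lipschitz for the weak cut metric; this gives one direction. For the converse, give every row and
every column a type: the entries it shows in a finite random sample of columns or rows. For large
samples the types determine rows and columns up to a small error, by the law of large numbers, so
coupling a kernel with itself along its types makes the four-cycle density of the difference small.
For two kernels coupled along types, that density is a continuous function of finitely many label
probabilities. The moments of the label probabilities are array probabilities, and moments
determine a law on a cube, so if the arrays converge, then for large `n` there are samples of the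
two kernels with almost the same label probabilities. The four-cycle density of the difference is
then small, and the Gowers-Cauchy-Schwarz inequality bounds the cut norm. Finally, `[0,1)` has no
atoms, so the coupling of columns can be replaced by a measure-preserving map. -/

section CutBound

variable {P Q Q' : Type*} [MeasurableSpace P] [MeasurableSpace Q] [MeasurableSpace Q']
  {γ : Measure P} {π : Measure Q} {D E : P × Q → ℝ} {c η : ℝ}

/-- The cut norm of the kernel `D` on the product of `(P, γ)` and `(Q, π)` is at most `c`. -/
def CutBound (γ : Measure P) (π : Measure Q) (D : P × Q → ℝ) (c : ℝ) : Prop :=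
  ∀ ⦃B : Set P⦄ ⦃V : Set Q⦄, MeasurableSet B → MeasurableSet V →
    |∫ z in B ×ˢ V, D z ∂γ.prod π| ≤ c

lemma CutBound.neg (h : CutBound γ π D c) : CutBound γ π (-D) c := by
  intro B V hB hV
  simpa only [Pi.neg_apply, integral_neg, abs_neg] using h hB hV

lemma CutBound.of_integral_abs_sub_le (h : CutBound γ π E c) (hD : Integrable D (γ.prod π))
    (hE : Integrable E (γ.prod π)) (hη : ∫ z, |D z - E z| ∂γ.prod π ≤ η) :
    CutBound γ π D (c + η) := by
  intro B V hB hV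
  have hdiff : |∫ z in B ×ˢ V, (D z - E z) ∂γ.prod π| ≤ η :=
    calc |∫ z in B ×ˢ V, (D z - E z) ∂γ.prod π|
        ≤ ∫ z in B ×ˢ V, |D z - E z| ∂γ.prod π := abs_integral_le_integral_abs
      _ ≤ ∫ z, |D z - E z| ∂γ.prod π :=
        setIntegral_le_integral (hD.sub hE).abs (.of_forall fun _ => abs_nonneg _)
      _ ≤ η := hη
  rw [integral_sub hD.integrableOn hE.integrableOn] at hdiff
  have hsum := abs_sub_le (∫ z in B ×ˢ V, D z ∂γ.prod π) (∫ z in B ×ˢ V, E z ∂γ.prod π) 0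
  rw [sub_zero, sub_zero] at hsum
  linarith [h hB hV]

omit [MeasurableSpace Q] in
lemma indicator_one_mem_Icc (V : Set Q) (q : Q) : V.indicator (1 : Q → ℝ) q ∈ Icc 0 1 :=
  ⟨indicator_nonneg (fun _ _ => zero_le_one) q,
    indicator_le_self' (fun _ _ => zero_le_one) q⟩

lemma setIntegral_eq_integral_indicator_mul {V : Set Q} (hV : MeasurableSet V) (f : Q → ℝ) :
    ∫ q in V, f q ∂π = ∫ q, V.indicator 1 q * f q ∂π := by
  rw [← integral_indicator hV]
  congr with q
  by_cases hq : q ∈ V <;> simp [hq]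

lemma integral_mul_le_setIntegral {w h : Q → ℝ} (hw : Measurable w) (hw01 : ∀ q, w q ∈ Icc 0 1)
    (hh : Measurable h) (hi : Integrable h π) :
    ∫ q, w q * h q ∂π ≤ ∫ q in {q | 0 ≤ h q}, h q ∂π := by
  have hpos : MeasurableSet {q | 0 ≤ h q} := measurableSet_le measurable_const hh
  rw [← integral_indicator hpos]
  refine integral_mono (hi.bdd_mul (c := 1) hw.aestronglyMeasurable (.of_forall fun q => ?_))
    (hi.indicator hpos) fun q => ?_
  · simpa [abs_of_nonneg (hw01 q).1] using (hw01 q).2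
  · by_cases hq : 0 ≤ h q
    · rw [indicator_of_mem (show q ∈ {q | 0 ≤ h q} from hq)]
      exact mul_le_of_le_one_left hq (hw01 q).2
    · rw [indicator_of_notMem (show q ∉ {q | 0 ≤ h q} from hq)]
      exact mul_nonpos_of_nonneg_of_nonpos (hw01 q).1 (not_le.mp hq).le

variable [SFinite γ] [SFinite π]

lemma exists_integral_fst_mul_le (hD : Measurable D) (hDi : Integrable D (γ.prod π)) {f : P → ℝ}
    (hf : Measurable f) (hf01 : ∀ p, f p ∈ Icc 0 1) :
    ∃ B : Set P, MeasurableSet B ∧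
      ∫ z, f z.1 * D z ∂γ.prod π ≤ ∫ z, B.indicator 1 z.1 * D z ∂γ.prod π := by
  set rowInt : P → ℝ := fun p => ∫ q, D (p, q) ∂π
  have hrow : Measurable rowInt := hD.stronglyMeasurable.integral_prod_right'.measurable
  have hB : MeasurableSet {p | 0 ≤ rowInt p} := measurableSet_le measurable_const hrow
  have integral_eq {w : P → ℝ} (hw : Measurable w) (hw01 : ∀ p, w p ∈ Icc 0 1) :
      ∫ z, w z.1 * D z ∂γ.prod π = ∫ p, w p * rowInt p ∂γ := by
    have hwD : Integrable (fun z => w z.1 * D z) (γ.prod π) :=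
      hDi.bdd_mul (c := 1) (hw.comp measurable_fst).aestronglyMeasurable
        (.of_forall fun z => by simpa [abs_of_nonneg (hw01 z.1).1] using (hw01 z.1).2)
    rw [integral_prod _ hwD]
    simp only [rowInt, integral_const_mul]
  refine ⟨_, hB, ?_⟩
  rw [integral_eq hf hf01, integral_eq (measurable_one.indicator hB) (indicator_one_mem_Icc _),
    ← setIntegral_eq_integral_indicator_mul hB]
  exact integral_mul_le_setIntegral hf hf01 hrow hDi.integral_prod_left

/-- The sup defining the cut norm may be taken over `[0, 1]`-valued weights: the optimal weight
in each variable is the indicator of a superlevel set. -/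
lemma exists_integral_weighted_le (hD : Measurable D) (hDi : Integrable D (γ.prod π))
    {f : P → ℝ} {g : Q → ℝ} (hf : Measurable f) (hf01 : ∀ p, f p ∈ Icc 0 1) (hg : Measurable g)
    (hg01 : ∀ q, g q ∈ Icc 0 1) :
    ∃ B V, MeasurableSet B ∧ MeasurableSet V ∧
      ∫ z, f z.1 * (g z.2 * D z) ∂γ.prod π ≤ ∫ z in B ×ˢ V, D z ∂γ.prod π := by
  have integrable_mul {w : P × Q → ℝ} (hw : Measurable w) (hw01 : ∀ z, w z ∈ Icc 0 1) :
      Integrable (fun z => w z * D z) (γ.prod π) :=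
    hDi.bdd_mul (c := 1) hw.aestronglyMeasurable <| .of_forall fun z => by
      simpa [abs_of_nonneg (hw01 z).1] using (hw01 z).2
  obtain ⟨B, hB, hfB⟩ := exists_integral_fst_mul_le ((hg.comp measurable_snd).mul hD)
    (integrable_mul (hg.comp measurable_snd) fun z => hg01 z.2) hf hf01
  have hBm : Measurable (B.indicator (1 : P → ℝ)) := measurable_one.indicator hB
  have hBD := integrable_mul (hBm.comp measurable_fst) fun z => indicator_one_mem_Icc B z.1
  obtain ⟨V, hV, hgV⟩ := exists_integral_fst_mul_le (γ := π) (π := γ)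
    (((hBm.comp measurable_fst).mul hD).comp measurable_swap) hBD.swap hg hg01
  refine ⟨B, V, hB, hV, ?_⟩
  calc ∫ z, f z.1 * (g z.2 * D z) ∂γ.prod π
      ≤ ∫ z, B.indicator 1 z.1 * (g z.2 * D z) ∂γ.prod π := hfB
    _ = ∫ z, g z.1 * (B.indicator 1 z.2 * D z.swap) ∂π.prod γ := by
        rw [← integral_prod_swap]
        simp only [Prod.fst_swap, Prod.snd_swap, mul_left_comm]
    _ ≤ ∫ z, V.indicator 1 z.1 * (B.indicator 1 z.2 * D z.swap) ∂π.prod γ := hgV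
    _ = ∫ z in B ×ˢ V, D z ∂γ.prod π := by
        rw [setIntegral_eq_integral_indicator_mul (hB.prod hV), ← integral_prod_swap]
        congr with z
        by_cases hB : z.1 ∈ B <;> by_cases hV : z.2 ∈ V <;> simp [hB, hV]

lemma CutBound.abs_integral_weighted_le (h : CutBound γ π D c) (hD : Measurable D)
    (hDi : Integrable D (γ.prod π)) {f : P → ℝ} {g : Q → ℝ} (hf : Measurable f)
    (hf01 : ∀ p, f p ∈ Icc 0 1) (hg : Measurable g) (hg01 : ∀ q, g q ∈ Icc 0 1) :
    |∫ z, f z.1 * (g z.2 * D z) ∂γ.prod π| ≤ c := by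
  refine abs_le'.mpr ⟨?_, ?_⟩
  · obtain ⟨B, V, hB, hV, hle⟩ := exists_integral_weighted_le hD hDi hf hf01 hg hg01
    exact hle.trans ((le_abs_self _).trans (h hB hV))
  · obtain ⟨B, V, hB, hV, hle⟩ := exists_integral_weighted_le hD.neg hDi.neg hf hf01 hg hg01
    simp only [Pi.neg_apply, mul_neg, integral_neg] at hle
    exact hle.trans ((neg_le_abs _).trans (h hB hV))

lemma setIntegral_prod_map {φ : Q → Q'} (hφ : Measurable φ) {D : P × Q' → ℝ} (hD : Measurable D)
    {B : Set P} {V : Set Q'} (hB : MeasurableSet B) (hV : MeasurableSet V) :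
    ∫ z in B ×ˢ V, D z ∂γ.prod (π.map φ) =
      ∫ z in B ×ˢ (φ ⁻¹' V), D (z.1, φ z.2) ∂γ.prod π := by
  have hid : γ.prod (π.map φ) = (γ.prod π).map (Prod.map id φ) := by
    rw [← Measure.map_prod_map _ _ measurable_id hφ, Measure.map_id]
  rw [hid, setIntegral_map (hB.prod hV) hD.aestronglyMeasurable (by fun_prop)]
  rfl

lemma CutBound.comp_snd {φ : Q → Q'} (hφ : Measurable φ) {D : P × Q' → ℝ} (hD : Measurable D)
    (hDi : Integrable D (γ.prod (π.map φ))) (h : CutBound γ (π.map φ) D c) :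
    CutBound γ π (fun z => D (z.1, φ z.2)) c := by
  have upper {D : P × Q' → ℝ} (hD : Measurable D) (hDi : Integrable D (γ.prod (π.map φ)))
      (h : CutBound γ (π.map φ) D c) {B : Set P} {V : Set Q} (hB : MeasurableSet B)
      (hV : MeasurableSet V) : ∫ z in B ×ˢ V, D (z.1, φ z.2) ∂γ.prod π ≤ c := by
    set colInt : Q' → ℝ := fun q => ∫ p in B, D (p, q) ∂γ
    have hcol_meas : Measurable colInt := hD.stronglyMeasurable.integral_prod_left'.measurable
    have hDφ : Integrable (fun z : P × Q => D (z.1, φ z.2)) (γ.prod π) := by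
      refine Integrable.comp_measurable (f := Prod.map id φ) ?_ (by fun_prop)
      rwa [← Measure.map_prod_map _ _ measurable_id hφ, Measure.map_id]
    have integral_eq (V : Set Q) : ∫ z in B ×ˢ V, D (z.1, φ z.2) ∂γ.prod π =
        ∫ q in V, colInt (φ q) ∂π := by
      rw [← Measure.prod_restrict, integral_prod_symm _
        (by rw [Measure.prod_restrict]; exact hDφ.integrableOn)]
    have hcolφ : Integrable (fun q => colInt (φ q)) π := by
      have := hDφ.integrableOn (s := B ×ˢ univ)
      rw [IntegrableOn, ← Measure.prod_restrict, Measure.restrict_univ] at this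
      exact this.integral_prod_right
    calc ∫ z in B ×ˢ V, D (z.1, φ z.2) ∂γ.prod π
        = ∫ q, V.indicator 1 q * colInt (φ q) ∂π := by
          rw [integral_eq, setIntegral_eq_integral_indicator_mul hV]
      _ ≤ ∫ q in {q | 0 ≤ colInt (φ q)}, colInt (φ q) ∂π :=
          integral_mul_le_setIntegral (measurable_one.indicator hV)
            (indicator_one_mem_Icc V) (hcol_meas.comp hφ) hcolφ
      _ = ∫ z in B ×ˢ {q | 0 ≤ colInt q}, D z ∂γ.prod (π.map φ) := by
          rw [setIntegral_prod_map hφ hD hB (measurableSet_le measurable_const hcol_meas),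
            integral_eq]
          rfl
      _ ≤ c := (le_abs_self _).trans (h hB (measurableSet_le measurable_const hcol_meas))
  intro B V hB hV
  refine abs_le'.mpr ⟨upper hD hDi h hB hV, ?_⟩
  simpa only [Pi.neg_apply, integral_neg] using upper hD.neg hDi.neg h.neg hB hV

lemma CutBound.of_comp_snd {φ : Q → Q'} (hφ : Measurable φ) {D : P × Q' → ℝ} (hD : Measurable D)
    (h : CutBound γ π (fun z => D (z.1, φ z.2)) c) : CutBound γ (π.map φ) D c := by
  intro B V hB hV
  rw [setIntegral_prod_map hφ hD hB hV]
  exact h hB (hφ hV)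

end CutBound

section HomDensity

variable {R C I J : Type*} [MeasurableSpace R] [MeasurableSpace C] [Fintype I] [Fintype J]
  {ρ : Measure R} {κ : Measure C} {F G : I → J → R × C → ℝ} {c : ℝ}

/-- The density of the complete bipartite graph on `I ⊔ J`, with the edge `(i, j)` decorated by
the kernel `F i j`: rows are sampled from `ρ` and columns from `κ`. -/
def homDensity (ρ : Measure R) (κ : Measure C) (F : I → J → R × C → ℝ) : ℝ :=
  ∫ z : (I → R) × (J → C), ∏ i, ∏ j, F i j (z.1 i, z.2 j)
    ∂(Measure.pi fun _ => ρ).prod (Measure.pi fun _ => κ)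

lemma integrable_of_mem_Icc {X : Type*} [MeasurableSpace X] {μ : Measure X} [IsFiniteMeasure μ]
    {f : X → ℝ} (hf : Measurable f) (hf01 : ∀ x, f x ∈ Icc 0 1) : Integrable f μ :=
  .of_bound hf.aestronglyMeasurable 1 <| .of_forall fun x => by
    rw [Real.norm_of_nonneg (hf01 x).1]
    exact (hf01 x).2

lemma measurable_prod_prod (hF : ∀ i j, Measurable (F i j)) :
    Measurable fun z : (I → R) × (J → C) => ∏ i, ∏ j, F i j (z.1 i, z.2 j) :=
  Finset.measurable_fun_prod _ fun i _ => Finset.measurable_fun_prod _ fun j _ =>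
    (hF i j).comp (by fun_prop)

lemma integrable_prod_prod [IsFiniteMeasure ρ] [IsFiniteMeasure κ]
    (hF : ∀ i j, Measurable (F i j)) (hF01 : ∀ i j z, F i j z ∈ Icc 0 1) :
    Integrable (fun z : (I → R) × (J → C) => ∏ i, ∏ j, F i j (z.1 i, z.2 j))
      ((Measure.pi fun _ => ρ).prod (Measure.pi fun _ => κ)) :=
  integrable_of_mem_Icc (measurable_prod_prod hF) fun _ =>
    unitInterval.submonoid.prod_mem fun i _ => unitInterval.submonoid.prod_mem fun j _ => hF01 i j _

lemma measurePreserving_prodProdProdComm {X Y Z T : Type*} [MeasurableSpace X] [MeasurableSpace Y]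
    [MeasurableSpace Z] [MeasurableSpace T] (μ : Measure X) (ν : Measure Y) (τ : Measure Z)
    (θ : Measure T) [SFinite μ] [SFinite ν] [SFinite τ] [SFinite θ] :
    MeasurePreserving (fun z : (X × Y) × Z × T => ((z.1.1, z.2.1), (z.1.2, z.2.2)))
      ((μ.prod ν).prod (τ.prod θ)) ((μ.prod τ).prod (ν.prod θ)) := by
  refine ⟨by fun_prop, Measure.ext_of_lintegral _ fun f hf => ?_⟩
  rw [lintegral_map hf (by fun_prop), lintegral_prod _ (by fun_prop),
    lintegral_prod _ (by fun_prop), lintegral_prod _ (by fun_prop), lintegral_prod _ (by fun_prop)]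
  refine lintegral_congr fun x => ?_
  have hleft (y : Y) : ∫⁻ w, f ((x, w.1), (y, w.2)) ∂τ.prod θ =
      ∫⁻ z, ∫⁻ t, f ((x, z), (y, t)) ∂θ ∂τ := lintegral_prod _ (by fun_prop)
  have hright (z : Z) : ∫⁻ w, f ((x, z), w) ∂ν.prod θ = ∫⁻ y, ∫⁻ t, f ((x, z), (y, t)) ∂θ ∂ν :=
    lintegral_prod _ (by fun_prop)
  simp only [hleft, hright]
  exact lintegral_lintegral_swap (by fun_prop)

lemma measurePreserving_update [DecidableEq I] {X : I → Type*} [∀ i, MeasurableSpace (X i)]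
    (μ : ∀ i, Measure (X i)) [∀ i, IsProbabilityMeasure (μ i)] (i : I) :
    MeasurePreserving (fun z : (∀ i, X i) × X i => Function.update z.1 i z.2)
      ((Measure.pi μ).prod (μ i)) (Measure.pi μ) := by
  have hm : Measurable fun z : (∀ i, X i) × X i => Function.update z.1 i z.2 :=
    measurable_update'
  refine ⟨hm, (Measure.pi_eq fun s hs => ?_).symm⟩
  have hpre : (fun z : (∀ i, X i) × X i => Function.update z.1 i z.2) ⁻¹' univ.pi s =
      univ.pi (Function.update s i univ) ×ˢ s i := by
    ext z
    simp only [mem_preimage, mem_univ_pi, mem_prod]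
    refine ⟨fun h => ⟨fun j => ?_, by simpa using h i⟩, fun h j => ?_⟩
    · rcases eq_or_ne j i with rfl | hj
      · simp
      · simpa [hj] using h j
    · rcases eq_or_ne j i with rfl | hj
      · simpa using h.2
      · simpa [hj] using h.1 j
  rw [Measure.map_apply hm (.univ_pi hs), hpre, Measure.prod_prod, Measure.pi_pi,
    ← Finset.mul_prod_erase _ _ (Finset.mem_univ i), ← Finset.mul_prod_erase (a := i) _ _
      (Finset.mem_univ i), Function.update_self, measure_univ, one_mul, mul_comm]
  refine congrArg _ (Finset.prod_congr rfl fun j hj => ?_)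
  rw [Function.update_of_ne (Finset.ne_of_mem_erase hj)]

omit [MeasurableSpace R] [MeasurableSpace C] in
lemma prod_prod_update [DecidableEq I] [DecidableEq J] (F : I → J → R × C → ℝ) (i₀ : I) (j₀ : J)
    (r : I → R) (s : J → C) (x : R) (y : C) :
    ∏ i, ∏ j, F i j (Function.update r i₀ x i, Function.update s j₀ y j) =
      (∏ j ∈ Finset.univ.erase j₀, F i₀ j (x, s j)) *
        ((∏ i ∈ Finset.univ.erase i₀, F i j₀ (r i, y) *
          ∏ j ∈ Finset.univ.erase j₀, F i j (r i, s j)) * F i₀ j₀ (x, y)) := by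
  have split_row (i : I) (v : R) : ∏ j, F i j (v, Function.update s j₀ y j) =
      F i j₀ (v, y) * ∏ j ∈ Finset.univ.erase j₀, F i j (v, s j) := by
    rw [← Finset.mul_prod_erase _ _ (Finset.mem_univ j₀), Function.update_self]
    refine congrArg _ (Finset.prod_congr rfl fun j hj => ?_)
    rw [Function.update_of_ne (Finset.ne_of_mem_erase hj)]
  simp only [split_row]
  rw [← Finset.mul_prod_erase _ _ (Finset.mem_univ i₀), Function.update_self]
  have split_col : ∏ i ∈ Finset.univ.erase i₀, (F i j₀ (Function.update r i₀ x i, y) *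
        ∏ j ∈ Finset.univ.erase j₀, F i j (Function.update r i₀ x i, s j)) =
      ∏ i ∈ Finset.univ.erase i₀, F i j₀ (r i, y) * ∏ j ∈ Finset.univ.erase j₀, F i j (r i, s j) :=
    Finset.prod_congr rfl fun i hi => by rw [Function.update_of_ne (Finset.ne_of_mem_erase hi)]
  rw [split_col]
  ring

omit [MeasurableSpace R] [MeasurableSpace C] in
lemma prod_prod_update_sub_of_eq_off [DecidableEq I] [DecidableEq J] {i₀ : I} {j₀ : J}
    (heq : ∀ i j, i ≠ i₀ ∨ j ≠ j₀ → F i j = G i j) (r : I → R) (s : J → C) (x : R) (y : C) :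
    ∏ i, ∏ j, F i j (Function.update r i₀ x i, Function.update s j₀ y j) -
        ∏ i, ∏ j, G i j (Function.update r i₀ x i, Function.update s j₀ y j) =
      (∏ j ∈ Finset.univ.erase j₀, F i₀ j (x, s j)) *
        ((∏ i ∈ Finset.univ.erase i₀, F i j₀ (r i, y) *
          ∏ j ∈ Finset.univ.erase j₀, F i j (r i, s j)) * (F i₀ j₀ - G i₀ j₀) (x, y)) := by
  have hrow : ∏ j ∈ Finset.univ.erase j₀, G i₀ j (x, s j) =
      ∏ j ∈ Finset.univ.erase j₀, F i₀ j (x, s j) :=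
    Finset.prod_congr rfl fun j hj => by rw [heq i₀ j (.inr (Finset.ne_of_mem_erase hj))]
  have hcol : ∏ i ∈ Finset.univ.erase i₀, G i j₀ (r i, y) *
        ∏ j ∈ Finset.univ.erase j₀, G i j (r i, s j) =
      ∏ i ∈ Finset.univ.erase i₀, F i j₀ (r i, y) *
        ∏ j ∈ Finset.univ.erase j₀, F i j (r i, s j) :=
    Finset.prod_congr rfl fun i hi => by
      simp only [fun j => heq i j (.inl (Finset.ne_of_mem_erase hi))]
  rw [prod_prod_update, prod_prod_update, hrow, hcol, Pi.sub_apply, mul_sub, mul_sub]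

variable [IsProbabilityMeasure ρ] [IsProbabilityMeasure κ]

lemma integral_update_update {f : (I → R) × (J → C) → ℝ} [DecidableEq I] [DecidableEq J]
    (hf : Integrable f ((Measure.pi fun _ => ρ).prod (Measure.pi fun _ => κ))) (i₀ : I) (j₀ : J) :
    ∫ z, ∫ e : R × C, f (Function.update z.1 i₀ e.1, Function.update z.2 j₀ e.2) ∂ρ.prod κ
        ∂(Measure.pi fun _ => ρ).prod (Measure.pi fun _ => κ) =
      ∫ z, f z ∂(Measure.pi fun _ => ρ).prod (Measure.pi fun _ => κ) := by
  have hresample := ((measurePreserving_update (fun _ : I => ρ) i₀).prod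
    (measurePreserving_update (fun _ : J => κ) j₀)).comp
      (measurePreserving_prodProdProdComm (Measure.pi fun _ => ρ) (Measure.pi fun _ => κ) ρ κ)
  rw [← hresample.map_eq] at hf
  conv_rhs => rw [← hresample.map_eq, integral_map hresample.aemeasurable hf.aestronglyMeasurable]
  exact (integral_prod _ (hf.comp_measurable hresample.measurable)).symm

/-- Resampling row `i₀` and column `j₀` exhibits the change of the density as an average of
weighted cut integrals of `F i₀ j₀ - G i₀ j₀`. -/
lemma abs_homDensity_sub_le_of_eq_off (hF : ∀ i j, Measurable (F i j))
    (hF01 : ∀ i j z, F i j z ∈ Icc 0 1) (hG : ∀ i j, Measurable (G i j))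
    (hG01 : ∀ i j z, G i j z ∈ Icc 0 1) {i₀ : I} {j₀ : J}
    (heq : ∀ i j, i ≠ i₀ ∨ j ≠ j₀ → F i j = G i j)
    (hcut : CutBound ρ κ (F i₀ j₀ - G i₀ j₀) c) :
    |homDensity ρ κ F - homDensity ρ κ G| ≤ c := by
  classical
  have hint : Integrable (fun z : (I → R) × (J → C) => ∏ i, ∏ j, F i j (z.1 i, z.2 j) -
      ∏ i, ∏ j, G i j (z.1 i, z.2 j)) ((Measure.pi fun _ => ρ).prod (Measure.pi fun _ => κ)) :=
    (integrable_prod_prod hF hF01).sub (integrable_prod_prod hG hG01)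
  rw [homDensity, homDensity, ← integral_sub (integrable_prod_prod hF hF01)
    (integrable_prod_prod hG hG01), ← integral_update_update hint i₀ j₀]
  simp only [prod_prod_update_sub_of_eq_off heq, ← Real.norm_eq_abs]
  refine (norm_integral_le_of_norm_le_const (C := c) (.of_forall fun z => ?_)).trans_eq
    (by rw [probReal_univ, mul_one])
  refine hcut.abs_integral_weighted_le (f := fun x => ∏ j ∈ Finset.univ.erase j₀, F i₀ j (x, z.2 j))
    (g := fun y => ∏ i ∈ Finset.univ.erase i₀, F i j₀ (z.1 i, y) *
      ∏ j ∈ Finset.univ.erase j₀, F i j (z.1 i, z.2 j)) ((hF _ _).sub (hG _ _))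
    ((integrable_of_mem_Icc (hF _ _) (hF01 _ _)).sub (integrable_of_mem_Icc (hG _ _) (hG01 _ _)))
    ?_ (fun x => ?_) ?_ fun y => ?_
  · exact Finset.measurable_fun_prod _ fun j _ => (hF _ _).comp (by fun_prop)
  · exact unitInterval.submonoid.prod_mem fun j _ => hF01 _ _ _
  · exact Finset.measurable_fun_prod _ fun i _ => ((hF _ _).comp (by fun_prop)).mul_const _
  · exact unitInterval.submonoid.prod_mem fun i _ => unitInterval.mul_mem (hF01 _ _ _)
      (unitInterval.submonoid.prod_mem fun j _ => hF01 _ _ _)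

/-- The counting lemma: decorated densities are Lipschitz for the cut norm, replacing the kernels
one edge at a time. -/
theorem abs_homDensity_sub_le (hF : ∀ i j, Measurable (F i j))
    (hF01 : ∀ i j z, F i j z ∈ Icc 0 1) (hG : ∀ i j, Measurable (G i j))
    (hG01 : ∀ i j z, G i j z ∈ Icc 0 1) (hcut : ∀ i j, CutBound ρ κ (F i j - G i j) c) :
    |homDensity ρ κ F - homDensity ρ κ G| ≤ Fintype.card (I × J) * c := by
  classical
  set hybrid : Finset (I × J) → I → J → R × C → ℝ :=
    fun S i j => if (i, j) ∈ S then F i j else G i j with hhybrid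
  have hmeas (S : Finset (I × J)) (i : I) (j : J) : Measurable (hybrid S i j) := by
    by_cases h : (i, j) ∈ S <;> simp only [hhybrid, h, if_true, if_false, hF, hG]
  have h01 (S : Finset (I × J)) (i : I) (j : J) (z : R × C) : hybrid S i j z ∈ Icc 0 1 := by
    by_cases h : (i, j) ∈ S <;> simp only [hhybrid, h, if_true, if_false, hF01, hG01]
  have hS (S : Finset (I × J)) :
      |homDensity ρ κ (hybrid S) - homDensity ρ κ G| ≤ S.card * c := by
    induction S using Finset.induction_on with
    | empty => simp [hhybrid]
    | insert e S he ih =>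
      have hedge : |homDensity ρ κ (hybrid (insert e S)) - homDensity ρ κ (hybrid S)| ≤ c := by
        refine abs_homDensity_sub_le_of_eq_off (hmeas _) (h01 _) (hmeas _) (h01 _) (i₀ := e.1)
          (j₀ := e.2) (fun i j hij => ?_) ?_
        · have hne : (i, j) ≠ e := by
            rintro rfl
            simp at hij
          simp only [hhybrid, Finset.mem_insert, hne, false_or]
        · simpa only [hhybrid, Prod.mk.eta, Finset.mem_insert_self, he, if_true, if_false]
            using hcut e.1 e.2
      rw [Finset.card_insert_of_notMem he]
      push_cast
      linarith [abs_sub_le (homDensity ρ κ (hybrid (insert e S))) (homDensity ρ κ (hybrid S))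
        (homDensity ρ κ G)]
  simpa only [hhybrid, Finset.mem_univ, if_true, Finset.card_univ] using hS Finset.univ

end HomDensity

section IsStochastic

variable {X U : Type*} [MeasurableSpace X] [Fintype U] {a : X → U → ℝ}

/-- A measurable map from `X` to the probability vectors indexed by the finite set `U`: a Markov
kernel from `X` to `U`, or equivalently a fractional partition of `X` into the parts `a · u`. -/
structure IsStochastic (a : X → U → ℝ) : Prop where
  measurable (u : U) : Measurable fun x => a x u
  nonneg (x : X) (u : U) : 0 ≤ a x u
  sum_eq_one (x : X) : ∑ u, a x u = 1

namespace IsStochastic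

lemma sum_mem_Icc (ha : IsStochastic a) (S : Finset U) (x : X) : ∑ u ∈ S, a x u ∈ Icc 0 1 :=
  ⟨Finset.sum_nonneg fun u _ => ha.nonneg x u, (ha.sum_eq_one x).le.trans' <|
    Finset.sum_le_univ_sum_of_nonneg (ha.nonneg x)⟩

lemma mem_Icc (ha : IsStochastic a) (x : X) (u : U) : a x u ∈ Icc 0 1 := by
  simpa only [Finset.sum_singleton] using ha.sum_mem_Icc {u} x

lemma abs_le_one (ha : IsStochastic a) (x : X) (u : U) : |a x u| ≤ 1 :=
  (abs_of_nonneg (ha.nonneg x u)).trans_le (ha.mem_Icc x u).2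

lemma abs_sub_le_one (ha : IsStochastic a) {X' : Type*} [MeasurableSpace X'] {a' : X' → U → ℝ}
    (ha' : IsStochastic a') (x : X) (x' : X') (u : U) : |a x u - a' x' u| ≤ 1 :=
  abs_sub_le_of_nonneg_of_le (ha.nonneg x u) (ha.mem_Icc x u).2 (ha'.nonneg x' u)
    (ha'.mem_Icc x' u).2

lemma comp (ha : IsStochastic a) {Y : Type*} [MeasurableSpace Y] {f : Y → X}
    (hf : Measurable f) : IsStochastic fun y => a (f y) :=
  ⟨fun u => (ha.measurable u).comp hf, fun y => ha.nonneg (f y), fun y => ha.sum_eq_one (f y)⟩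

protected lemma pi {I : Type*} [Fintype I] [DecidableEq I] {a : I → X → U → ℝ}
    (ha : ∀ i, IsStochastic (a i)) : IsStochastic fun x (t : I → U) => ∏ i, a i x (t i) where
  measurable t := Finset.measurable_fun_prod _ fun i _ => (ha i).measurable (t i)
  nonneg x t := Finset.prod_nonneg fun i _ => (ha i).nonneg x (t i)
  sum_eq_one x := by
    rw [← Fintype.piFinset_univ, ← Finset.prod_univ_sum]
    exact Finset.prod_eq_one fun i _ => (ha i).sum_eq_one x

end IsStochastic

end IsStochastic

section PatternProb

variable {R C A I J : Type*} [MeasurableSpace R] [MeasurableSpace C] [Fintype I] [Fintype J]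
  {ρ : Measure R} {κ : Measure C} {W : R × C → A → ℝ}

lemma homDensity_comp_equiv [SigmaFinite ρ] [SigmaFinite κ] {I' J' : Type*} [Fintype I']
    [Fintype J'] (e : I ≃ I') (f : J ≃ J') (F : I' → J' → R × C → ℝ) :
    homDensity ρ κ (fun i j => F (e i) (f j)) = homDensity ρ κ F := by
  have hmp := (measurePreserving_arrowCongr' (fun _ : I' => ρ) (fun _ : I => ρ) e.symm
    (.refl R) fun _ => .id ρ).prod (measurePreserving_arrowCongr' (fun _ : J' => κ)
    (fun _ : J => κ) f.symm (.refl C) fun _ => .id κ)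
  have hcomp := hmp.integral_comp
    ((MeasurableEquiv.arrowCongr' e.symm (.refl R)).prodCongr
      (MeasurableEquiv.arrowCongr' f.symm (.refl C))).measurableEmbedding
    fun z : (I → R) × (J → C) => ∏ i, ∏ j, F (e i) (f j) (z.1 i, z.2 j)
  rw [homDensity, ← hcomp, homDensity]
  refine integral_congr_ae (.of_forall fun z => ?_)
  refine (Fintype.prod_equiv e _ _ fun i => Fintype.prod_equiv f _ _ fun j => ?_)
  rfl

/-- The probability that the random array sampled from the kernel `W` has its `(i, j)` entry in
`S i j` for all `i` and `j`. -/
def patternProb (ρ : Measure R) (κ : Measure C) (W : R × C → A → ℝ) (S : I → J → Finset A) : ℝ :=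
  homDensity ρ κ fun i j z => ∑ ω ∈ S i j, W z ω

lemma patternProb_eq_sum [DecidableEq I] [DecidableEq J] [Fintype A] [IsFiniteMeasure ρ]
    [IsFiniteMeasure κ] (hW : IsStochastic W) (S : I → J → Finset A) :
    patternProb ρ κ W S = ∑ a ∈ Fintype.piFinset fun i => Fintype.piFinset (S i),
      homDensity ρ κ fun i j z => W z (a i j) := by
  simp only [patternProb, homDensity, Finset.prod_univ_sum]
  exact integral_finsetSum _ fun a _ =>
    integrable_prod_prod (fun i j => hW.measurable _) fun i j z => hW.mem_Icc z _

end PatternProb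

section ArraysConverge

variable {ι A : Type*} {R C : ι → Type*} {R' C' : Type*} [∀ n, MeasurableSpace (R n)]
  [∀ n, MeasurableSpace (C n)] [MeasurableSpace R'] [MeasurableSpace C']
  {ρ : ∀ n, Measure (R n)} {κ : ∀ n, Measure (C n)} {W : ∀ n, R n × C n → A → ℝ} {ρ' : Measure R'}
  {κ' : Measure C'} {W' : R' × C' → A → ℝ} {l : Filter ι}

/-- The random arrays sampled from the kernels `W n` converge in distribution, along the filter
`l`, to the random array sampled from `W'`. -/
def ArraysConverge (ρ : ∀ n, Measure (R n)) (κ : ∀ n, Measure (C n))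
    (W : ∀ n, R n × C n → A → ℝ) (ρ' : Measure R') (κ' : Measure C') (W' : R' × C' → A → ℝ)
    (l : Filter ι) : Prop :=
  ∀ (k : ℕ) (a : Fin k → Fin k → A),
    Tendsto (fun n => homDensity (ρ n) (κ n) fun i j z => W n z (a i j)) l
      (𝓝 (homDensity ρ' κ' fun i j z => W' z (a i j)))

lemma ArraysConverge.tendsto_patternProb [Fintype A] [∀ n, IsFiniteMeasure (ρ n)]
    [∀ n, IsFiniteMeasure (κ n)] [IsFiniteMeasure ρ'] [IsFiniteMeasure κ']
    (h : ArraysConverge ρ κ W ρ' κ' W' l) (hW : ∀ n, IsStochastic (W n)) (hW' : IsStochastic W')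
    {I : Type*} [Fintype I] (S : I → I → Finset A) :
    Tendsto (fun n => patternProb (ρ n) (κ n) (W n) S) l (𝓝 (patternProb ρ' κ' W' S)) := by
  classical
  simp only [fun n => patternProb_eq_sum (ρ := ρ n) (κ := κ n) (hW n) S, patternProb_eq_sum hW']
  refine tendsto_finsetSum _ fun a _ => ?_
  have e := Fintype.equivFin I
  have hfin := h (Fintype.card I) fun i j => a (e.symm i) (e.symm j)
  simp only [fun n => homDensity_comp_equiv (ρ := ρ n) (κ := κ n) e.symm e.symm
      fun i j z => W n z (a i j),
    homDensity_comp_equiv e.symm e.symm fun i j z => W' z (a i j)] at hfin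
  exact hfin

end ArraysConverge

section FourCycle

variable {P Q : Type*} [MeasurableSpace P] [MeasurableSpace Q] {γ : Measure P} {π : Measure Q}
  {D : P × Q → ℝ} {c : ℝ}

/-- The homomorphism density of the four-cycle in the signed kernel `D`. -/
def fourCycle (γ : Measure P) (π : Measure Q) (D : P × Q → ℝ) : ℝ :=
  homDensity γ π fun _ _ : Fin 2 => D

lemma abs_prod_le_one {I : Type*} {s : Finset I} {f : I → ℝ} (hf : ∀ i ∈ s, |f i| ≤ 1) :
    |∏ i ∈ s, f i| ≤ 1 := by
  rw [Finset.abs_prod]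
  exact Finset.prod_le_one (fun _ _ => abs_nonneg _) hf

lemma integrable_of_abs_le [IsFiniteMeasure γ] {f : P → ℝ} (hf : Measurable f)
    (hc : ∀ p, |f p| ≤ c) : Integrable f γ :=
  .of_bound hf.aestronglyMeasurable c (.of_forall hc)

variable [IsProbabilityMeasure γ] [IsProbabilityMeasure π]

lemma sq_integral_le {f : P → ℝ} (hf : Integrable f γ) (hf2 : Integrable (fun p => f p ^ 2) γ) :
    (∫ p, f p ∂γ) ^ 2 ≤ ∫ p, f p ^ 2 ∂γ :=
  even_two.convexOn_pow.map_integral_le (continuous_pow 2).continuousOn isClosed_univ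
    (.of_forall fun _ => mem_univ _) hf hf2

/-- Cauchy-Schwarz in the variable `p`, which doubles the variable `q`. -/
lemma sq_setIntegral_prod_le (hD : Measurable D) (hD1 : ∀ z, |D z| ≤ 1) {B : Set P}
    (hB : MeasurableSet B) (V : Set Q) :
    (∫ z in B ×ˢ V, D z ∂γ.prod π) ^ 2 ≤ ∫ z in (univ.pi fun _ : Fin 2 => V) ×ˢ univ,
      ∏ j, D (z.2, z.1 j) ∂(Measure.pi fun _ : Fin 2 => π).prod γ := by
  set rowInt : P → ℝ := fun p => ∫ q in V, D (p, q) ∂π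
  have hrow : Measurable rowInt := hD.stronglyMeasurable.integral_prod_right'.measurable
  have hrow1 (p : P) : |rowInt p| ≤ 1 := by
    refine (norm_setIntegral_le_of_norm_le_const (C := 1) (f := fun q => D (p, q))
      (measure_lt_top π V) fun q _ => hD1 (p, q)).trans ?_
    rw [one_mul]
    exact measureReal_le_one
  have hind (p : P) : |B.indicator rowInt p| ≤ |rowInt p| := by
    by_cases hp : p ∈ B <;> simp [hp]
  have hprod : Measurable fun z : (Fin 2 → Q) × P => ∏ j, D (z.2, z.1 j) :=
    Finset.measurable_fun_prod _ fun j _ => hD.comp (by fun_prop)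
  have hsq : Integrable (fun p => rowInt p ^ 2) γ :=
    integrable_of_abs_le (hrow.pow_const 2) (c := 1) fun p => by
      rw [abs_pow]
      exact pow_le_one₀ (abs_nonneg _) (hrow1 p)
  have hindsq (p : P) : B.indicator rowInt p ^ 2 ≤ rowInt p ^ 2 := sq_le_sq.mpr (hind p)
  calc (∫ z in B ×ˢ V, D z ∂γ.prod π) ^ 2 = (∫ p, B.indicator rowInt p ∂γ) ^ 2 := by
        rw [integral_indicator hB, setIntegral_prod _ (integrable_of_abs_le hD hD1).integrableOn]
    _ ≤ ∫ p, B.indicator rowInt p ^ 2 ∂γ :=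
        sq_integral_le ((integrable_of_abs_le hrow hrow1).indicator hB)
          (hsq.mono' ((hrow.indicator hB).pow_const 2).aestronglyMeasurable <| .of_forall
            fun p => by simpa only [Real.norm_eq_abs, abs_sq] using hindsq p)
    _ ≤ ∫ p, rowInt p ^ 2 ∂γ :=
        integral_mono_of_nonneg (.of_forall fun p => sq_nonneg _) hsq (.of_forall hindsq)
    _ = _ := by
        rw [← Measure.prod_restrict, Measure.restrict_univ, Measure.restrict_pi_pi,
          integral_prod_symm _ (integrable_of_abs_le hprod fun z =>
            abs_prod_le_one fun j _ => hD1 _)]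
        exact integral_congr_ae (.of_forall fun p =>
          (integral_fintype_prod_eq_pow (ι := Fin 2) fun q => D (p, q)).symm)

/-- Gowers-Cauchy-Schwarz for the four-cycle. -/
lemma CutBound.of_fourCycle_le (hD : Measurable D) (hD1 : ∀ z, |D z| ≤ 1) (hc : 0 ≤ c)
    (h : fourCycle γ π D ≤ c ^ 4) : CutBound γ π D c := by
  intro B V hB hV
  have hprod : Measurable fun z : (Fin 2 → Q) × P => ∏ j, D (z.2, z.1 j) :=
    Finset.measurable_fun_prod _ fun j _ => hD.comp (by fun_prop)
  refine le_of_pow_le_pow_left₀ four_ne_zero hc ?_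
  calc |∫ z in B ×ˢ V, D z ∂γ.prod π| ^ 4 = ((∫ z in B ×ˢ V, D z ∂γ.prod π) ^ 2) ^ 2 := by
        rw [← pow_mul, Even.pow_abs (by decide)]
    _ ≤ (∫ z in (univ.pi fun _ : Fin 2 => V) ×ˢ univ,
          ∏ j, D (z.2, z.1 j) ∂(Measure.pi fun _ : Fin 2 => π).prod γ) ^ 2 :=
        pow_le_pow_left₀ (sq_nonneg _) (sq_setIntegral_prod_le hD hD1 hB V) 2
    _ ≤ fourCycle γ π D := by
        refine (sq_setIntegral_prod_le hprod (fun z => abs_prod_le_one fun j _ => hD1 _)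
          (.univ_pi fun _ => hV) univ).trans_eq ?_
        rw [pi_univ, univ_prod_univ, setIntegral_univ]
        rfl
    _ ≤ c ^ 4 := h

lemma fourCycle_le_integral_abs (hD : Measurable D) (hD1 : ∀ z, |D z| ≤ 1) :
    fourCycle γ π D ≤ ∫ z, |D z| ∂γ.prod π := by
  have heval := (measurePreserving_eval (fun _ : Fin 2 => γ) 0).prod
    (measurePreserving_eval (fun _ : Fin 2 => π) 0)
  have habs : Integrable (fun z => |D z|) (γ.prod π) := (integrable_of_abs_le hD hD1).abs
  rw [← heval.map_eq, integral_map heval.aemeasurable hD.abs.aestronglyMeasurable]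
  refine integral_mono (integrable_of_abs_le (measurable_prod_prod fun _ _ => hD) fun z =>
      abs_prod_le_one fun i _ => abs_prod_le_one fun j _ => hD1 _)
    (heval.integrable_comp_of_integrable habs) fun z => (le_abs_self _).trans ?_
  rw [Fin.prod_univ_two, abs_mul, Fin.prod_univ_two, abs_mul, mul_assoc]
  exact mul_le_of_le_one_right (abs_nonneg _)
    (mul_le_one₀ (hD1 _) (abs_nonneg _) (abs_prod_le_one fun j _ => hD1 _))

end FourCycle

section MatchedCoupling

variable {X X' T : Type*} [MeasurableSpace X] [MeasurableSpace X'] [Fintype T]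
  {α : Measure X} {α' : Measure X'} {a : X → T → ℝ} {a' : X' → T → ℝ} {p p' : T → ℝ}

/-- The masses of the parts of a fractional partition. -/
def partMass (α : Measure X) (a : X → T → ℝ) (t : T) : ℝ := ∫ x, a x t ∂α

/-- A lower bound for `p t / p' t` over all parts, truncated at `0`. Here `p' t = 0` gives the
summand `0`. -/
def massRatio (p p' : T → ℝ) : ℝ := max 0 (1 - ∑ t, |p t - p' t| / p' t)

/-- The bias of the matched coupling towards pairs of points lying in the common part `t`. -/
def matchRate (p p' : T → ℝ) (t : T) : ℝ := if p' t = 0 then 0 else massRatio p p' / p t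

/-- The density of the matched coupling on the product of the part `t.1` on the left and the part
`t.2` on the right. -/
def matchWeight (p p' : T → ℝ) (t : T × T) : ℝ :=
  1 + matchRate p p' t.1 * (Set.indicator {t.1} 1 t.2 - p' t.1)

/-- The density, with respect to the product measure, of the matched coupling. -/
def matchDensity (α : Measure X) (a : X → T → ℝ) (α' : Measure X') (a' : X' → T → ℝ)
    (z : X × X') : ℝ :=
  ∑ t : T × T, matchWeight (partMass α a) (partMass α' a') t * (a z.1 t.1 * a' z.2 t.2)

/-- A coupling of two spaces with fractional partitions indexed by the same set that matches parts
with equal index as far as their masses agree. -/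
def matchedCoupling (α : Measure X) (a : X → T → ℝ) (α' : Measure X') (a' : X' → T → ℝ) :
    Measure (X × X') :=
  (α.prod α').withDensity fun z => ENNReal.ofReal (matchDensity α a α' a' z)

lemma massRatio_nonneg : 0 ≤ massRatio p p' := le_max_left _ _

lemma massRatio_self : massRatio p p = 1 := by simp [massRatio]

lemma massRatio_mul_le (hp : 0 ≤ p) (hp' : 0 ≤ p') (t : T) : massRatio p p' * p' t ≤ p t := by
  rcases (hp' t).eq_or_lt with h0 | hpos
  · simpa only [← h0, Pi.zero_apply, mul_zero] using hp t
  · rw [massRatio, max_mul_of_nonneg _ _ hpos.le, zero_mul]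
    refine max_le (hp t) ?_
    have hterm : |p t - p' t| / p' t ≤ ∑ t, |p t - p' t| / p' t :=
      Finset.single_le_sum (f := fun t => |p t - p' t| / p' t)
        (fun t _ => div_nonneg (abs_nonneg _) (hp' t)) (Finset.mem_univ t)
    have habs : |p t - p' t| = |p t - p' t| / p' t * p' t := (div_mul_cancel₀ _ hpos.ne').symm
    nlinarith [neg_abs_le (p t - p' t), mul_le_mul_of_nonneg_right hterm hpos.le]

lemma matchRate_nonneg (hp : 0 ≤ p) (t : T) : 0 ≤ matchRate p p' t := by
  rw [matchRate]
  split_ifs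
  · exact le_rfl
  · exact div_nonneg massRatio_nonneg (hp t)

lemma matchRate_mul_le_one (hp : 0 ≤ p) (hp' : 0 ≤ p') (t : T) :
    matchRate p p' t * p' t ≤ 1 := by
  rw [matchRate]
  split_ifs
  · rw [zero_mul]
    exact zero_le_one
  · rw [div_mul_eq_mul_div]
    exact div_le_one_of_le₀ (massRatio_mul_le hp hp' t) (hp t)

lemma matchRate_mul_eq (hp : 0 ≤ p) (hp' : 0 ≤ p') {t : T} (ht : p' t ≠ 0) :
    matchRate p p' t * p t = massRatio p p' := by
  rw [matchRate, if_neg ht]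
  refine div_mul_cancel_of_imp fun h0 => ?_
  have hle := massRatio_mul_le hp hp' t
  rw [h0] at hle
  exact (nonpos_of_mul_nonpos_left hle ((hp' t).lt_of_ne' ht)).antisymm massRatio_nonneg

lemma continuous_massRatio : Continuous fun p => massRatio p p' :=
  continuous_const.max <| continuous_const.sub <| continuous_finsetSum _ fun t _ =>
    ((continuous_apply t).sub continuous_const).abs.div_const _

lemma continuousAt_matchWeight (t : T × T) : ContinuousAt (fun p => matchWeight p p' t) p' := by
  have hrate : ContinuousAt (fun p => matchRate p p' t.1) p' := by
    unfold matchRate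
    split_ifs with h0
    · exact continuousAt_const
    · exact continuous_massRatio.continuousAt.div (continuous_apply t.1).continuousAt h0
  exact continuousAt_const.add (hrate.mul continuousAt_const)

lemma partMass_nonneg (ha : IsStochastic a) : 0 ≤ partMass α a :=
  fun t => integral_nonneg fun x => ha.nonneg x t

lemma IsStochastic.integrable [IsFiniteMeasure α] (ha : IsStochastic a) (t : T) :
    Integrable (fun x => a x t) α :=
  integrable_of_mem_Icc (ha.measurable t) fun x => ha.mem_Icc x t

lemma sum_partMass [IsProbabilityMeasure α] (ha : IsStochastic a) : ∑ t, partMass α a t = 1 := by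
  simp only [partMass]
  rw [← integral_finsetSum _ fun t _ => ha.integrable t]
  simp [ha.sum_eq_one]

lemma ae_eq_zero_of_partMass_eq_zero [IsFiniteMeasure α] (ha : IsStochastic a) {t : T}
    (ht : partMass α a t = 0) : ∀ᵐ x ∂α, a x t = 0 :=
  (integral_eq_zero_iff_of_nonneg (fun x => ha.nonneg x t) (ha.integrable t)).mp ht

lemma matchDensity_eq (ha : IsStochastic a) (ha' : IsStochastic a') (z : X × X') :
    matchDensity α a α' a' z = 1 + ∑ t, matchRate (partMass α a) (partMass α' a') t *
      a z.1 t * (a' z.2 t - partMass α' a' t) := by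
  classical
  have hrow (t : T) : ∑ v, matchWeight (partMass α a) (partMass α' a') (t, v) *
      (a z.1 t * a' z.2 v) = a z.1 t + matchRate (partMass α a) (partMass α' a') t * a z.1 t *
        (a' z.2 t - partMass α' a' t) := by
    have hind : ∑ v, Set.indicator {t} 1 v * a' z.2 v = a' z.2 t := by
      simp [Set.indicator_apply]
    calc _ = ∑ v, ((1 - matchRate (partMass α a) (partMass α' a') t * partMass α' a' t) * a z.1 t *
            a' z.2 v + matchRate (partMass α a) (partMass α' a') t * a z.1 t *
              (Set.indicator {t} 1 v * a' z.2 v)) :=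
          Finset.sum_congr rfl fun v _ => by
            simp only [matchWeight]
            ring
      _ = _ := by
          rw [Finset.sum_add_distrib, ← Finset.mul_sum, ← Finset.mul_sum, ha'.sum_eq_one, hind]
          ring
  rw [matchDensity, Fintype.sum_prod_type]
  simp only [hrow]
  rw [Finset.sum_add_distrib, ha.sum_eq_one]

lemma matchDensity_nonneg (ha : IsStochastic a) (ha' : IsStochastic a') (z : X × X') :
    0 ≤ matchDensity α a α' a' z := by
  have hp : 0 ≤ partMass α a := partMass_nonneg ha
  have hp' : 0 ≤ partMass α' a' := partMass_nonneg ha'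
  rw [matchDensity_eq ha ha', ← ha.sum_eq_one z.1, ← Finset.sum_add_distrib]
  refine Finset.sum_nonneg fun t _ => ?_
  have hsplit : a z.1 t + matchRate (partMass α a) (partMass α' a') t * a z.1 t *
        (a' z.2 t - partMass α' a' t) =
      a z.1 t * (1 - matchRate (partMass α a) (partMass α' a') t * partMass α' a' t) +
        matchRate (partMass α a) (partMass α' a') t * a z.1 t * a' z.2 t := by ring
  rw [hsplit]
  exact add_nonneg
    (mul_nonneg (ha.nonneg _ _) (sub_nonneg.mpr (matchRate_mul_le_one hp hp' t)))
    (mul_nonneg (mul_nonneg (matchRate_nonneg hp t) (ha.nonneg _ _)) (ha'.nonneg _ _))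

lemma measurable_matchDensity (ha : IsStochastic a) (ha' : IsStochastic a') :
    Measurable (matchDensity α a α' a') :=
  Finset.measurable_fun_sum _ fun t _ => (((ha.measurable t.1).comp measurable_fst).mul
    ((ha'.measurable t.2).comp measurable_snd)).const_mul _

lemma integral_matchedCoupling (ha : IsStochastic a) (ha' : IsStochastic a') (f : X × X' → ℝ) :
    ∫ z, f z ∂matchedCoupling α a α' a' =
      ∫ z, matchDensity α a α' a' z * f z ∂α.prod α' := by
  rw [matchedCoupling, integral_withDensity_eq_integral_toReal_smul
    (measurable_matchDensity ha ha').ennreal_ofReal (.of_forall fun _ => ENNReal.ofReal_lt_top)]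
  simp only [ENNReal.toReal_ofReal (matchDensity_nonneg ha ha' _), smul_eq_mul]

variable [IsProbabilityMeasure α] [IsProbabilityMeasure α']

omit [IsProbabilityMeasure α] in
lemma integral_matchDensity_right (ha : IsStochastic a) (ha' : IsStochastic a') (x : X) :
    ∫ x', matchDensity α a α' a' (x, x') ∂α' = 1 := by
  have hint (t : T) : Integrable (fun x' => a' x' t - partMass α' a' t) α' :=
    (ha'.integrable t).sub (integrable_const _)
  have hzero (t : T) : ∫ x', (a' x' t - partMass α' a' t) ∂α' = 0 := by
    rw [integral_sub (ha'.integrable t) (integrable_const _), integral_const, probReal_univ,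
      one_smul]
    exact sub_self _
  simp only [matchDensity_eq ha ha']
  rw [integral_add (integrable_const _) (integrable_finsetSum _ fun t _ => (hint t).const_mul _),
    integral_finsetSum _ fun t _ => (hint t).const_mul _]
  simp [integral_const_mul, hzero]

lemma integral_matchDensity_left (ha : IsStochastic a) (ha' : IsStochastic a') :
    ∀ᵐ x' ∂α', ∫ x, matchDensity α a α' a' (x, x') ∂α = 1 := by
  have hp : 0 ≤ partMass α a := partMass_nonneg ha
  have hp' : 0 ≤ partMass α' a' := partMass_nonneg ha'
  have hnull : ∀ᵐ x' ∂α', ∀ t, partMass α' a' t = 0 → a' x' t = 0 :=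
    ae_all_iff.mpr fun t => by
      by_cases ht : partMass α' a' t = 0
      · filter_upwards [ae_eq_zero_of_partMass_eq_zero ha' ht] with x' hx' _ using hx'
      · exact .of_forall fun _ h => absurd h ht
  filter_upwards [hnull] with x' hx'
  have hint (t : T) : Integrable (fun x => matchRate (partMass α a) (partMass α' a') t * a x t *
      (a' x' t - partMass α' a' t)) α := ((ha.integrable t).const_mul _).mul_const _
  have hterm (t : T) : ∫ x, matchRate (partMass α a) (partMass α' a') t * a x t *
        (a' x' t - partMass α' a' t) ∂α =
      massRatio (partMass α a) (partMass α' a') * (a' x' t - partMass α' a' t) := by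
    rw [integral_mul_const, integral_const_mul]
    by_cases ht : partMass α' a' t = 0
    · rw [ht, hx' t ht, sub_self, mul_zero, mul_zero]
    · exact congrArg (· * _) (matchRate_mul_eq hp hp' ht)
  simp only [matchDensity_eq ha ha']
  rw [integral_add (integrable_const _) (integrable_finsetSum _ fun t _ => hint t),
    integral_finsetSum _ fun t _ => hint t]
  simp only [hterm]
  rw [← Finset.mul_sum, Finset.sum_sub_distrib, ha'.sum_eq_one, sum_partMass ha', sub_self]
  simp

lemma withDensity_prod_map_fst {f : X × X' → ℝ} (hf : Measurable f) (hf0 : ∀ z, 0 ≤ f z)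
    (hfi : Integrable f (α.prod α')) (h1 : ∀ᵐ x ∂α, ∫ x', f (x, x') ∂α' = 1) :
    ((α.prod α').withDensity fun z => ENNReal.ofReal (f z)).map Prod.fst = α := by
  ext s hs
  rw [Measure.map_apply measurable_fst hs, withDensity_apply _ (measurable_fst hs),
    ← prod_univ, ← Measure.prod_restrict, Measure.restrict_univ,
    lintegral_prod _ hf.ennreal_ofReal.aemeasurable]
  have hone : ∀ᵐ x ∂α, ∫⁻ x', ENNReal.ofReal (f (x, x')) ∂α' = 1 := by
    filter_upwards [h1, hfi.prod_right_ae] with x hx hxi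
    rw [← ofReal_integral_eq_lintegral_ofReal hxi (.of_forall fun x' => hf0 _), hx,
      ENNReal.ofReal_one]
  rw [lintegral_congr_ae (ae_restrict_of_ae hone), setLIntegral_one]

lemma integrable_matchDensity (ha : IsStochastic a) (ha' : IsStochastic a') :
    Integrable (matchDensity α a α' a') (α.prod α') :=
  integrable_finsetSum _ fun t _ =>
    ((ha.integrable t.1).mul_prod (ha'.integrable t.2)).const_mul _

lemma matchedCoupling_map_fst (ha : IsStochastic a) (ha' : IsStochastic a') :
    (matchedCoupling α a α' a').map Prod.fst = α :=
  withDensity_prod_map_fst (measurable_matchDensity ha ha') (matchDensity_nonneg ha ha')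
    (integrable_matchDensity ha ha') (.of_forall (integral_matchDensity_right ha ha'))

lemma matchedCoupling_map_snd (ha : IsStochastic a) (ha' : IsStochastic a') :
    (matchedCoupling α a α' a').map Prod.snd = α' := by
  have hswap : matchedCoupling α a α' a' = ((α'.prod α).withDensity fun z =>
      ENNReal.ofReal (matchDensity α a α' a' z.swap)).map Prod.swap := by
    rw [matchedCoupling, ← Measure.prod_swap]
    ext s hs
    rw [withDensity_apply _ hs, Measure.map_apply measurable_swap hs,
      withDensity_apply _ (measurable_swap hs),
      setLIntegral_map hs (measurable_matchDensity ha ha').ennreal_ofReal measurable_swap]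
  rw [hswap, Measure.map_map measurable_snd measurable_swap]
  exact withDensity_prod_map_fst ((measurable_matchDensity ha ha').comp measurable_swap)
    (fun z => matchDensity_nonneg ha ha' _) (integrable_matchDensity ha ha').swap
    (integral_matchDensity_left ha ha')

lemma isProbabilityMeasure_matchedCoupling (ha : IsStochastic a) (ha' : IsStochastic a') :
    IsProbabilityMeasure (matchedCoupling α a α' a') := by
  refine ⟨?_⟩
  rw [← preimage_univ (f := Prod.fst), ← Measure.map_apply measurable_fst .univ,
    matchedCoupling_map_fst ha ha', measure_univ]

lemma matchDensity_self_ae_eq (ha : IsStochastic a) :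
    ∀ᵐ z ∂α.prod α, matchDensity α a α a z =
      ∑ t, matchRate (partMass α a) (partMass α a) t * (a z.1 t * a z.2 t) := by
  have hp : 0 ≤ partMass α a := partMass_nonneg ha
  have hnull : ∀ᵐ x ∂α, ∀ t, partMass α a t = 0 → a x t = 0 :=
    ae_all_iff.mpr fun t => by
      by_cases ht : partMass α a t = 0
      · filter_upwards [ae_eq_zero_of_partMass_eq_zero ha ht] with x hx _ using hx
      · exact .of_forall fun _ h => absurd h ht
  filter_upwards [Measure.quasiMeasurePreserving_fst.ae hnull] with z hz
  have hrate (t : T) : matchRate (partMass α a) (partMass α a) t * partMass α a t * a z.1 t =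
      a z.1 t := by
    by_cases ht : partMass α a t = 0
    · rw [hz t ht, mul_zero]
    · rw [matchRate_mul_eq hp hp ht, massRatio_self, one_mul]
  rw [matchDensity_eq ha ha, ← ha.sum_eq_one z.1, ← Finset.sum_add_distrib]
  refine Finset.sum_congr rfl fun t _ => ?_
  linear_combination -hrate t

lemma mul_mul_abs_sub_le {u v : ℝ} (hu : 0 ≤ u) (hv : 0 ≤ v) (x y h : ℝ) :
    u * v * |x - y| ≤ u * |x - h| * v + u * (v * |y - h|) := by
  calc u * v * |x - y| ≤ u * v * (|x - h| + |y - h|) :=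
        mul_le_mul_of_nonneg_left ((abs_sub_le _ h _).trans_eq (by rw [abs_sub_comm h]))
          (mul_nonneg hu hv)
    _ = u * |x - h| * v + u * (v * |y - h|) := by ring

/-- Conditionally on the common part `t`, the two coordinates of the self-coupling are
independent, so each contributes the distance of `F` from the predicted value `h t`. -/
lemma integral_matchedCoupling_self_abs_sub_le (ha : IsStochastic a) {F : X → ℝ}
    (hF : Measurable F) {c : ℝ} (hFc : ∀ x, |F x| ≤ c) (h : T → ℝ) :
    ∫ z, |F z.1 - F z.2| ∂matchedCoupling α a α a ≤ 2 * ∑ t, ∫ x, a x t * |F x - h t| ∂α := by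
  have hp : 0 ≤ partMass α a := partMass_nonneg ha
  set dist : T → X → ℝ := fun t x => a x t * |F x - h t|
  have hdist (t : T) : Integrable (dist t) α :=
    (ha.integrable t).mul_bdd (c := c + |h t|)
      (hF.sub measurable_const).abs.aestronglyMeasurable
      (.of_forall fun x => by
        rw [Real.norm_eq_abs, abs_abs]
        exact (abs_sub _ _).trans (add_le_add_left (hFc x) _))
  have hleft (t : T) := (hdist t).mul_prod (ha.integrable (α := α) t)
  have hright (t : T) := (ha.integrable (α := α) t).mul_prod (hdist t)
  have hsum (t : T) : Integrable (fun z => matchRate (partMass α a) (partMass α a) t *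
      (dist t z.1 * a z.2 t + a z.1 t * dist t z.2)) (α.prod α) :=
    ((hleft t).add (hright t)).const_mul _
  rw [integral_matchedCoupling ha ha]
  calc ∫ z, matchDensity α a α a z * |F z.1 - F z.2| ∂α.prod α
      ≤ ∫ z, ∑ t, matchRate (partMass α a) (partMass α a) t *
          (dist t z.1 * a z.2 t + a z.1 t * dist t z.2) ∂α.prod α := by
        refine integral_mono_of_nonneg (.of_forall fun z => mul_nonneg
          (matchDensity_nonneg ha ha z) (abs_nonneg _))
          (integrable_finsetSum _ fun t _ => hsum t) ?_
        filter_upwards [matchDensity_self_ae_eq ha] with z hz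
        simp only [hz, Finset.sum_mul]
        refine Finset.sum_le_sum fun t _ => ?_
        rw [mul_assoc]
        exact mul_le_mul_of_nonneg_left
          (mul_mul_abs_sub_le (ha.nonneg _ _) (ha.nonneg _ _) _ _ _) (matchRate_nonneg hp t)
    _ = ∑ t, matchRate (partMass α a) (partMass α a) t * partMass α a t *
          (2 * ∫ x, dist t x ∂α) := by
        rw [integral_finsetSum _ fun t _ => hsum t]
        refine Finset.sum_congr rfl fun t _ => ?_
        rw [integral_const_mul, integral_add (hleft t) (hright t),
          integral_prod_mul (dist t) fun x => a x t, integral_prod_mul (fun x => a x t) (dist t),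
          partMass]
        ring
    _ ≤ 2 * ∑ t, ∫ x, dist t x ∂α := by
        rw [Finset.mul_sum]
        exact Finset.sum_le_sum fun t _ => mul_le_of_le_one_left
          (mul_nonneg zero_le_two (integral_nonneg fun x => mul_nonneg (ha.nonneg _ _)
            (abs_nonneg _))) (matchRate_mul_le_one hp hp t)

end MatchedCoupling

section WithDensity

lemma lintegral_pi_prod {I : Type*} [Fintype I] {X : I → Type*} [∀ i, MeasurableSpace (X i)]
    (μ : ∀ i, Measure (X i)) [∀ i, IsProbabilityMeasure (μ i)] {f : ∀ i, X i → ENNReal}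
    (hf : ∀ i, Measurable (f i)) :
    ∫⁻ x, ∏ i, f i (x i) ∂Measure.pi μ = ∏ i, ∫⁻ x, f i x ∂μ i := by
  refine (ProbabilityTheory.lintegral_prod_eq_prod_lintegral_of_indepFun Finset.univ
    (fun i (x : ∀ i, X i) => f i (x i))
    (ProbabilityTheory.iIndepFun_pi fun i => (hf i).aemeasurable)
    fun i => (hf i).comp (measurable_pi_apply i)).trans ?_
  exact Finset.prod_congr rfl fun i _ => (measurePreserving_eval μ i).lintegral_comp (hf i)

lemma pi_withDensity {I : Type*} [Fintype I] {X : I → Type*} [∀ i, MeasurableSpace (X i)]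
    (μ : ∀ i, Measure (X i)) [∀ i, IsProbabilityMeasure (μ i)] {f : ∀ i, X i → ENNReal}
    (hf : ∀ i, Measurable (f i)) [∀ i, SigmaFinite ((μ i).withDensity (f i))] :
    Measure.pi (fun i => (μ i).withDensity (f i)) =
      (Measure.pi μ).withDensity fun x => ∏ i, f i (x i) := by
  classical
  refine Measure.pi_eq fun s hs => ?_
  rw [withDensity_apply _ (.univ_pi hs), ← lintegral_indicator (.univ_pi hs)]
  have hind (x : ∀ i, X i) : (univ.pi s).indicator (fun x => ∏ i, f i (x i)) x =
      ∏ i, (s i).indicator (f i) (x i) := by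
    by_cases hx : x ∈ univ.pi s
    · rw [indicator_of_mem hx]
      exact Finset.prod_congr rfl fun i _ => (indicator_of_mem (hx i (mem_univ i)) _).symm
    · obtain ⟨i, hi⟩ : ∃ i, x i ∉ s i := by simpa only [mem_univ_pi, not_forall] using hx
      rw [indicator_of_notMem hx,
        Finset.prod_eq_zero (Finset.mem_univ i) (indicator_of_notMem hi _)]
  simp only [hind]
  rw [lintegral_pi_prod μ fun i => (hf i).indicator (hs i)]
  exact Finset.prod_congr rfl fun i _ => by
    rw [lintegral_indicator (hs i), withDensity_apply _ (hs i)]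

lemma homDensity_withDensity {X Y I J : Type*} [MeasurableSpace X] [MeasurableSpace Y] [Fintype I]
    [Fintype J] {σ : Measure X} {τ : Measure Y} [IsProbabilityMeasure σ] [IsProbabilityMeasure τ]
    {f : X → ℝ} {g : Y → ℝ} (hf : Measurable f) (hg : Measurable g) (hf0 : ∀ x, 0 ≤ f x)
    (hg0 : ∀ y, 0 ≤ g y) (F : I → J → X × Y → ℝ) :
    homDensity (σ.withDensity fun x => ENNReal.ofReal (f x))
        (τ.withDensity fun y => ENNReal.ofReal (g y)) F =
      ∫ z : (I → X) × (J → Y), (∏ i, f (z.1 i)) * (∏ j, g (z.2 j)) *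
        ∏ i, ∏ j, F i j (z.1 i, z.2 j) ∂(Measure.pi fun _ => σ).prod (Measure.pi fun _ => τ) := by
  have hrow : Measurable fun x : I → X => ∏ i, ENNReal.ofReal (f (x i)) :=
    Finset.measurable_fun_prod _ fun i _ => (hf.comp (measurable_pi_apply i)).ennreal_ofReal
  have hcol : Measurable fun y : J → Y => ∏ j, ENNReal.ofReal (g (y j)) :=
    Finset.measurable_fun_prod _ fun j _ => (hg.comp (measurable_pi_apply j)).ennreal_ofReal
  have hprod : Measurable fun z : (I → X) × (J → Y) =>
      (∏ i, ENNReal.ofReal (f (z.1 i))) * ∏ j, ENNReal.ofReal (g (z.2 j)) :=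
    (hrow.comp measurable_fst).mul (hcol.comp measurable_snd)
  rw [homDensity, pi_withDensity _ fun _ => hf.ennreal_ofReal,
    pi_withDensity _ fun _ => hg.ennreal_ofReal, prod_withDensity hrow hcol,
    integral_withDensity_eq_integral_toReal_smul hprod
      (.of_forall fun z => ENNReal.mul_lt_top (ENNReal.prod_lt_top fun _ _ => ENNReal.ofReal_lt_top)
        (ENNReal.prod_lt_top fun _ _ => ENNReal.ofReal_lt_top))]
  simp only [ENNReal.toReal_mul, ENNReal.toReal_prod, ENNReal.toReal_ofReal (hf0 _),
    ENNReal.toReal_ofReal (hg0 _), smul_eq_mul]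

end WithDensity

section LabelProb

variable {R C R' C' U T A : Type*} [MeasurableSpace R] [MeasurableSpace C] [MeasurableSpace R']
  [MeasurableSpace C'] {I J : Type*}

/-- A labelling of the `I × J` array sampled from a kernel with values in `A`: each row gets a type
in `U`, each column a type in `T` and each entry a value in `A`. -/
abbrev Labelling (I J U T A : Type*) : Type _ := (I → U) × (J → T) × (I → J → A)

/-- Applies maps to the types of rows and columns and to the entries. -/
def Labelling.map {U' T' A' : Type*} (f : U → U') (g : T → T') (h : A → A')
    (ξ : Labelling I J U T A) : Labelling I J U' T' A' :=
  (fun i => f (ξ.1 i), fun j => g (ξ.2.1 j), fun i j => h (ξ.2.2 i j))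

variable [Fintype I] [Fintype J]

/-- The product over all rows, columns and entries of coefficients depending on their labels. -/
def Labelling.weight (g : I → U → ℝ) (h : J → T → ℝ) (d : I → J → A → ℝ)
    (ξ : Labelling I J U T A) : ℝ :=
  (∏ i, g i (ξ.1 i)) * (∏ j, h j (ξ.2.1 j)) * ∏ i, ∏ j, d i j (ξ.2.2 i j)

/-- The probability of a labelling of the random array sampled from `W`, where the types of rows
and columns are sampled from `a` and `b`. -/
def labelProb (ρ : Measure R) (κ : Measure C) (a : R → U → ℝ) (b : C → T → ℝ)
    (W : R × C → A → ℝ) (ξ : Labelling I J U T A) : ℝ :=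
  ∫ z : (I → R) × (J → C), ξ.weight (fun i => a (z.1 i)) (fun j => b (z.2 j))
    (fun i j => W (z.1 i, z.2 j)) ∂(Measure.pi fun _ => ρ).prod (Measure.pi fun _ => κ)

lemma Labelling.weight_mul (g g' : I → U → ℝ) (h h' : J → T → ℝ) (d d' : I → J → A → ℝ)
    (ξ : Labelling I J U T A) : ξ.weight g h d * ξ.weight g' h' d' =
      ξ.weight (fun i u => g i u * g' i u) (fun j t => h j t * h' j t)
        fun i j ω => d i j ω * d' i j ω := by
  simp only [Labelling.weight, Finset.prod_mul_distrib]
  ring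

lemma Labelling.sum_weight [DecidableEq I] [DecidableEq J] [Fintype U] [Fintype T] [Fintype A]
    (g : I → U → ℝ) (h : J → T → ℝ) (d : I → J → A → ℝ) :
    ∑ ξ : Labelling I J U T A, ξ.weight g h d =
      (∏ i, ∑ u, g i u) * (∏ j, ∑ t, h j t) * ∏ i, ∏ j, ∑ ω, d i j ω := by
  simp only [Labelling.weight, Finset.prod_univ_sum, Fintype.piFinset_univ, Fintype.sum_prod_type,
    ← Finset.mul_sum, ← Finset.sum_mul]

variable [Fintype U] [Fintype T] [Fintype A] {ρ : Measure R} {κ : Measure C} {a : R → U → ℝ}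
  {b : C → T → ℝ} {W : R × C → A → ℝ}

lemma measurable_weight (ha : IsStochastic a) (hb : IsStochastic b) (hW : IsStochastic W)
    (ξ : Labelling I J U T A) : Measurable fun z : (I → R) × (J → C) =>
      ξ.weight (fun i => a (z.1 i)) (fun j => b (z.2 j)) fun i j => W (z.1 i, z.2 j) :=
  ((Finset.measurable_fun_prod _ fun i _ => (ha.measurable _).comp (by fun_prop)).mul
    (Finset.measurable_fun_prod _ fun j _ => (hb.measurable _).comp (by fun_prop))).mul
    (measurable_prod_prod fun i j => hW.measurable _)

lemma integrable_weight [IsFiniteMeasure ρ] [IsFiniteMeasure κ] (ha : IsStochastic a)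
    (hb : IsStochastic b) (hW : IsStochastic W) (ξ : Labelling I J U T A) :
    Integrable (fun z : (I → R) × (J → C) => ξ.weight (fun i => a (z.1 i)) (fun j => b (z.2 j))
      fun i j => W (z.1 i, z.2 j)) ((Measure.pi fun _ => ρ).prod (Measure.pi fun _ => κ)) :=
  integrable_of_mem_Icc (measurable_weight ha hb hW ξ) fun _ =>
    unitInterval.mul_mem (unitInterval.mul_mem
      (unitInterval.submonoid.prod_mem fun _ _ => ha.mem_Icc _ _)
      (unitInterval.submonoid.prod_mem fun _ _ => hb.mem_Icc _ _))
      (unitInterval.submonoid.prod_mem fun _ _ =>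
        unitInterval.submonoid.prod_mem fun _ _ => hW.mem_Icc _ _)

variable [DecidableEq I] [DecidableEq J]

lemma sum_weight_mul_labelProb [IsProbabilityMeasure ρ] [IsProbabilityMeasure κ]
    (ha : IsStochastic a) (hb : IsStochastic b) (hW : IsStochastic W) (g : I → U → ℝ)
    (h : J → T → ℝ) (d : I → J → A → ℝ) :
    ∑ ξ : Labelling I J U T A, ξ.weight g h d * labelProb ρ κ a b W ξ =
      ∫ z : (I → R) × (J → C), (∏ i, ∑ u, g i u * a (z.1 i) u) *
        (∏ j, ∑ t, h j t * b (z.2 j) t) * ∏ i, ∏ j, ∑ ω, d i j ω * W (z.1 i, z.2 j) ω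
        ∂(Measure.pi fun _ => ρ).prod (Measure.pi fun _ => κ) := by
  simp only [labelProb, ← integral_const_mul]
  rw [← integral_finsetSum _ fun ξ _ => (integrable_weight ha hb hW ξ).const_mul _]
  simp only [Labelling.weight_mul, Labelling.sum_weight]

lemma sum_indicator_mul_labelProb_row [IsProbabilityMeasure ρ] [IsProbabilityMeasure κ]
    (ha : IsStochastic a) (hb : IsStochastic b) (hW : IsStochastic W) (i : I) (u : U) :
    ∑ ξ : Labelling I J U T A, Set.indicator {u} 1 (ξ.1 i) * labelProb ρ κ a b W ξ =
      partMass ρ a u := by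
  classical
  have hexpand := sum_weight_mul_labelProb (ρ := ρ) (κ := κ) ha hb hW
    (fun i' u' => if i' = i then Set.indicator {u} 1 u' else 1) (1 : J → T → ℝ) (1 : I → J → A → ℝ)
  have hrow (z : I → R) : ∏ i', ∑ u', (if i' = i then Set.indicator {u} 1 u' else 1) *
      a (z i') u' = a (z i) u := by
    rw [Finset.prod_eq_single i (fun i' _ hi' => by simp [hi', ha.sum_eq_one]) (by simp)]
    simp [Set.indicator_apply]
  simp only [hrow, Pi.one_apply, one_mul, hb.sum_eq_one, hW.sum_eq_one, Finset.prod_const_one,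
    mul_one] at hexpand
  simp only [Labelling.weight, Pi.one_apply, Finset.prod_const_one, mul_one, Finset.prod_ite_eq',
    Finset.mem_univ, if_true] at hexpand
  rw [hexpand, integral_fun_fst (fun z : I → R => a (z i) u), probReal_univ, one_smul]
  exact integral_comp_eval (μ := fun _ : I => ρ) (f := fun x => a x u)
    (ha.measurable u).aestronglyMeasurable

lemma sum_indicator_mul_labelProb_col [IsProbabilityMeasure ρ] [IsProbabilityMeasure κ]
    (ha : IsStochastic a) (hb : IsStochastic b) (hW : IsStochastic W) (j : J) (t : T) :
    ∑ ξ : Labelling I J U T A, Set.indicator {t} 1 (ξ.2.1 j) * labelProb ρ κ a b W ξ =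
      partMass κ b t := by
  classical
  have hexpand := sum_weight_mul_labelProb (ρ := ρ) (κ := κ) ha hb hW (1 : I → U → ℝ)
    (fun j' t' => if j' = j then Set.indicator {t} 1 t' else 1) (1 : I → J → A → ℝ)
  have hcol (z : J → C) : ∏ j', ∑ t', (if j' = j then Set.indicator {t} 1 t' else 1) *
      b (z j') t' = b (z j) t := by
    rw [Finset.prod_eq_single j (fun j' _ hj' => by simp [hj', hb.sum_eq_one]) (by simp)]
    simp [Set.indicator_apply]
  simp only [hcol, Pi.one_apply, one_mul, ha.sum_eq_one, hW.sum_eq_one, Finset.prod_const_one,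
    mul_one] at hexpand
  simp only [Labelling.weight, Pi.one_apply, Finset.prod_const_one, mul_one, one_mul,
    Finset.prod_ite_eq', Finset.mem_univ, if_true] at hexpand
  rw [hexpand, integral_fun_snd (fun z : J → C => b (z j) t), probReal_univ, one_smul]
  exact integral_comp_eval (μ := fun _ : J => κ) (f := fun y => b y t)
    (hb.measurable t).aestronglyMeasurable

end LabelProb

section Tensor

variable {X X' V V' : Type*} {a : X → V → ℝ} {a' : X' → V' → ℝ}

/-- The tensor product of two families of functions. -/
def tensor (a : X → V → ℝ) (a' : X' → V' → ℝ) (z : X × X') (t : V × V') : ℝ :=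
  a z.1 t.1 * a' z.2 t.2

variable [MeasurableSpace X] [MeasurableSpace X'] [Fintype V] [Fintype V']

lemma IsStochastic.tensor (ha : IsStochastic a) (ha' : IsStochastic a') :
    IsStochastic (tensor a a') where
  measurable t := ((ha.measurable t.1).comp measurable_fst).mul
    ((ha'.measurable t.2).comp measurable_snd)
  nonneg z t := mul_nonneg (ha.nonneg _ _) (ha'.nonneg _ _)
  sum_eq_one z := by
    simp only [Paper.tensor, Fintype.sum_prod_type, ← Finset.mul_sum, ha'.sum_eq_one, mul_one,
      ha.sum_eq_one]

end Tensor

section TensorLabelProb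

variable {R C R' C' U T A I J : Type*} [MeasurableSpace R] [MeasurableSpace C] [MeasurableSpace R']
  [MeasurableSpace C'] [Fintype I] [Fintype J] [Fintype U] [Fintype T] [Fintype A] {ρ : Measure R}
  {κ : Measure C} {ρ' : Measure R'} {κ' : Measure C'} [IsProbabilityMeasure ρ]
  [IsProbabilityMeasure κ] [IsProbabilityMeasure ρ'] [IsProbabilityMeasure κ']
  {a : R → U → ℝ} {b : C → T → ℝ} {W : R × C → A → ℝ}
  {a' : R' → U → ℝ} {b' : C' → T → ℝ} {W' : R' × C' → A → ℝ}

/-- The tensor product of two kernels, as a kernel on the products of the row and column spaces. -/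
def tensorKernel (W : R × C → A → ℝ) (W' : R' × C' → A → ℝ) (z : (R × R') × (C × C')) :
    A × A → ℝ :=
  tensor W W' ((z.1.1, z.2.1), (z.1.2, z.2.2))

lemma IsStochastic.tensorKernel (hW : IsStochastic W) (hW' : IsStochastic W') :
    IsStochastic (tensorKernel W W') :=
  (hW.tensor hW').comp (f := fun z : (R × R') × (C × C') => ((z.1.1, z.2.1), (z.1.2, z.2.2)))
    (by fun_prop)

lemma measurePreserving_arrowProd_prod_arrowProd :
    MeasurePreserving (fun z : (I → R × R') × (J → C × C') =>
        ((fun i => (z.1 i).1, fun j => (z.2 j).1), (fun i => (z.1 i).2, fun j => (z.2 j).2)))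
      ((Measure.pi fun _ => ρ.prod ρ').prod (Measure.pi fun _ => κ.prod κ'))
      (((Measure.pi fun _ => ρ).prod (Measure.pi fun _ => κ)).prod
        ((Measure.pi fun _ => ρ').prod (Measure.pi fun _ => κ'))) :=
  (measurePreserving_prodProdProdComm _ _ _ _).comp
    ((measurePreserving_arrowProdEquivProdArrow R R' I (fun _ => ρ) fun _ => ρ').prod
      (measurePreserving_arrowProdEquivProdArrow C C' J (fun _ => κ) fun _ => κ'))

lemma labelProb_tensor (ha : IsStochastic a) (hb : IsStochastic b) (hW : IsStochastic W)
    (ha' : IsStochastic a') (hb' : IsStochastic b') (hW' : IsStochastic W')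
    (ξ : Labelling I J (U × U) (T × T) (A × A)) :
    labelProb (ρ.prod ρ') (κ.prod κ') (tensor a a') (tensor b b') (tensorKernel W W') ξ =
      labelProb ρ κ a b W (ξ.map Prod.fst Prod.fst Prod.fst) *
        labelProb ρ' κ' a' b' W' (ξ.map Prod.snd Prod.snd Prod.snd) := by
  have hmp := measurePreserving_arrowProd_prod_arrowProd (I := I) (J := J) (ρ := ρ) (κ := κ)
    (ρ' := ρ') (κ' := κ')
  set left := fun z : (I → R) × (J → C) => (ξ.map Prod.fst Prod.fst Prod.fst).weight
    (fun i => a (z.1 i)) (fun j => b (z.2 j)) fun i j => W (z.1 i, z.2 j)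
  set right := fun z : (I → R') × (J → C') => (ξ.map Prod.snd Prod.snd Prod.snd).weight
    (fun i => a' (z.1 i)) (fun j => b' (z.2 j)) fun i j => W' (z.1 i, z.2 j)
  have hmeas : Measurable fun z : ((I → R) × (J → C)) × (I → R') × (J → C') =>
      left z.1 * right z.2 :=
    ((measurable_weight ha hb hW _).comp measurable_fst).mul
      ((measurable_weight ha' hb' hW' _).comp measurable_snd)
  calc _ = ∫ z, left z.1 * right z.2 ∂((Measure.pi fun _ => ρ).prod (Measure.pi fun _ => κ)).prod
          ((Measure.pi fun _ => ρ').prod (Measure.pi fun _ => κ')) := by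
        rw [← hmp.map_eq, integral_map hmp.aemeasurable hmeas.aestronglyMeasurable]
        refine integral_congr_ae (.of_forall fun z => ?_)
        simp only [left, right, Labelling.weight, Labelling.map, tensor, tensorKernel,
          Finset.prod_mul_distrib]
        ring
    _ = _ := integral_prod_mul left right

end TensorLabelProb

section MatchedFourCycle

variable {R C R' C' U T A : Type*} [MeasurableSpace R] [MeasurableSpace C] [MeasurableSpace R']
  [MeasurableSpace C'] [Fintype U] [Fintype T] [Fintype A] {ρ : Measure R}
  {κ : Measure C} {ρ' : Measure R'} {κ' : Measure C'} [IsProbabilityMeasure ρ]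
  [IsProbabilityMeasure κ] [IsProbabilityMeasure ρ'] [IsProbabilityMeasure κ']
  {a : R → U → ℝ} {b : C → T → ℝ} {W : R × C → A → ℝ}
  {a' : R' → U → ℝ} {b' : C' → T → ℝ} {W' : R' × C' → A → ℝ}

/-- The difference of the entries `ω` of two kernels, as a function of an entry `W z.1.1 z.2.1` of
the first kernel and an entry of the second. -/
def kernelDiff (W : R × C → A → ℝ) (W' : R' × C' → A → ℝ) (ω : A) (z : (R × R') × (C × C')) : ℝ :=
  W (z.1.1, z.2.1) ω - W' (z.1.2, z.2.2) ω

lemma measurable_kernelDiff (hW : IsStochastic W) (hW' : IsStochastic W') (ω : A) :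
    Measurable (kernelDiff W W' ω) :=
  ((hW.measurable ω).comp (f := fun z : (R × R') × (C × C') => (z.1.1, z.2.1)) (by fun_prop)).sub
    ((hW'.measurable ω).comp (f := fun z : (R × R') × (C × C') => (z.1.2, z.2.2)) (by fun_prop))

lemma abs_kernelDiff_le_one (hW : IsStochastic W) (hW' : IsStochastic W') (ω : A)
    (z : (R × R') × (C × C')) : |kernelDiff W W' ω z| ≤ 1 :=
  hW.abs_sub_le_one hW' _ _ ω

/-- The four-cycle density of the difference of two kernels with respect to the matched couplings
of their rows and columns, as a function of the label probabilities `v` and `v'`. -/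
def matchedFourCycle (ω : A) (v v' : Labelling (Fin 2) (Fin 2) U T A → ℝ) : ℝ :=
  ∑ ξ : Labelling (Fin 2) (Fin 2) (U × U) (T × T) (A × A), ξ.weight
    (fun _ => matchWeight (fun u => ∑ ξ, Set.indicator {u} 1 (ξ.1 0) * v ξ)
      fun u => ∑ ξ, Set.indicator {u} 1 (ξ.1 0) * v' ξ)
    (fun _ => matchWeight (fun t => ∑ ξ, Set.indicator {t} 1 (ξ.2.1 0) * v ξ)
      fun t => ∑ ξ, Set.indicator {t} 1 (ξ.2.1 0) * v' ξ)
    (fun _ _ e => Set.indicator {ω} 1 e.1 - Set.indicator {ω} 1 e.2) *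
    (v (ξ.map Prod.fst Prod.fst Prod.fst) * v' (ξ.map Prod.snd Prod.snd Prod.snd))

lemma continuousAt_matchWeight_sum {Ξ V : Type*} [Fintype Ξ] [Fintype V] (f : Ξ → V)
    (v' : Ξ → ℝ) (t : V × V) :
    ContinuousAt (fun v : Ξ → ℝ => matchWeight (fun u => ∑ ξ, Set.indicator {u} 1 (f ξ) * v ξ)
      (fun u => ∑ ξ, Set.indicator {u} 1 (f ξ) * v' ξ) t) v' :=
  ContinuousAt.comp (f := fun (v : Ξ → ℝ) u => ∑ ξ, Set.indicator {u} 1 (f ξ) * v ξ)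
    (continuousAt_matchWeight t) <| Continuous.continuousAt <| continuous_pi fun _ =>
      continuous_finsetSum _ fun ξ _ => continuous_const.mul (continuous_apply ξ)

lemma continuousAt_matchedFourCycle (ω : A) (v' : Labelling (Fin 2) (Fin 2) U T A → ℝ) :
    ContinuousAt (fun v => matchedFourCycle ω v v') v' := by
  have hrow (u : U × U) := continuousAt_matchWeight_sum
    (fun ξ : Labelling (Fin 2) (Fin 2) U T A => ξ.1 0) v' u
  have hcol (t : T × T) := continuousAt_matchWeight_sum
    (fun ξ : Labelling (Fin 2) (Fin 2) U T A => ξ.2.1 0) v' t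
  simp only [matchedFourCycle, Labelling.weight, Fin.prod_univ_two]
  refine tendsto_finsetSum _ fun ξ _ => ?_
  exact ((((hrow _).mul (hrow _)).mul ((hcol _).mul (hcol _))).mul continuousAt_const).mul
    ((continuous_apply _).continuousAt.mul continuousAt_const)

lemma sum_mul_tensorKernel (hW : IsStochastic W) (hW' : IsStochastic W') (ω : A)
    (z : (R × R') × (C × C')) :
    ∑ e, (Set.indicator {ω} 1 e.1 - Set.indicator {ω} 1 e.2) * tensorKernel W W' z e =
      kernelDiff W W' ω z := by
  classical
  simp only [tensorKernel, tensor, sub_mul, Finset.sum_sub_distrib, Fintype.sum_prod_type,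
    Set.indicator_apply, mem_singleton_iff, Pi.one_apply, ite_mul, one_mul, zero_mul,
    Finset.sum_ite_irrel, Finset.sum_const_zero, Finset.sum_ite_eq', Finset.mem_univ, if_true,
    ← Finset.mul_sum, ← Finset.sum_mul, hW.sum_eq_one, hW'.sum_eq_one, mul_one, one_mul,
    kernelDiff]

theorem fourCycle_matchedCoupling (ha : IsStochastic a) (hb : IsStochastic b)
    (hW : IsStochastic W) (ha' : IsStochastic a') (hb' : IsStochastic b') (hW' : IsStochastic W')
    (ω : A) :
    fourCycle (matchedCoupling ρ a ρ' a') (matchedCoupling κ b κ' b') (kernelDiff W W' ω) =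
      matchedFourCycle ω (labelProb ρ κ a b W) (labelProb ρ' κ' a' b' W') := by
  rw [matchedFourCycle]
  simp only [sum_indicator_mul_labelProb_row ha hb hW, sum_indicator_mul_labelProb_row ha' hb' hW',
    sum_indicator_mul_labelProb_col ha hb hW, sum_indicator_mul_labelProb_col ha' hb' hW',
    ← labelProb_tensor ha hb hW ha' hb' hW']
  rw [sum_weight_mul_labelProb (ha.tensor ha') (hb.tensor hb') (hW.tensorKernel hW'), fourCycle,
    matchedCoupling, matchedCoupling,
    homDensity_withDensity (measurable_matchDensity ha ha') (measurable_matchDensity hb hb')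
      (matchDensity_nonneg ha ha') (matchDensity_nonneg hb hb')]
  simp only [sum_mul_tensorKernel hW hW']
  rfl

end MatchedFourCycle

section ColumnSimple

variable {R C : Type*} [MeasurableSpace R] [MeasurableSpace C]

/-- A function on `R × C` is column-simple if it depends on the second coordinate only through a
finite measurable partition, given here by the map `b` to the index of a part. -/
def IsColumnSimple (G : R × C → ℝ) : Prop :=
  ∃ (N : ℕ) (b : C → Fin N) (w : R → Fin N → ℝ), Measurable b ∧ (∀ j, Measurable (w · j)) ∧
    G = fun z => w z.1 (b z.2)

lemma measurable_comp_fin {N : ℕ} {b : C → Fin N} {w : R → Fin N → ℝ} (hb : Measurable b)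
    (hw : ∀ j, Measurable (w · j)) : Measurable fun z : R × C => w z.1 (b z.2) :=
  (measurable_from_prod_countable_left (f := fun p : R × Fin N => w p.1 p.2) hw).comp
    (measurable_fst.prodMk (hb.comp measurable_snd))

namespace IsColumnSimple

variable {G H : R × C → ℝ} {S T : Set (R × C)}

lemma measurable (hG : IsColumnSimple G) : Measurable G := by
  obtain ⟨N, b, w, hb, hw, rfl⟩ := hG
  exact measurable_comp_fin hb hw

lemma map₂ (hG : IsColumnSimple G) (hH : IsColumnSimple H) {φ : ℝ × ℝ → ℝ} (hφ : Measurable φ) :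
    IsColumnSimple fun z => φ (G z, H z) := by
  obtain ⟨N, b, w, hb, hw, rfl⟩ := hG
  obtain ⟨M, b', w', hb', hw', rfl⟩ := hH
  refine ⟨N * M, fun y => finProdFinEquiv (b y, b' y),
    fun x j => φ (w x (finProdFinEquiv.symm j).1, w' x (finProdFinEquiv.symm j).2),
    (measurable_of_finite _).comp (hb.prodMk hb'),
    fun j => hφ.comp ((hw _).prodMk (hw' _)), ?_⟩
  simp only [Equiv.symm_apply_apply]

lemma indicator_prod {s : Set R} {t : Set C} (hs : MeasurableSet s) (ht : MeasurableSet t) :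
    IsColumnSimple ((s ×ˢ t).indicator 1) := by
  classical
  refine ⟨2, fun y => if y ∈ t then 1 else 0, fun x j => s.indicator 1 x * (j : ℕ),
    .ite ht measurable_const measurable_const,
    fun j => (measurable_one.indicator hs).mul_const _, funext fun z => ?_⟩
  by_cases h₁ : z.1 ∈ s <;> by_cases h₂ : z.2 ∈ t <;> simp [Set.indicator, mem_prod, h₁, h₂]

lemma isSetRing : IsSetRing {S : Set (R × C) | IsColumnSimple (S.indicator 1)} where
  empty_mem := by simpa using indicator_prod (R := R) (C := C) .empty .empty
  union_mem S T hS hT := by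
    refine (congrArg IsColumnSimple (funext fun z => ?_)).mpr
      (hS.map₂ hT (φ := fun p => max p.1 p.2) (by fun_prop))
    by_cases h₁ : z ∈ S <;> by_cases h₂ : z ∈ T <;> simp [h₁, h₂]
  sdiff_mem S T hS hT := by
    refine (congrArg IsColumnSimple (funext fun z => ?_)).mpr
      (hS.map₂ hT (φ := fun p => p.1 * (1 - p.2)) (by fun_prop))
    by_cases h₁ : z ∈ S <;> by_cases h₂ : z ∈ T <;> simp [h₁, h₂]

end IsColumnSimple

lemma generateFrom_isColumnSimple_indicator :
    .generateFrom {S | IsColumnSimple (S.indicator 1)} =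
      (Prod.instMeasurableSpace : MeasurableSpace (R × C)) := by
  refine le_antisymm (MeasurableSpace.generateFrom_le fun S hS => ?_) ?_
  · exact (measurable_indicator_const_iff (1 : ℝ)).mp hS.measurable
  · rw [← generateFrom_prod]
    refine MeasurableSpace.generateFrom_mono ?_
    rintro - ⟨s, hs, t, ht, rfl⟩
    exact .indicator_prod hs ht

lemma exists_isColumnSimple_eLpNorm_sub_indicator_le {μ : Measure (R × C)} [IsFiniteMeasure μ]
    (c : ℝ) {s : Set (R × C)} (hs : MeasurableSet s) {ε : ENNReal} (hε : ε ≠ 0) :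
    ∃ G, eLpNorm (G - s.indicator fun _ => c) 1 μ ≤ ε ∧ IsColumnSimple G := by
  obtain ⟨η, hη, hηε⟩ := exists_eLpNorm_indicator_le (μ := μ) ENNReal.one_ne_top c hε
  have hcover : ∃ D : Set (Set (R × C)), D.Countable ∧
      D ⊆ {S | IsColumnSimple (S.indicator 1)} ∧ μ (⋃₀ D)ᶜ = 0 :=
    ⟨{univ}, countable_singleton _, singleton_subset_iff.mpr <| by
      simpa only [mem_ofPred, univ_prod_univ] using
        IsColumnSimple.indicator_prod (R := R) (C := C) .univ .univ, by simp⟩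
  obtain ⟨t, ht, hts⟩ := exists_measure_symmDiff_lt_of_generateFrom_isSetRing
    IsColumnSimple.isSetRing hcover generateFrom_isColumnSimple_indicator.symm hs
    (ENNReal.coe_pos.mpr hη)
  refine ⟨t.indicator fun _ => c, ?_, ?_⟩
  · rw [eLpNorm_indicator_sub_indicator]
    exact hηε _ hts.le
  · refine (congrArg IsColumnSimple (funext fun z => ?_)).mpr
      (ht.map₂ ht (φ := fun p => c * p.1) (by fun_prop))
    by_cases hz : z ∈ t <;> simp [hz]

lemma exists_isColumnSimple_integral_abs_sub_le {μ : Measure (R × C)} [IsFiniteMeasure μ]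
    {F : R × C → ℝ} (hF : Integrable F μ) {ε : ℝ} (hε : 0 < ε) :
    ∃ G, IsColumnSimple G ∧ Integrable G μ ∧ ∫ z, |F z - G z| ∂μ ≤ ε := by
  obtain ⟨G, hFG, hG⟩ := (memLp_one_iff_integrable.mpr hF).induction_dense ENNReal.one_ne_top
    IsColumnSimple (fun c s hs _ ε hε => exists_isColumnSimple_eLpNorm_sub_indicator_le c hs hε)
    (fun f g hf hg => hf.map₂ hg measurable_add)
    (fun f hf => hf.measurable.aestronglyMeasurable) (ENNReal.ofReal_pos.mpr hε).ne'
  have hFGi : Integrable (F - G) μ := memLp_one_iff_integrable.mp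
    ⟨hF.aestronglyMeasurable.sub hG.measurable.aestronglyMeasurable,
      hFG.trans_lt ENNReal.ofReal_lt_top⟩
  refine ⟨G, hG, by simpa only [sub_sub_cancel] using hF.sub hFGi, ?_⟩
  rwa [eLpNorm_one_eq_lintegral_enorm, ← ofReal_integral_norm_eq_lintegral_enorm hFGi,
    ENNReal.ofReal_le_ofReal_iff hε.le] at hFG

end ColumnSimple

section SampleAverage

variable {C A L : Type*} [MeasurableSpace C] [Fintype A] [Fintype L] [DecidableEq L]
  {κ : Measure C} [IsProbabilityMeasure κ] {w Y : C → A → ℝ} {M : ℝ}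

lemma integral_sum_prod_eq_prod (f : L → C → A → ℝ) :
    ∫ c : L → C, ∑ t : L → A, ∏ l, f l (c l) (t l) ∂Measure.pi (fun _ => κ) =
      ∏ l, ∫ y, ∑ a, f l y a ∂κ := by
  rw [← integral_fintype_prod_eq_prod fun l y => ∑ a, f l y a]
  simp only [Finset.prod_univ_sum, Fintype.piFinset_univ]

lemma IsStochastic.sample (hw : IsStochastic w) :
    IsStochastic fun (c : L → C) (t : L → A) => ∏ l, w (c l) (t l) := by
  exact .pi fun l => hw.comp (measurable_pi_apply l)

lemma integrable_sum_mul {X T : Type*} [MeasurableSpace X] [Fintype T] {α : Measure X}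
    [IsFiniteMeasure α] {a Z : X → T → ℝ} (ha : IsStochastic a) (hZ : ∀ t, Measurable (Z · t))
    (hZM : ∀ x t, |Z x t| ≤ M) : Integrable (fun x => ∑ t, a x t * Z x t) α :=
  integrable_finsetSum _ fun t _ =>
    (ha.integrable t).mul_bdd (c := M) (hZ t).aestronglyMeasurable (.of_forall (hZM · t))

lemma IsStochastic.sum_mul_le {X T : Type*} [MeasurableSpace X] [Fintype T] {a : X → T → ℝ}
    (ha : IsStochastic a) {x : X} {z : T → ℝ} (hz : ∀ t, z t ≤ M) : ∑ t, a x t * z t ≤ M :=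
  calc ∑ t, a x t * z t ≤ ∑ t, a x t * M :=
        Finset.sum_le_sum fun t _ => mul_le_mul_of_nonneg_left (hz t) (ha.nonneg x t)
    _ = M := by rw [← Finset.sum_mul, ha.sum_eq_one, one_mul]

lemma integral_sum_mul_sq_le (hw : IsStochastic w) (hY : ∀ a, Measurable (Y · a))
    (hYM : ∀ y a, |Y y a| ≤ M) (hY0 : ∫ y, ∑ a, w y a * Y y a ∂κ = 0) :
    ∫ c : L → C, ∑ t : L → A, (∏ l, w (c l) (t l)) * (∑ l, Y (c l) (t l)) ^ 2
      ∂Measure.pi (fun _ => κ) ≤ Fintype.card L * M ^ 2 := by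
  have hYl (l : L) (t : L → A) : Measurable fun c : L → C => Y (c l) (t l) :=
    (hY _).comp (measurable_pi_apply l)
  have hbound (i j : L) (c : L → C) (t : L → A) : |Y (c i) (t i) * Y (c j) (t j)| ≤ M ^ 2 := by
    rw [abs_mul, sq]
    exact mul_le_mul (hYM _ _) (hYM _ _) (abs_nonneg _) ((abs_nonneg _).trans (hYM (c i) (t i)))
  have hint (i j : L) : Integrable (fun c : L → C => ∑ t : L → A,
      (∏ l, w (c l) (t l)) * (Y (c i) (t i) * Y (c j) (t j))) (Measure.pi fun _ => κ) :=
    integrable_sum_mul hw.sample (fun t => (hYl i t).mul (hYl j t)) (hbound i j)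
  have hdiag (i : L) : ∫ c : L → C, ∑ t : L → A,
      (∏ l, w (c l) (t l)) * (Y (c i) (t i) * Y (c i) (t i)) ∂Measure.pi (fun _ => κ) ≤ M ^ 2 := by
    refine (integral_mono (hint i i) (integrable_const (M ^ 2)) fun c =>
      hw.sample.sum_mul_le fun t => (le_abs_self _).trans (hbound i i c t)).trans_eq ?_
    simp
  have hoff {i j : L} (hij : i ≠ j) : ∫ c : L → C, ∑ t : L → A,
      (∏ l, w (c l) (t l)) * (Y (c i) (t i) * Y (c j) (t j)) ∂Measure.pi (fun _ => κ) = 0 := by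
    have hprod (c : L → C) (t : L → A) :
        (∏ l, w (c l) (t l)) * (Y (c i) (t i) * Y (c j) (t j)) =
          ∏ l, w (c l) (t l) * ((if l = i then Y (c l) (t l) else 1) *
            if l = j then Y (c l) (t l) else 1) := by
      simp only [Finset.prod_mul_distrib, Finset.prod_ite_eq', Finset.mem_univ, if_true]
    simp only [hprod]
    rw [integral_sum_prod_eq_prod fun l y a => w y a * ((if l = i then Y y a else 1) *
      if l = j then Y y a else 1)]
    refine Finset.prod_eq_zero (Finset.mem_univ i) ?_
    simpa only [if_true, if_neg hij, mul_one] using hY0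
  calc _ = ∑ i, ∑ j, ∫ c : L → C, ∑ t : L → A,
        (∏ l, w (c l) (t l)) * (Y (c i) (t i) * Y (c j) (t j)) ∂Measure.pi (fun _ => κ) := by
        simp only [← integral_finsetSum _ fun j _ => hint _ j]
        rw [← integral_finsetSum _ fun i _ => integrable_finsetSum _ fun j _ => hint i j]
        refine integral_congr_ae (.of_forall fun c => ?_)
        simp only [sq, Finset.sum_mul_sum]
        simp only [Finset.mul_sum]
        rw [Finset.sum_comm]
        exact Finset.sum_congr rfl fun i _ => Finset.sum_comm
    _ ≤ ∑ _i : L, M ^ 2 := Finset.sum_le_sum fun i _ => by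
        rw [Finset.sum_eq_single i (fun j _ hj => hoff hj.symm) (by simp)]
        exact hdiag i
    _ = _ := by simp

lemma abs_le_add_sq_div {δ : ℝ} (hδ : 0 < δ) (x : ℝ) : |x| ≤ δ + x ^ 2 / δ := by
  have h : δ + x ^ 2 / δ - |x| = ((|x| - δ) ^ 2 + δ * |x|) / δ := by
    field_simp
    rw [← sq_abs x]
    ring
  rw [← sub_nonneg, h]
  positivity

lemma integral_sum_mul_abs_average_le [Nonempty L] (hw : IsStochastic w)
    (hY : ∀ a, Measurable (Y · a)) (hYM : ∀ y a, |Y y a| ≤ M)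
    (hY0 : ∫ y, ∑ a, w y a * Y y a ∂κ = 0) {δ : ℝ} (hδ : 0 < δ) :
    ∫ c : L → C, ∑ t : L → A, (∏ l, w (c l) (t l)) *
        |(Fintype.card L : ℝ)⁻¹ * ∑ l, Y (c l) (t l)| ∂Measure.pi (fun _ => κ) ≤
      δ + M ^ 2 / δ / Fintype.card L := by
  set N : ℝ := (Fintype.card L : ℝ)
  have hN : 0 < N := Nat.cast_pos.mpr Fintype.card_pos
  have hsum (c : L → C) (t : L → A) : |∑ l, Y (c l) (t l)| ≤ N * M := by
    refine (Finset.abs_sum_le_sum_abs _ _).trans ((Finset.sum_le_card_nsmul _ _ _ fun l _ =>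
      hYM (c l) (t l)).trans_eq ?_)
    rw [Finset.card_univ, nsmul_eq_mul]
  have hmeas (t : L → A) : Measurable fun c : L → C => ∑ l, Y (c l) (t l) :=
    Finset.measurable_fun_sum _ fun l _ => (hY (t l)).comp (measurable_pi_apply l)
  have hint : Integrable (fun c : L → C => ∑ t : L → A, (∏ l, w (c l) (t l)) *
      (∑ l, Y (c l) (t l)) ^ 2) (Measure.pi fun _ => κ) :=
    integrable_sum_mul hw.sample (fun t => (hmeas t).pow_const 2) (M := (N * M) ^ 2)
      fun c t => by
        rw [abs_pow]
        exact pow_le_pow_left₀ (abs_nonneg _) (hsum c t) 2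
  have hpoint (c : L → C) : ∑ t : L → A, (∏ l, w (c l) (t l)) * |N⁻¹ * ∑ l, Y (c l) (t l)| ≤
      δ + δ⁻¹ * N⁻¹ ^ 2 * ∑ t : L → A, (∏ l, w (c l) (t l)) * (∑ l, Y (c l) (t l)) ^ 2 := by
    refine (Finset.sum_le_sum fun t _ => mul_le_mul_of_nonneg_left
      (abs_le_add_sq_div hδ (N⁻¹ * ∑ l, Y (c l) (t l))) (hw.sample.nonneg c t)).trans_eq ?_
    simp only [mul_add, Finset.sum_add_distrib, ← Finset.sum_mul, hw.sample.sum_eq_one, one_mul]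
    rw [Finset.mul_sum]
    exact congrArg _ (Finset.sum_congr rfl fun t _ => by ring)
  calc _ ≤ ∫ c : L → C, (δ + δ⁻¹ * N⁻¹ ^ 2 * ∑ t : L → A, (∏ l, w (c l) (t l)) *
          (∑ l, Y (c l) (t l)) ^ 2) ∂Measure.pi (fun _ => κ) :=
        integral_mono_of_nonneg (.of_forall fun c => Finset.sum_nonneg fun t _ =>
          mul_nonneg (hw.sample.nonneg c t) (abs_nonneg _))
          ((integrable_const δ).add (hint.const_mul _)) (.of_forall hpoint)
    _ ≤ δ + δ⁻¹ * N⁻¹ ^ 2 * (N * M ^ 2) := by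
        rw [integral_add (integrable_const δ) (hint.const_mul _), integral_const_mul]
        simp only [integral_const, probReal_univ, one_smul]
        gcongr
        exact integral_sum_mul_sq_le hw hY hYM hY0
    _ = _ := by field_simp

lemma abs_integral_sum_mul_le (hw : IsStochastic w) (hYM : ∀ y a, |Y y a| ≤ M) :
    |∫ y, ∑ a, w y a * Y y a ∂κ| ≤ M := by
  refine (norm_integral_le_of_norm_le_const (f := fun y => ∑ a, w y a * Y y a) (C := M) <|
    .of_forall fun y => ?_).trans_eq (by simp)
  refine (Finset.abs_sum_le_sum_abs _ _).trans ?_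
  simp only [abs_mul, abs_of_nonneg (hw.nonneg y _)]
  exact hw.sum_mul_le (hYM y)

/-- A quantitative law of large numbers. -/
lemma integral_sum_mul_abs_sub_average_le [Nonempty L] (hw : IsStochastic w)
    (hY : ∀ a, Measurable (Y · a)) (hYM : ∀ y a, |Y y a| ≤ M) {δ : ℝ} (hδ : 0 < δ) :
    ∫ c : L → C, ∑ t : L → A, (∏ l, w (c l) (t l)) *
        |∫ y, ∑ a, w y a * Y y a ∂κ - (Fintype.card L : ℝ)⁻¹ * ∑ l, Y (c l) (t l)|
      ∂Measure.pi (fun _ => κ) ≤ δ + (2 * M) ^ 2 / δ / Fintype.card L := by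
  set m := ∫ y, ∑ a, w y a * Y y a ∂κ
  have hcenterM (y : C) (a : A) : |m - Y y a| ≤ 2 * M :=
    (abs_sub _ _).trans (by linarith [hYM y a, abs_integral_sum_mul_le (κ := κ) hw hYM])
  have hcenter : ∫ y, ∑ a, w y a * (m - Y y a) ∂κ = 0 := by
    simp only [mul_sub, Finset.sum_sub_distrib, ← Finset.sum_mul, hw.sum_eq_one, one_mul]
    rw [integral_sub (integrable_const m) (integrable_sum_mul hw hY hYM)]
    simp [m]
  have hmean (c : L → C) (t : L → A) : m - (Fintype.card L : ℝ)⁻¹ * ∑ l, Y (c l) (t l) =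
      (Fintype.card L : ℝ)⁻¹ * ∑ l, (m - Y (c l) (t l)) := by
    rw [Finset.sum_sub_distrib, Finset.sum_const, Finset.card_univ, nsmul_eq_mul, mul_sub,
      inv_mul_cancel_left₀ (Nat.cast_ne_zero.mpr Fintype.card_ne_zero)]
  simpa only [hmean] using
    integral_sum_mul_abs_average_le hw (fun a => (hY a).const_sub m) hcenterM hcenter hδ

end SampleAverage

section BlockKernel

variable {R C : Type*} [MeasurableSpace R] [MeasurableSpace C] {ρ : Measure R} {κ : Measure C}
  {N : ℕ} {b : C → Fin N}

/-- The integral kernel of the conditional expectation given the finite partition into the fibres of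
`b`; null fibres contribute the junk value `0`. -/
def blockKernel (κ : Measure C) (b : C → Fin N) (y y' : C) : ℝ :=
  if b y = b y' then (κ.real (b ⁻¹' {b y}))⁻¹ else 0

lemma measurable_blockKernel (hb : Measurable b) :
    Measurable fun p : C × C => blockKernel κ b p.1 p.2 :=
  (measurable_of_finite fun p : Fin N × Fin N =>
    if p.1 = p.2 then (κ.real (b ⁻¹' {p.1}))⁻¹ else 0).comp
      ((hb.comp measurable_fst).prodMk (hb.comp measurable_snd))

lemma blockKernel_comm (y y' : C) : blockKernel κ b y y' = blockKernel κ b y' y := by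
  by_cases h : b y = b y'
  · simp only [blockKernel, h]
  · simp only [blockKernel, h, Ne.symm h, if_false]

lemma blockKernel_nonneg (y y' : C) : 0 ≤ blockKernel κ b y y' := by
  rw [blockKernel]
  split_ifs <;> positivity

lemma abs_blockKernel_le (y y' : C) :
    |blockKernel κ b y y'| ≤ ∑ j, (κ.real (b ⁻¹' {j}))⁻¹ := by
  have hnonneg (j : Fin N) : 0 ≤ (κ.real (b ⁻¹' {j}))⁻¹ := by positivity
  rw [abs_of_nonneg (blockKernel_nonneg y y'), blockKernel]
  split_ifs
  · exact Finset.single_le_sum (f := fun j => (κ.real (b ⁻¹' {j}))⁻¹)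
      (fun j _ => hnonneg j) (Finset.mem_univ (b y))
  · exact Finset.sum_nonneg fun j _ => hnonneg j

lemma integral_mul_blockKernel (hb : Measurable b) (g : Fin N → ℝ) (y : C) :
    ∫ y', g (b y') * blockKernel κ b y y' ∂κ =
      κ.real (b ⁻¹' {b y}) * (κ.real (b ⁻¹' {b y}))⁻¹ * g (b y) := by
  have hind : (fun y' => g (b y') * blockKernel κ b y y') = (b ⁻¹' {b y}).indicator
      fun _ => g (b y) * (κ.real (b ⁻¹' {b y}))⁻¹ := by
    funext y'
    by_cases h : b y' = b y
    · rw [indicator_of_mem (show y' ∈ b ⁻¹' {b y} from h), blockKernel, if_pos h.symm, h]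
    · rw [indicator_of_notMem (show y' ∉ b ⁻¹' {b y} from h), blockKernel, if_neg (Ne.symm h),
        mul_zero]
  rw [hind, integral_indicator_const _ (hb (measurableSet_singleton _)), smul_eq_mul]
  ring

lemma integral_blockKernel_left_le_one (hb : Measurable b) (y' : C) :
    ∫ y, blockKernel κ b y y' ∂κ ≤ 1 := by
  have h := integral_mul_blockKernel (κ := κ) hb 1 y'
  simp only [Pi.one_apply, one_mul, mul_one] at h
  simp only [blockKernel_comm _ y', h]
  exact mul_inv_le_one

lemma ae_integral_mul_blockKernel [IsFiniteMeasure κ] (hb : Measurable b) :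
    ∀ᵐ y ∂κ, ∀ g : Fin N → ℝ, ∫ y', g (b y') * blockKernel κ b y y' ∂κ = g (b y) := by
  have hnull : ∀ᵐ y ∂κ, ∀ j, κ.real (b ⁻¹' {j}) = 0 → b y ≠ j := ae_all_iff.mpr fun j => by
    by_cases hj : κ.real (b ⁻¹' {j}) = 0
    · filter_upwards [measure_eq_zero_iff_ae_notMem.mp ((measureReal_eq_zero_iff).mp hj)]
        with y hy _ using hy
    · exact .of_forall fun y h0 => absurd h0 hj
  filter_upwards [hnull] with y hy g
  rw [integral_mul_blockKernel hb, mul_inv_cancel₀ fun h0 => hy _ h0 rfl, one_mul]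

lemma measurePreserving_prod_swap_right (ρ : Measure R) (κ : Measure C) [SFinite ρ] [SFinite κ] :
    MeasurePreserving (fun p : (R × C) × C => ((p.1.1, p.2), p.1.2))
      ((ρ.prod κ).prod κ) ((ρ.prod κ).prod κ) :=
  (measurePreserving_prodAssoc ρ κ κ).symm.comp
    (((MeasurePreserving.id ρ).prod Measure.measurePreserving_swap).comp
      (measurePreserving_prodAssoc ρ κ κ))

section KernelOperator

variable [SFinite ρ] [IsFiniteMeasure κ] {K : C → C → ℝ} {M : ℝ} {g : R × C → ℝ}

lemma integrable_mul_kernel (hK : Measurable fun p : C × C => K p.1 p.2)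
    (hKM : ∀ y y', |K y y'| ≤ M) (hg : Integrable g (ρ.prod κ)) :
    Integrable (fun p : (R × C) × C => g (p.1.1, p.2) * K p.1.2 p.2) ((ρ.prod κ).prod κ) :=
  ((measurePreserving_prod_swap_right ρ κ).integrable_comp_of_integrable
      (hg.comp_fst κ)).mul_bdd (c := M)
    (hK.comp ((measurable_snd.comp measurable_fst).prodMk measurable_snd)).aestronglyMeasurable
    (.of_forall fun _ => hKM _ _)

lemma integral_integral_mul_le (hK : Measurable fun p : C × C => K p.1 p.2)
    (hKM : ∀ y y', |K y y'| ≤ M) (hK1 : ∀ y', ∫ y, K y y' ∂κ ≤ 1)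
    (hg : Integrable g (ρ.prod κ)) (hg0 : ∀ z, 0 ≤ g z) :
    ∫ z, ∫ y', g (z.1, y') * K z.2 y' ∂κ ∂ρ.prod κ ≤ ∫ z, g z ∂ρ.prod κ := by
  have hmp := measurePreserving_prod_swap_right ρ κ
  have hint : Integrable (fun p : (R × C) × C => g p.1 * K p.2 p.1.2) ((ρ.prod κ).prod κ) :=
    hmp.integrable_comp_of_integrable (integrable_mul_kernel hK hKM hg)
  calc _ = ∫ p : (R × C) × C, g (p.1.1, p.2) * K p.1.2 p.2 ∂(ρ.prod κ).prod κ :=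
        (integral_prod _ (integrable_mul_kernel hK hKM hg)).symm
    _ = ∫ p : (R × C) × C, g p.1 * K p.2 p.1.2 ∂(ρ.prod κ).prod κ := by
        conv_rhs => rw [← hmp.map_eq]
        exact (integral_map hmp.aemeasurable
          (by rw [hmp.map_eq]; exact hint.aestronglyMeasurable)).symm
    _ = ∫ z, g z * ∫ y, K y z.2 ∂κ ∂ρ.prod κ := by
        rw [integral_prod _ hint]
        simp only [integral_const_mul]
    _ ≤ _ := by
        refine integral_mono_ae ?_ hg (.of_forall fun z =>
          mul_le_of_le_one_right (hg0 z) (hK1 z.2))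
        simpa only [integral_const_mul] using hint.integral_prod_left

end KernelOperator

lemma exists_kernel_integral_abs_sub_le [IsFiniteMeasure ρ] [IsFiniteMeasure κ] {F : R × C → ℝ}
    (hF : Integrable F (ρ.prod κ)) {ε : ℝ} (hε : 0 < ε) :
    ∃ (K : C → C → ℝ) (M : ℝ), (Measurable fun p : C × C => K p.1 p.2) ∧ (∀ y y', |K y y'| ≤ M) ∧
      ∫ z, |F z - ∫ y', F (z.1, y') * K z.2 y' ∂κ| ∂ρ.prod κ ≤ ε := by
  obtain ⟨_, ⟨N, b, w, hb, -, rfl⟩, hGi, hG⟩ :=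
    exists_isColumnSimple_integral_abs_sub_le hF (half_pos hε)
  set G : R × C → ℝ := fun z => w z.1 (b z.2)
  set K := blockKernel κ b with hKdef
  have hK := measurable_blockKernel (κ := κ) hb
  have hKM := abs_blockKernel_le (κ := κ) (b := b)
  refine ⟨K, _, hK, hKM, ?_⟩
  have hD : Integrable (fun z => |F z - G z|) (ρ.prod κ) := (hF.sub hGi).abs
  have hslice {H : R × C → ℝ} (hH : Integrable H (ρ.prod κ)) : ∀ᵐ z ∂ρ.prod κ,
      Integrable (fun y' => H (z.1, y') * K z.2 y') κ := by
    filter_upwards [Measure.quasiMeasurePreserving_fst.ae hH.prod_right_ae] with z hz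
    exact hz.mul_bdd (hK.comp measurable_prodMk_left).aestronglyMeasurable (.of_forall (hKM z.2))
  have hpoint : ∀ᵐ z ∂ρ.prod κ, |F z - ∫ y', F (z.1, y') * K z.2 y' ∂κ| ≤
      |F z - G z| + ∫ y', |F (z.1, y') - G (z.1, y')| * K z.2 y' ∂κ := by
    filter_upwards [hslice hF, hslice hGi,
      Measure.quasiMeasurePreserving_snd.ae (ae_integral_mul_blockKernel hb)] with z hFz hGz hz
    have hdiff : G z - ∫ y', F (z.1, y') * K z.2 y' ∂κ =
        -∫ y', (F (z.1, y') - G (z.1, y')) * K z.2 y' ∂κ := by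
      have hGz_eq : ∫ y', G (z.1, y') * K z.2 y' ∂κ = G z := hz (w z.1)
      simp only [sub_mul]
      rw [integral_sub hFz hGz, hGz_eq, neg_sub]
    refine (abs_sub_le _ (G z) _).trans (add_le_add_right ?_ _)
    rw [hdiff, abs_neg]
    refine (abs_integral_le_integral_abs).trans_eq (integral_congr_ae (.of_forall fun y' => ?_))
    simp only [abs_mul, abs_of_nonneg (blockKernel_nonneg _ _), hKdef]
  have hDK := (integrable_mul_kernel hK hKM hD).integral_prod_left
  calc _ ≤ ∫ z, (|F z - G z| + ∫ y', |F (z.1, y') - G (z.1, y')| * K z.2 y' ∂κ) ∂ρ.prod κ :=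
        integral_mono_of_nonneg (.of_forall fun _ => abs_nonneg _) (hD.add hDK) hpoint
    _ ≤ ε / 2 + ε / 2 := by
        rw [integral_add hD hDK]
        exact add_le_add hG ((integral_integral_mul_le hK hKM
          (integral_blockKernel_left_le_one hb) hD fun _ => abs_nonneg _).trans hG)
    _ = ε := add_halves ε

end BlockKernel

section Prediction

variable {R C A L : Type*} [MeasurableSpace R] [MeasurableSpace C] [Fintype A] [Fintype L]
  {ρ : Measure R} {κ : Measure C} {W : R × C → A → ℝ} {K : C → C → ℝ} {M : ℝ} {ω : A}

/-- The fractional partition of the rows according to the entries `t` they show in the sampled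
columns `c`. -/
def sampledPartition (W : R × C → A → ℝ) (c : L → C) (x : R) (t : L → A) : ℝ :=
  ∏ l, W (x, c l) (t l)

/-- An estimate of the probability of the entry `ω` in column `y` of a row that shows the entries
`t` in the columns `c`: the empirical version of the integral of `W (x, ·) ω` against `K y`. -/
def empiricalPrediction [DecidableEq A] (K : C → C → ℝ) (ω : A) (c : L → C) (t : L → A) (y : C) :
    ℝ :=
  (Fintype.card L : ℝ)⁻¹ * ∑ l, if t l = ω then K y (c l) else 0

/-- The mean error of the prediction of the entry `ω` in a random column from the entries of a
random row in the sampled columns `c`. -/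
def predictionError [DecidableEq L] [DecidableEq A] (ρ : Measure R) (κ : Measure C)
    (W : R × C → A → ℝ) (K : C → C → ℝ) (ω : A) (c : L → C) : ℝ :=
  ∫ z, ∑ t : L → A, sampledPartition W c z.1 t * |W z ω - empiricalPrediction K ω c t z.2|
    ∂ρ.prod κ

/-- The mean distance between the two rows drawn from a coupling `γ`. -/
def rowDiscrepancy (γ : Measure (R × R)) (κ : Measure C) (F : R × C → ℝ) : ℝ :=
  ∫ z, |F (z.1.1, z.2) - F (z.1.2, z.2)| ∂γ.prod κ

variable [DecidableEq L]

lemma isStochastic_sampledPartition (hW : IsStochastic W) (c : L → C) :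
    IsStochastic (sampledPartition W c) :=
  .pi fun l => hW.comp (f := fun x => (x, c l)) (by fun_prop)

lemma isStochastic_sampledPartition_uncurry (hW : IsStochastic W) :
    IsStochastic fun p : (L → C) × R => sampledPartition W p.1 p.2 :=
  .pi fun l => hW.comp (f := fun p : (L → C) × R => (p.2, p.1 l)) (by fun_prop)

variable [DecidableEq A]

omit [MeasurableSpace C] [Fintype A] [DecidableEq L] in
lemma abs_empiricalPrediction_le [Nonempty L] (hKM : ∀ y y', |K y y'| ≤ M) (c : L → C) (t : L → A)
    (y : C) : |empiricalPrediction K ω c t y| ≤ M := by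
  have hM : 0 ≤ M := (abs_nonneg _).trans (hKM y y)
  have hcard : (0 : ℝ) < Fintype.card L := Nat.cast_pos.mpr Fintype.card_pos
  rw [empiricalPrediction, abs_mul, abs_of_nonneg (inv_nonneg.mpr hcard.le), inv_mul_le_iff₀ hcard]
  refine (Finset.abs_sum_le_sum_abs _ _).trans
    ((Finset.sum_le_card_nsmul _ _ M fun l _ => ?_).trans_eq (by simp))
  split_ifs
  · exact hKM _ _
  · simpa using hM

omit [Fintype A] [DecidableEq L] in
lemma measurable_empiricalPrediction (hK : Measurable fun p : C × C => K p.1 p.2) (t : L → A) :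
    Measurable fun p : (L → C) × C => empiricalPrediction K ω p.1 t p.2 := by
  refine (Finset.measurable_fun_sum _ fun l _ => ?_).const_mul _
  split_ifs
  · exact hK.comp (f := fun p : (L → C) × C => (p.2, p.1 l)) (by fun_prop)
  · exact measurable_const

omit [DecidableEq L] in
lemma abs_abs_sub_empiricalPrediction_le [Nonempty L] (hW : IsStochastic W)
    (hKM : ∀ y y', |K y y'| ≤ M) (z : R × C) (c : L → C) (t : L → A) :
    |(|W z ω - empiricalPrediction K ω c t z.2|)| ≤ 1 + M := by
  rw [abs_abs]
  exact (abs_sub _ _).trans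
    (add_le_add (hW.abs_le_one _ _) (abs_empiricalPrediction_le hKM _ _ _))

lemma integrable_predictionError [Nonempty L] [IsFiniteMeasure ρ] [IsFiniteMeasure κ]
    (hW : IsStochastic W) (hK : Measurable fun p : C × C => K p.1 p.2) (hKM : ∀ y y', |K y y'| ≤ M)
    (ν : Measure (L → C)) [IsFiniteMeasure ν] :
    Integrable (fun p : (L → C) × (R × C) => ∑ t : L → A, sampledPartition W p.1 p.2.1 t *
      |W p.2 ω - empiricalPrediction K ω p.1 t p.2.2|) (ν.prod (ρ.prod κ)) := by
  refine integrable_sum_mul (M := 1 + M) ((isStochastic_sampledPartition_uncurry hW).comp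
    (f := fun p : (L → C) × (R × C) => (p.1, p.2.1)) (by fun_prop)) (fun t => ?_)
    fun p t => abs_abs_sub_empiricalPrediction_le hW hKM p.2 p.1 t
  exact (((hW.measurable ω).comp measurable_snd).sub ((measurable_empiricalPrediction hK t).comp
    (f := fun p : (L → C) × (R × C) => (p.1, p.2.2)) (by fun_prop))).abs

lemma integral_sampledPartition_mul_le [Nonempty L] [IsProbabilityMeasure κ] (hW : IsStochastic W)
    (hK : Measurable fun p : C × C => K p.1 p.2) (hKM : ∀ y y', |K y y'| ≤ M) {δ : ℝ} (hδ : 0 < δ)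
    (z : R × C) :
    ∫ c : L → C, ∑ t, sampledPartition W c z.1 t * |W z ω - empiricalPrediction K ω c t z.2|
        ∂Measure.pi (fun _ => κ) ≤
      |W z ω - ∫ y, W (z.1, y) ω * K z.2 y ∂κ| + (δ + (2 * M) ^ 2 / δ / Fintype.card L) := by
  set Y : C → A → ℝ := fun y a => if a = ω then K z.2 y else 0
  have hrow : IsStochastic fun y => W (z.1, y) := hW.comp measurable_prodMk_left
  have hM : 0 ≤ M := (abs_nonneg _).trans (hKM z.2 z.2)
  have hY (a : A) : Measurable (Y · a) := by
    by_cases ha : a = ω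
    · simp only [Y, ha, if_true]
      exact hK.comp measurable_prodMk_left
    · simpa only [Y, ha, if_false] using measurable_const
  have hYM (y : C) (a : A) : |Y y a| ≤ M := by
    by_cases ha : a = ω
    · simpa only [Y, ha, if_true] using hKM z.2 y
    · simpa only [Y, ha, if_false, abs_zero] using hM
  have hlaw := integral_sum_mul_abs_sub_average_le (L := L) (κ := κ) hrow hY hYM hδ
  simp only [Y, mul_ite, mul_zero, Finset.sum_ite_eq', Finset.mem_univ, if_true] at hlaw
  set m := ∫ y, W (z.1, y) ω * K z.2 y ∂κ
  have hpred (t : L → A) : Measurable fun c : L → C => |m - empiricalPrediction K ω c t z.2| :=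
    (((measurable_empiricalPrediction hK t).comp
      (f := fun c : L → C => (c, z.2)) (by fun_prop)).const_sub m).abs
  have hint : Integrable (fun c : L → C => ∑ t : L → A, sampledPartition W c z.1 t *
      |m - empiricalPrediction K ω c t z.2|) (Measure.pi fun _ => κ) :=
    integrable_sum_mul (M := |m| + M) hrow.sample hpred fun c t => by
      rw [abs_abs]
      exact (abs_sub _ _).trans (add_le_add_right (abs_empiricalPrediction_le hKM _ _ _) _)
  calc _ ≤ ∫ c : L → C, (|W z ω - m| + ∑ t : L → A, sampledPartition W c z.1 t *
          |m - empiricalPrediction K ω c t z.2|) ∂Measure.pi (fun _ => κ) := by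
        refine integral_mono_of_nonneg (.of_forall fun c => Finset.sum_nonneg fun t _ => mul_nonneg
          (hrow.sample.nonneg c t) (abs_nonneg _)) ((integrable_const _).add hint)
          (.of_forall fun c => ?_)
        refine (Finset.sum_le_sum fun t _ => mul_le_mul_of_nonneg_left (abs_sub_le _ m _)
          (hrow.sample.nonneg c t)).trans_eq ?_
        simp only [mul_add, Finset.sum_add_distrib, ← Finset.sum_mul, hrow.sample.sum_eq_one,
          one_mul, sampledPartition]
    _ ≤ _ := by
        rw [integral_add (integrable_const _) hint, integral_const, probReal_univ, one_smul]
        exact add_le_add_right hlaw _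

lemma integral_predictionError_le [Nonempty L] [IsProbabilityMeasure ρ] [IsProbabilityMeasure κ]
    (hW : IsStochastic W) (hK : Measurable fun p : C × C => K p.1 p.2) (hKM : ∀ y y', |K y y'| ≤ M)
    {δ : ℝ} (hδ : 0 < δ) :
    ∫ c : L → C, predictionError ρ κ W K ω c ∂Measure.pi (fun _ => κ) ≤
      ∫ z, |W z ω - ∫ y, W (z.1, y) ω * K z.2 y ∂κ| ∂ρ.prod κ +
        (δ + (2 * M) ^ 2 / δ / Fintype.card L) := by
  have hint := integrable_predictionError (ω := ω) (ρ := ρ) (κ := κ) hW hK hKM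
    (Measure.pi fun _ : L => κ)
  have hWK : Integrable (fun z => W z ω - ∫ y, W (z.1, y) ω * K z.2 y ∂κ) (ρ.prod κ) :=
    (hW.integrable ω).sub (integrable_mul_kernel hK hKM (hW.integrable ω)).integral_prod_left
  rw [show ∫ c : L → C, predictionError ρ κ W K ω c ∂Measure.pi (fun _ => κ) = _ from
    integral_integral_swap hint]
  refine (integral_mono hint.integral_prod_right (hWK.abs.add (integrable_const _))
    (integral_sampledPartition_mul_le hW hK hKM hδ)).trans_eq ?_
  rw [integral_add' hWK.abs (integrable_const _)]
  simp

lemma exists_eventually_integral_predictionError_le [IsProbabilityMeasure ρ]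
    [IsProbabilityMeasure κ] (hW : IsStochastic W) (ω : A) {ε : ℝ} (hε : 0 < ε) :
    ∃ (K : C → C → ℝ) (M : ℝ), (Measurable fun p : C × C => K p.1 p.2) ∧ (∀ y y', |K y y'| ≤ M) ∧
      ∀ᶠ k : ℕ in atTop,
        ∫ c : Fin k → C, predictionError ρ κ W K ω c ∂Measure.pi (fun _ => κ) ≤ ε := by
  have hε3 : 0 < ε / 3 := by positivity
  obtain ⟨K, M, hK, hKM, hKW⟩ :=
    exists_kernel_integral_abs_sub_le (hW.integrable (α := ρ.prod κ) ω) hε3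
  refine ⟨K, M, hK, hKM, ?_⟩
  filter_upwards [eventually_gt_atTop 0, (tendsto_const_div_atTop_nhds_zero_nat
    ((2 * M) ^ 2 / (ε / 3))).eventually_le_const hε3] with k hk hkε
  have : Nonempty (Fin k) := Fin.pos_iff_nonempty.mp hk
  refine (integral_predictionError_le hW hK hKM hε3).trans ?_
  rw [Fintype.card_fin]
  linarith

omit [DecidableEq L] in
lemma rowDiscrepancy_nonneg (γ : Measure (R × R)) (κ : Measure C) (F : R × C → ℝ) :
    0 ≤ rowDiscrepancy γ κ F := integral_nonneg fun _ => abs_nonneg _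

lemma rowDiscrepancy_matchedCoupling_le [Nonempty L] [IsProbabilityMeasure ρ]
    [IsProbabilityMeasure κ] (hW : IsStochastic W) (hK : Measurable fun p : C × C => K p.1 p.2)
    (hKM : ∀ y y', |K y y'| ≤ M) (c : L → C) :
    rowDiscrepancy (matchedCoupling ρ (sampledPartition W c) ρ (sampledPartition W c)) κ
      (fun z => W z ω) ≤ 2 * predictionError ρ κ W K ω c := by
  set a := sampledPartition W c
  have ha : IsStochastic a := isStochastic_sampledPartition hW c
  have := isProbabilityMeasure_matchedCoupling (α := ρ) (α' := ρ) ha ha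
  have hF : Measurable fun z => W z ω := hW.measurable ω
  have hdiff : Measurable fun z : (R × R) × C => |W (z.1.1, z.2) ω - W (z.1.2, z.2) ω| :=
    ((hF.comp (f := fun z : (R × R) × C => (z.1.1, z.2)) (by fun_prop)).sub
      (hF.comp (f := fun z : (R × R) × C => (z.1.2, z.2)) (by fun_prop))).abs
  have hdiff_le (z : (R × R) × C) : |(|W (z.1.1, z.2) ω - W (z.1.2, z.2) ω|)| ≤ 1 := by
    rw [abs_abs]
    exact hW.abs_sub_le_one hW _ _ _
  set err : (L → A) → R × C → ℝ := fun t z => |W z ω - empiricalPrediction K ω c t z.2|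
  have herr (t : L → A) : Measurable (err t) := (hF.sub ((measurable_empiricalPrediction hK t).comp
    (f := fun z : R × C => (c, z.2)) (by fun_prop))).abs
  have herr_le (z : R × C) (t : L → A) : |err t z| ≤ 1 + M :=
    abs_abs_sub_empiricalPrediction_le hW hKM z c t
  have hint : Integrable (fun z : R × C => ∑ t, a z.1 t * err t z) (ρ.prod κ) :=
    integrable_sum_mul (ha.comp measurable_fst) herr herr_le
  have hslice (y : C) (t : L → A) : Integrable (fun x => a x t * err t (x, y)) ρ :=
    (ha.integrable t).mul_bdd (c := 1 + M) ((herr t).comp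
      measurable_prodMk_right).aestronglyMeasurable (.of_forall fun x => herr_le (x, y) t)
  have hdiff_int := integrable_of_abs_le (γ := (matchedCoupling ρ a ρ a).prod κ) hdiff hdiff_le
  rw [rowDiscrepancy, predictionError, integral_prod_symm _ hdiff_int, integral_prod_symm _ hint,
    ← integral_const_mul]
  refine integral_mono hdiff_int.integral_prod_right (hint.integral_prod_right.const_mul 2)
    fun y => ?_
  simp only [integral_finsetSum _ fun t _ => hslice y t]
  exact integral_matchedCoupling_self_abs_sub_le ha (hF.comp measurable_prodMk_right)
    (fun x => hW.abs_le_one (x, y) ω)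
    fun t => empiricalPrediction K ω c t y

end Prediction

section SelfCoupling

variable {R C A L L' : Type*} [MeasurableSpace R] [MeasurableSpace C] [Fintype A]
  {ρ : Measure R} {κ : Measure C} {W : R × C → A → ℝ}

lemma fourCycle_kernelDiff_self_le [SFinite ρ] [SFinite κ] {γ : Measure (R × R)}
    {π : Measure (C × C)} [IsProbabilityMeasure γ] [IsProbabilityMeasure π]
    (hγ : γ.map Prod.snd = ρ) (hπ : π.map Prod.fst = κ) (hW : IsStochastic W) (ω : A) :
    fourCycle γ π (kernelDiff W W ω) ≤
      rowDiscrepancy γ κ (fun z => W z ω) + rowDiscrepancy π ρ (fun z => W z.swap ω) := by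
  have hF : Measurable fun z => W z ω := hW.measurable ω
  have hF_le {z z' : R × C} : |W z ω - W z' ω| ≤ 1 := hW.abs_sub_le_one hW z z' ω
  have hD : Measurable (kernelDiff W W ω) := measurable_kernelDiff hW hW ω
  have hrow : Measurable fun z : (R × R) × C => |W (z.1.1, z.2) ω - W (z.1.2, z.2) ω| :=
    ((hF.comp (f := fun z : (R × R) × C => (z.1.1, z.2)) (by fun_prop)).sub
      (hF.comp (f := fun z : (R × R) × C => (z.1.2, z.2)) (by fun_prop))).abs
  have hcol : Measurable fun z : (C × C) × R => |W (z.2, z.1.1) ω - W (z.2, z.1.2) ω| :=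
    ((hF.comp (f := fun z : (C × C) × R => (z.2, z.1.1)) (by fun_prop)).sub
      (hF.comp (f := fun z : (C × C) × R => (z.2, z.1.2)) (by fun_prop))).abs
  have hmpr : MeasurePreserving (fun z : (R × R) × (C × C) => (z.1, z.2.1)) (γ.prod π)
      (γ.prod κ) := (MeasurePreserving.id γ).prod ⟨measurable_fst, hπ⟩
  have hmpc : MeasurePreserving (fun z : (R × R) × (C × C) => (z.2, z.1.2)) (γ.prod π)
      (π.prod ρ) := Measure.measurePreserving_swap.comp
        ((MeasurePreserving.mk measurable_snd hγ).prod (.id π))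
  have hrow_int : Integrable (fun z : (R × R) × (C × C) =>
      |W (z.1.1, z.2.1) ω - W (z.1.2, z.2.1) ω|) (γ.prod π) :=
    integrable_of_abs_le (hrow.comp hmpr.measurable) fun _ => (abs_abs _).trans_le hF_le
  have hcol_int : Integrable (fun z : (R × R) × (C × C) =>
      |W (z.1.2, z.2.1) ω - W (z.1.2, z.2.2) ω|) (γ.prod π) :=
    integrable_of_abs_le (hcol.comp hmpc.measurable) fun _ => (abs_abs _).trans_le hF_le
  calc _ ≤ ∫ z, |kernelDiff W W ω z| ∂γ.prod π := fourCycle_le_integral_abs hD fun _ => hF_le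
    _ ≤ ∫ z : (R × R) × (C × C), (|W (z.1.1, z.2.1) ω - W (z.1.2, z.2.1) ω| +
          |W (z.1.2, z.2.1) ω - W (z.1.2, z.2.2) ω|) ∂γ.prod π :=
        integral_mono (integrable_of_abs_le hD fun _ => hF_le).abs (hrow_int.add hcol_int)
          fun _ => abs_sub_le _ _ _
    _ = _ := by
        rw [integral_add hrow_int hcol_int, rowDiscrepancy, rowDiscrepancy, ← hmpr.map_eq,
          ← hmpc.map_eq, integral_map hmpr.aemeasurable hrow.aestronglyMeasurable]
        exact congrArg _ (integral_map hmpc.aemeasurable hcol.aestronglyMeasurable).symm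

/-- The four-cycle density of the difference of two copies of `W`, coupled according to the
entries they show in the rows and columns sampled by `θ`. -/
def selfFourCycle [Fintype L] [Fintype L'] [DecidableEq L] [DecidableEq L'] (ρ : Measure R)
    (κ : Measure C) (W : R × C → A → ℝ) (ω : A) (θ : (L → R) × (L' → C)) : ℝ :=
  fourCycle (matchedCoupling ρ (sampledPartition W θ.2) ρ (sampledPartition W θ.2))
    (matchedCoupling κ (sampledPartition (fun z => W z.swap) θ.1)
      κ (sampledPartition (fun z => W z.swap) θ.1))
    (kernelDiff W W ω)

variable [IsProbabilityMeasure ρ] [IsProbabilityMeasure κ]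

lemma eventually_exists_selfFourCycle_le (hW : IsStochastic W) (ω : A) {ε : ℝ} (hε : 0 < ε) :
    ∀ᶠ k : ℕ in atTop, ∃ B : (Fin k → R) × (Fin k → C) → ℝ,
      Integrable B ((Measure.pi fun _ => ρ).prod (Measure.pi fun _ => κ)) ∧
      ∫ θ, B θ ∂(Measure.pi fun _ => ρ).prod (Measure.pi fun _ => κ) ≤ ε ∧
      ∀ θ, 0 ≤ B θ ∧ selfFourCycle ρ κ W ω θ ≤ B θ := by
  classical
  have hWs : IsStochastic fun z : C × R => W z.swap := hW.comp measurable_swap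
  obtain ⟨K, M, hK, hKM, hrow⟩ := exists_eventually_integral_predictionError_le (ρ := ρ) (κ := κ)
    hW ω (ε := ε / 4) (by positivity)
  obtain ⟨K', M', hK', hKM', hcol⟩ := exists_eventually_integral_predictionError_le (ρ := κ)
    (κ := ρ) hWs ω (ε := ε / 4) (by positivity)
  filter_upwards [eventually_gt_atTop 0, hrow, hcol] with k hk hrow hcol
  have : Nonempty (Fin k) := Fin.pos_iff_nonempty.mp hk
  have hrow_int : Integrable (predictionError ρ κ W K ω) (Measure.pi fun _ : Fin k => κ) :=
    (integrable_predictionError hW hK hKM _).integral_prod_left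
  have hcol_int : Integrable (predictionError κ ρ (fun z => W z.swap) K' ω)
      (Measure.pi fun _ : Fin k => ρ) :=
    (integrable_predictionError hWs hK' hKM' _).integral_prod_left
  refine ⟨fun θ => 2 * predictionError ρ κ W K ω θ.2 +
    2 * predictionError κ ρ (fun z => W z.swap) K' ω θ.1,
    ((hrow_int.comp_snd _).const_mul 2).add ((hcol_int.comp_fst _).const_mul 2), ?_, fun θ => ?_⟩
  · rw [integral_add ((hrow_int.comp_snd _).const_mul 2) ((hcol_int.comp_fst _).const_mul 2),
      integral_const_mul, integral_const_mul, integral_fun_snd (predictionError ρ κ W K ω),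
      integral_fun_fst (predictionError κ ρ (fun z => W z.swap) K' ω)]
    simp only [probReal_univ, one_smul]
    linarith
  have ha := isStochastic_sampledPartition hW θ.2
  have hb := isStochastic_sampledPartition hWs θ.1
  have := isProbabilityMeasure_matchedCoupling (α := ρ) (α' := ρ) ha ha
  have := isProbabilityMeasure_matchedCoupling (α := κ) (α' := κ) hb hb
  have hrow_le := rowDiscrepancy_matchedCoupling_le (ρ := ρ) (κ := κ) (ω := ω) hW hK hKM θ.2
  have hcol_le := rowDiscrepancy_matchedCoupling_le (ρ := κ) (κ := ρ) (ω := ω) hWs hK' hKM' θ.1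
  exact ⟨add_nonneg ((rowDiscrepancy_nonneg _ _ _).trans hrow_le)
    ((rowDiscrepancy_nonneg _ _ _).trans hcol_le),
    (fourCycle_kernelDiff_self_le (matchedCoupling_map_snd ha ha) (matchedCoupling_map_fst hb hb)
      hW ω).trans (add_le_add hrow_le hcol_le)⟩

lemma eventually_measure_selfFourCycle_le_pos (hW : IsStochastic W) {ε : ℝ} (hε : 0 < ε) :
    ∀ᶠ k : ℕ in atTop, 0 < ((Measure.pi fun _ : Fin k => ρ).prod (Measure.pi fun _ : Fin k => κ))
      {θ | ∀ ω, selfFourCycle ρ κ W ω θ ≤ ε} := by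
  have hη : 0 < ε / (Fintype.card A + 1) := by positivity
  filter_upwards [eventually_all.mpr fun ω =>
    eventually_exists_selfFourCycle_le (ρ := ρ) (κ := κ) hW ω hη] with k hk
  choose B hBi hB hB_le using hk
  have hsum : ∫ θ, ∑ ω, B ω θ ∂(Measure.pi fun _ => ρ).prod (Measure.pi fun _ => κ) ≤ ε := by
    rw [integral_finsetSum _ fun ω _ => hBi ω]
    refine (Finset.sum_le_card_nsmul _ _ _ fun ω _ => hB ω).trans ?_
    rw [Finset.card_univ, nsmul_eq_mul, mul_div_left_comm]
    exact mul_le_of_le_one_right hε.le (div_le_one_of_le₀ (by linarith) (by positivity))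
  refine (measure_le_integral_pos (integrable_finsetSum Finset.univ fun ω _ => hBi ω)).trans_le
    (measure_mono fun θ hθ ω => ?_)
  exact (hB_le ω θ).2.trans ((Finset.single_le_sum (f := fun ω => B ω θ)
    (fun ω _ => (hB_le ω θ).1) (Finset.mem_univ ω)).trans (le_trans hθ hsum))

end SelfCoupling

section SampledMoments

variable {R C A I J L L' : Type*} [MeasurableSpace R] [MeasurableSpace C] [Fintype I] [Fintype J]
  [Fintype L] [Fintype L'] {ρ : Measure R} {κ : Measure C} {W : R × C → A → ℝ}

/-- The probability of a labelling when the types of the rows and columns are the entries they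
show in the columns and rows sampled by `θ`. -/
def sampledLabelProb (ρ : Measure R) (κ : Measure C) (W : R × C → A → ℝ)
    (θ : (L → R) × (L' → C)) (ξ : Labelling I J (L' → A) (L → A) A) : ℝ :=
  labelProb ρ κ (sampledPartition W θ.2) (sampledPartition (fun z => W z.swap) θ.1) W ξ

/-- The integrand of `sampledLabelProb`, a function of the samples for the types and of those for
the array. -/
def sampledWeight (W : R × C → A → ℝ) (ξ : Labelling I J (L' → A) (L → A) A)
    (θ : (L → R) × (L' → C)) (z : (I → R) × (J → C)) : ℝ :=
  ξ.weight (fun i => sampledPartition W θ.2 (z.1 i))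
    (fun j => sampledPartition (fun z => W z.swap) θ.1 (z.2 j)) fun i j => W (z.1 i, z.2 j)

lemma sampledWeight_mem_Icc [Fintype A] (hW : IsStochastic W)
    (ξ : Labelling I J (L' → A) (L → A) A) (θ : (L → R) × (L' → C)) (z : (I → R) × (J → C)) :
    sampledWeight W ξ θ z ∈ Icc 0 1 :=
  unitInterval.mul_mem (unitInterval.mul_mem
    (unitInterval.submonoid.prod_mem fun _ _ =>
      unitInterval.submonoid.prod_mem fun _ _ => hW.mem_Icc _ _)
    (unitInterval.submonoid.prod_mem fun _ _ =>
      unitInterval.submonoid.prod_mem fun _ _ => hW.mem_Icc _ _))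
    (unitInterval.submonoid.prod_mem fun _ _ =>
      unitInterval.submonoid.prod_mem fun _ _ => hW.mem_Icc _ _)

lemma measurable_sampledWeight [Fintype A] (hW : IsStochastic W)
    (ξ : Labelling I J (L' → A) (L → A) A) :
    Measurable fun p : ((L → R) × (L' → C)) × ((I → R) × (J → C)) =>
      sampledWeight W ξ p.1 p.2 :=
  ((Finset.measurable_fun_prod _ fun _ _ => Finset.measurable_fun_prod _ fun _ _ =>
      (hW.measurable _).comp (by fun_prop)).mul
    (Finset.measurable_fun_prod _ fun _ _ => Finset.measurable_fun_prod _ fun _ _ =>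
      (hW.measurable _).comp (by fun_prop))).mul
    (Finset.measurable_fun_prod _ fun _ _ => Finset.measurable_fun_prod _ fun _ _ =>
      (hW.measurable _).comp (by fun_prop))

lemma measurable_sampledLabelProb [Fintype A] [IsProbabilityMeasure ρ] [IsProbabilityMeasure κ]
    (hW : IsStochastic W) (ξ : Labelling I J (L' → A) (L → A) A) :
    Measurable fun θ : (L → R) × (L' → C) => sampledLabelProb ρ κ W θ ξ :=
  (measurable_sampledWeight hW ξ).stronglyMeasurable.integral_prod_right'.measurable

lemma sampledLabelProb_mem_Icc [Fintype A] [IsProbabilityMeasure ρ] [IsProbabilityMeasure κ]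
    (hW : IsStochastic W) (θ : (L → R) × (L' → C)) (ξ : Labelling I J (L' → A) (L → A) A) :
    sampledLabelProb ρ κ W θ ξ ∈ Icc 0 1 :=
  ⟨integral_nonneg fun z => (sampledWeight_mem_Icc hW ξ θ z).1,
    (integral_mono_of_nonneg (.of_forall fun z => (sampledWeight_mem_Icc hW ξ θ z).1)
      (integrable_const 1) (.of_forall fun z => (sampledWeight_mem_Icc hW ξ θ z).2)).trans_eq
      (by rw [integral_const, probReal_univ, one_smul])⟩

lemma measurePreserving_arrowSumSigma (S I L : Type*) [Fintype S] [Fintype I] [Fintype L]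
    (ρ : Measure R) [IsProbabilityMeasure ρ] :
    MeasurePreserving (fun x : L ⊕ (Σ _ : S, I) → R =>
        (fun l => x (.inl l), fun s i => x (.inr ⟨s, i⟩)))
      (Measure.pi fun _ => ρ)
      ((Measure.pi fun _ : L => ρ).prod (Measure.pi fun _ : S => Measure.pi fun _ : I => ρ)) := by
  have hcurry : MeasurePreserving (MeasurableEquiv.piCurry fun (_ : S) (_ : I) => R)
      (Measure.pi fun _ => ρ) (Measure.pi fun _ : S => Measure.pi fun _ : I => ρ) := by
    refine ⟨MeasurableEquiv.measurable _, ?_⟩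
    simpa only [Measure.infinitePi_eq_pi] using
      Measure.infinitePi_map_piCurry fun (_ : S) (_ : I) => ρ
  exact ((MeasurePreserving.id _).prod hcurry).comp
    (measurePreserving_sumPiEquivProdPi fun _ : L ⊕ (Σ _ : S, I) => ρ)

lemma measurePreserving_arrowSumSigma_prod {S : Type*} [Fintype S] [IsProbabilityMeasure ρ]
    [IsProbabilityMeasure κ] :
    MeasurePreserving (fun z : (L ⊕ (Σ _ : S, I) → R) × (L' ⊕ (Σ _ : S, J) → C) =>
        ((z.1 ∘ .inl, z.2 ∘ .inl),
          fun s => (fun i => z.1 (.inr ⟨s, i⟩), fun j => z.2 (.inr ⟨s, j⟩))))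
      ((Measure.pi fun _ => ρ).prod (Measure.pi fun _ => κ))
      (((Measure.pi fun _ : L => ρ).prod (Measure.pi fun _ : L' => κ)).prod
        (Measure.pi fun _ : S =>
          (Measure.pi fun _ : I => ρ).prod (Measure.pi fun _ : J => κ))) :=
  ((MeasurePreserving.id _).prod ((measurePreserving_arrowProdEquivProdArrow (I → R) (J → C) S
    (fun _ => Measure.pi fun _ => ρ) fun _ => Measure.pi fun _ => κ).symm)).comp
    ((measurePreserving_prodProdProdComm _ _ _ _).comp
      ((measurePreserving_arrowSumSigma S I L ρ).prod (measurePreserving_arrowSumSigma S J L' κ)))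

variable {S : Type*} [Fintype S] [DecidableEq S] [Fintype A]

/-- The pattern on the rows and columns sampled for the types, and those sampled for the
labellings, expressing that the labellings `ξ s` occur. -/
def momentPattern (ξ : S → Labelling I J (L' → A) (L → A) A) :
    L ⊕ (Σ _ : S, I) → L' ⊕ (Σ _ : S, J) → Finset A
  | .inl _, .inl _ => Finset.univ
  | .inl l, .inr q => {(ξ q.1).2.1 q.2 l}
  | .inr p, .inl l => {(ξ p.1).1 p.2 l}
  | .inr p, .inr q => if p.1 = q.1 then {(ξ p.1).2.2 p.2 q.2} else Finset.univ

lemma prod_prod_sum_momentPattern (hW : IsStochastic W)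
    (ξ : S → Labelling I J (L' → A) (L → A) A) (x : L ⊕ (Σ _ : S, I) → R)
    (y : L' ⊕ (Σ _ : S, J) → C) :
    ∏ p, ∏ q, ∑ ω ∈ momentPattern ξ p q, W (x p, y q) ω =
      ∏ s, sampledWeight W (ξ s) (x ∘ .inl, y ∘ .inl)
        (fun i => x (.inr ⟨s, i⟩), fun j => y (.inr ⟨s, j⟩)) := by
  have hoff (s : S) (i : I) : ∏ s', ∏ j, ∑ ω ∈ (if s = s' then {(ξ s).2.2 i j} else Finset.univ),
      W (x (.inr ⟨s, i⟩), y (.inr ⟨s', j⟩)) ω =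
        ∏ j, W (x (.inr ⟨s, i⟩), y (.inr ⟨s, j⟩)) ((ξ s).2.2 i j) := by
    rw [Finset.prod_eq_single s (fun s' _ hs' => ?_) fun h => absurd (Finset.mem_univ s) h]
    · simp only [if_true, Finset.sum_singleton]
    · simp only [if_neg hs'.symm, hW.sum_eq_one, Finset.prod_const_one]
  simp only [Fintype.prod_sum_type, Fintype.prod_sigma, momentPattern, hW.sum_eq_one,
    Finset.prod_const_one, one_mul, Finset.sum_singleton, hoff, Finset.prod_mul_distrib,
    sampledWeight, Labelling.weight, sampledPartition, Function.comp_apply, Prod.swap_prod_mk]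
  rw [Finset.prod_comm]
  simp only [Finset.prod_comm (s := Finset.univ (α := L))]
  ring

lemma integral_prod_sampledLabelProb [IsProbabilityMeasure ρ] [IsProbabilityMeasure κ]
    (hW : IsStochastic W) (ξ : S → Labelling I J (L' → A) (L → A) A) :
    ∫ θ : (L → R) × (L' → C), ∏ s, sampledLabelProb ρ κ W θ (ξ s)
        ∂(Measure.pi fun _ => ρ).prod (Measure.pi fun _ => κ) =
      patternProb ρ κ W (momentPattern ξ) := by
  have hmp := measurePreserving_arrowSumSigma_prod (R := R) (C := C) (I := I) (J := J) (L := L)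
    (L' := L') (ρ := ρ) (κ := κ) (S := S)
  have hmeas : Measurable fun p : ((L → R) × (L' → C)) × (S → (I → R) × (J → C)) =>
      ∏ s, sampledWeight W (ξ s) p.1 (p.2 s) := Finset.measurable_fun_prod _ fun s _ =>
    (measurable_sampledWeight hW (ξ s)).comp (f := fun p :
      ((L → R) × (L' → C)) × (S → (I → R) × (J → C)) => (p.1, p.2 s)) (by fun_prop)
  have h01 (p : ((L → R) × (L' → C)) × (S → (I → R) × (J → C))) :
      ∏ s, sampledWeight W (ξ s) p.1 (p.2 s) ∈ Icc 0 1 :=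
    unitInterval.submonoid.prod_mem fun s _ => sampledWeight_mem_Icc hW _ _ _
  rw [patternProb, homDensity]
  simp only [prod_prod_sum_momentPattern hW]
  calc _ = ∫ p, ∏ s, sampledWeight W (ξ s) p.1 (p.2 s)
        ∂((Measure.pi fun _ : L => ρ).prod (Measure.pi fun _ : L' => κ)).prod
          (Measure.pi fun _ : S =>
            (Measure.pi fun _ : I => ρ).prod (Measure.pi fun _ : J => κ)) := by
        rw [integral_prod _ (integrable_of_mem_Icc hmeas h01)]
        refine integral_congr_ae (.of_forall fun θ => ?_)
        exact (integral_fintype_prod_eq_prod fun s z => sampledWeight W (ξ s) θ z).symm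
    _ = _ := by
        rw [← hmp.map_eq, integral_map hmp.aemeasurable hmeas.aestronglyMeasurable]

end SampledMoments

section MomentConvergence

open scoped BoundedContinuousFunction

variable {ι : Type*} {l : Filter ι}

/-- Coordinate `ξ` on the cube, as a bounded continuous function. -/
def cubeCoord {Ξ : Type*} (ξ : Ξ) : (Ξ → unitInterval) →ᵇ ℝ :=
  BoundedContinuousFunction.mkOfCompact ⟨fun v => v ξ, by fun_prop⟩

/-- The algebra of polynomial functions on the cube. -/
def cubePolynomials (Ξ : Type*) : StarSubalgebra ℝ ((Ξ → unitInterval) →ᵇ ℝ) where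
  toSubalgebra := (MvPolynomial.aeval cubeCoord).range
  star_mem' := by
    intro g hg
    rwa [show star g = g from BoundedContinuousFunction.ext fun _ => star_trivial _]

lemma separatesPoints_cubePolynomials (Ξ : Type*) :
    ((cubePolynomials Ξ).map
      (BoundedContinuousFunction.toContinuousMapStarₐ ℝ)).SeparatesPoints := by
  intro v v' hv
  obtain ⟨ξ, hξ⟩ := Function.ne_iff.mp hv
  exact ⟨_, ⟨_, ⟨cubeCoord ξ, ⟨.X ξ, MvPolynomial.aeval_X _ ξ⟩, rfl⟩, rfl⟩,
    fun h => hξ (Subtype.ext h)⟩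

variable {Ξ : Type*} [Fintype Ξ]

lemma tendsto_of_tendsto_moments {μ : ι → ProbabilityMeasure (Ξ → unitInterval)}
    {μ' : ProbabilityMeasure (Ξ → unitInterval)}
    (h : ∀ d : Ξ → ℕ, Tendsto (fun n =>
      ∫ v : Ξ → unitInterval, ∏ ξ, (v ξ : ℝ) ^ d ξ ∂(μ n)) l
      (𝓝 (∫ v : Ξ → unitInterval, ∏ ξ, (v ξ : ℝ) ^ d ξ ∂μ'))) :
    Tendsto μ l (𝓝 μ') := by
  refine ProbabilityMeasure.tendsto_of_tight_of_separatesPoints ℝ .of_compactSpace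
    (separatesPoints_cubePolynomials Ξ) ?_
  rintro _ ⟨p, rfl⟩
  have hint (ν : ProbabilityMeasure (Ξ → unitInterval)) (d : Ξ →₀ ℕ) :
      Integrable (fun v : Ξ → unitInterval => p.coeff d * ∏ ξ, (v ξ : ℝ) ^ d ξ) ν :=
    Continuous.integrable_of_hasCompactSupport (by fun_prop) (.of_compactSpace _)
  have heval (ν : ProbabilityMeasure (Ξ → unitInterval)) :
      ∫ v : Ξ → unitInterval, MvPolynomial.aeval cubeCoord p v ∂ν =
        ∑ d ∈ p.support, p.coeff d * ∫ v : Ξ → unitInterval, ∏ ξ, (v ξ : ℝ) ^ d ξ ∂ν := by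
    simp only [← integral_const_mul]
    rw [← integral_finsetSum _ fun d _ => hint ν d]
    refine integral_congr_ae (.of_forall fun v => ?_)
    simp [MvPolynomial.aeval_def, MvPolynomial.eval₂_eq', cubeCoord]
  have hlim := tendsto_finsetSum p.support fun d _ => (h d).const_mul (p.coeff d)
  simp only [← heval] at hlim
  exact hlim

end MomentConvergence

section Selection

variable {ι E Θ' : Type*} {l : Filter ι} [TopologicalSpace E] [HereditarilyLindelofSpace E]
  [HasOuterApproxClosed E] [MeasurableSpace E] [OpensMeasurableSpace E] {Θ : ι → Type*}
  [∀ n, MeasurableSpace (Θ n)] [MeasurableSpace Θ']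

lemma exists_mem_forall_nhds_eventually_exists_mem {P : ∀ n, ProbabilityMeasure (Θ n)}
    {P' : ProbabilityMeasure Θ'} {V : ∀ n, Θ n → E} {V' : Θ' → E}
    (hV : ∀ n, AEMeasurable (V n) (P n)) (hV' : AEMeasurable V' P')
    (h : Tendsto (fun n => (P n).map (hV n)) l (𝓝 (P'.map hV'))) {G : Set Θ'}
    (hG : 0 < (P' : Measure Θ') G) :
    ∃ θ' ∈ G, ∀ U ∈ 𝓝 (V' θ'), ∀ᶠ n in l, ∃ θ, V n θ ∈ U := by
  have hsupp : ∀ᵐ θ' ∂(P' : Measure Θ'), V' θ' ∈ ((P' : Measure Θ').map V').support :=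
    ae_of_ae_map hV' Measure.support_mem_ae
  obtain ⟨θ', hθ'G, hθ'⟩ := (hsupp.and_frequently (frequently_ae_mem_iff.mpr hG.ne')).exists
  refine ⟨θ', hθ', fun U hU => ?_⟩
  have hpos : 0 < ((P'.map hV' : ProbabilityMeasure E) : Measure E) (interior U) :=
    (Measure.mem_support_iff_forall _).mp hθ'G _ (interior_mem_nhds.mpr hU)
  have hlim := hpos.trans_le
    (ProbabilityMeasure.le_liminf_measure_open_of_tendsto h isOpen_interior)
  filter_upwards [eventually_lt_of_lt_liminf hlim] with n hn
  rw [ProbabilityMeasure.map_apply' _ _ isOpen_interior.measurableSet] at hn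
  obtain ⟨θ, hθ⟩ := nonempty_of_measure_ne_zero hn.ne'
  exact ⟨θ, interior_subset hθ⟩

end Selection

section ArraysConvergeCoupling

variable {ι A : Type*} [Fintype A] {R C : ι → Type*} {R' C' : Type*}
  [∀ n, MeasurableSpace (R n)] [∀ n, MeasurableSpace (C n)] [MeasurableSpace R']
  [MeasurableSpace C'] {ρ : ∀ n, Measure (R n)} {κ : ∀ n, Measure (C n)}
  {W : ∀ n, R n × C n → A → ℝ} {ρ' : Measure R'} {κ' : Measure C'} {W' : R' × C' → A → ℝ}
  {l : Filter ι} [∀ n, IsProbabilityMeasure (ρ n)] [∀ n, IsProbabilityMeasure (κ n)]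
  [IsProbabilityMeasure ρ'] [IsProbabilityMeasure κ']

lemma ArraysConverge.tendsto_integral_prod_sampledLabelProb_pow
    (h : ArraysConverge ρ κ W ρ' κ' W' l) (hW : ∀ n, IsStochastic (W n)) (hW' : IsStochastic W')
    {I L : Type*} [Fintype I] [Fintype L] [DecidableEq I] [DecidableEq L]
    (d : Labelling I I (L → A) (L → A) A → ℕ) :
    Tendsto (fun n => ∫ θ : (L → R n) × (L → C n), ∏ ξ,
        sampledLabelProb (ρ n) (κ n) (W n) θ ξ ^ d ξ
          ∂(Measure.pi fun _ => ρ n).prod (Measure.pi fun _ => κ n)) l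
      (𝓝 (∫ θ : (L → R') × (L → C'), ∏ ξ, sampledLabelProb ρ' κ' W' θ ξ ^ d ξ
        ∂(Measure.pi fun _ => ρ').prod (Measure.pi fun _ => κ'))) := by
  classical
  have hpow (f : Labelling I I (L → A) (L → A) A → ℝ) :
      ∏ ξ, f ξ ^ d ξ = ∏ s : Σ ξ, Fin (d ξ), f s.1 := by
    simp only [Fintype.prod_sigma, Finset.prod_const, Finset.card_univ, Fintype.card_fin]
  simp only [hpow, integral_prod_sampledLabelProb hW' fun s : Σ ξ, Fin (d ξ) => s.1,
    fun n => integral_prod_sampledLabelProb (ρ := ρ n) (κ := κ n) (hW n)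
      fun s : Σ ξ, Fin (d ξ) => s.1]
  exact h.tendsto_patternProb hW hW' _

/-- The label probabilities sampled from the kernels `W n` converge in distribution, so those of
`W'` which come from samples exhibiting its regularity are approximated by label probabilities
of `W n`. -/
lemma ArraysConverge.exists_mem_forall_nhds_eventually_exists_sampledLabelProb_mem
    (h : ArraysConverge ρ κ W ρ' κ' W' l) (hW : ∀ n, IsStochastic (W n)) (hW' : IsStochastic W')
    {I L : Type*} [Fintype I] [Fintype L] {G : Set ((L → R') × (L → C'))}
    (hG : 0 < ((Measure.pi fun _ => ρ').prod (Measure.pi fun _ => κ')) G) :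
    ∃ θ' ∈ G, ∀ U ∈ 𝓝 (sampledLabelProb (I := I) (J := I) ρ' κ' W' θ'), ∀ᶠ n in l,
      ∃ θ : (L → R n) × (L → C n), sampledLabelProb (ρ n) (κ n) (W n) θ ∈ U := by
  classical
  let Ξ := Labelling I I (L → A) (L → A) A
  have hV (n : ι) : Measurable fun (θ : (L → R n) × (L → C n)) (ξ : Ξ) =>
      (⟨_, sampledLabelProb_mem_Icc (ρ := ρ n) (κ := κ n) (hW n) θ ξ⟩ : unitInterval) :=
    measurable_pi_lambda _ fun ξ => (measurable_sampledLabelProb (hW n) ξ).subtype_mk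
  have hV' : Measurable fun (θ : (L → R') × (L → C')) (ξ : Ξ) =>
      (⟨_, sampledLabelProb_mem_Icc (ρ := ρ') (κ := κ') hW' θ ξ⟩ : unitInterval) :=
    measurable_pi_lambda _ fun ξ => (measurable_sampledLabelProb hW' ξ).subtype_mk
  have hcoe : Continuous fun (v : Ξ → unitInterval) ξ => (v ξ : ℝ) := by fun_prop
  have hmeas (d : Ξ → ℕ) : Measurable fun v : Ξ → unitInterval => ∏ ξ, (v ξ : ℝ) ^ d ξ :=
    Continuous.measurable (by fun_prop)
  let P (n : ι) : ProbabilityMeasure ((L → R n) × (L → C n)) :=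
    ⟨(Measure.pi fun _ => ρ n).prod (Measure.pi fun _ => κ n), inferInstance⟩
  let P' : ProbabilityMeasure ((L → R') × (L → C')) :=
    ⟨(Measure.pi fun _ => ρ').prod (Measure.pi fun _ => κ'), inferInstance⟩
  have hlim : Tendsto (fun n => (P n).map (hV n).aemeasurable) l
      (𝓝 (P'.map hV'.aemeasurable)) := by
    refine tendsto_of_tendsto_moments fun d => ?_
    simp only [ProbabilityMeasure.toMeasure_map, integral_map hV'.aemeasurable
      (hmeas d).aestronglyMeasurable, fun n => integral_map (μ := (P n : Measure _))
        (hV n).aemeasurable (hmeas d).aestronglyMeasurable]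
    exact h.tendsto_integral_prod_sampledLabelProb_pow hW hW' d
  obtain ⟨θ', hθ', hnear⟩ := exists_mem_forall_nhds_eventually_exists_mem _ _ hlim hG
  exact ⟨θ', hθ', fun U hU => hnear _ (hcoe.continuousAt.preimage_mem_nhds hU)⟩

theorem ArraysConverge.eventually_exists_cutBound_kernelDiff
    (h : ArraysConverge ρ κ W ρ' κ' W' l) (hW : ∀ n, IsStochastic (W n)) (hW' : IsStochastic W')
    {ε : ℝ} (hε : 0 < ε) :
    ∀ᶠ n in l, ∃ (γ : Measure (R n × R')) (π : Measure (C n × C')),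
      (γ.map Prod.fst = ρ n ∧ γ.map Prod.snd = ρ') ∧ (π.map Prod.fst = κ n ∧ π.map Prod.snd = κ') ∧
      ∀ ω, CutBound γ π (kernelDiff (W n) W' ω) ε := by
  classical
  have hW's : IsStochastic fun z : C' × R' => W' z.swap := hW'.comp measurable_swap
  obtain ⟨k, hk⟩ := (eventually_measure_selfFourCycle_le_pos (ρ := ρ') (κ := κ') hW'
    (ε := ε ^ 4 / 2) (by positivity)).exists
  obtain ⟨θ', hθ', hnear⟩ :=
    h.exists_mem_forall_nhds_eventually_exists_sampledLabelProb_mem (I := Fin 2) hW hW' hk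
  have ha' := isStochastic_sampledPartition hW' θ'.2
  have hb' := isStochastic_sampledPartition hW's θ'.1
  have hlt (ω : A) : matchedFourCycle ω (sampledLabelProb ρ' κ' W' θ')
      (sampledLabelProb ρ' κ' W' θ') < ε ^ 4 :=
    calc _ = selfFourCycle ρ' κ' W' ω θ' :=
          (fourCycle_matchedCoupling ha' hb' hW' ha' hb' hW' ω).symm
      _ ≤ ε ^ 4 / 2 := hθ' ω
      _ < ε ^ 4 := half_lt_self (by positivity)
  filter_upwards [hnear _ (eventually_all.mpr fun ω =>
    (continuousAt_matchedFourCycle ω _).eventually_lt continuousAt_const (hlt ω))] with n hn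
  obtain ⟨θ, hθ⟩ := hn
  have hWs : IsStochastic fun z : C n × R n => W n z.swap := (hW n).comp measurable_swap
  have ha := isStochastic_sampledPartition (hW n) θ.2
  have hb := isStochastic_sampledPartition hWs θ.1
  have := isProbabilityMeasure_matchedCoupling (α := ρ n) (α' := ρ') ha ha'
  have := isProbabilityMeasure_matchedCoupling (α := κ n) (α' := κ') hb hb'
  refine ⟨matchedCoupling (ρ n) (sampledPartition (W n) θ.2) ρ' (sampledPartition W' θ'.2),
    matchedCoupling (κ n) (sampledPartition (fun z => W n z.swap) θ.1)
      κ' (sampledPartition (fun z => W' z.swap) θ'.1),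
    ⟨matchedCoupling_map_fst ha ha', matchedCoupling_map_snd ha ha'⟩,
    ⟨matchedCoupling_map_fst hb hb', matchedCoupling_map_snd hb hb'⟩, fun ω => ?_⟩
  refine .of_fourCycle_le (measurable_kernelDiff (hW n) hW' ω)
    (abs_kernelDiff_le_one (hW n) hW' ω) hε.le ?_
  exact (fourCycle_matchedCoupling ha hb (hW n) ha' hb' hW' ω).trans_le (hθ ω).le

end ArraysConvergeCoupling

section JointEv

lemma ev_mem_simplex (f : SigmaSp Ω) : ∀ᵐ x ∂lam01, ev Ω f x ∈ simplex Ω := f.2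

lemma integrable_ev_apply (f : SigmaSp Ω) (ω : Ω) : Integrable (fun x => ev Ω f x ω) lam01 :=
  (L1.integrable_coeFn f.1).eval ω

lemma withDensity_ev_apply (f : SigmaSp Ω) (ω : Ω) {U : Set ℝ} (hU : MeasurableSet U) :
    lam01.withDensity (fun x => ENNReal.ofReal (ev Ω f x ω)) U =
      ENNReal.ofReal (∫ x in U, ev Ω f x ω ∂lam01) := by
  rw [withDensity_apply _ hU,
    ← ofReal_integral_eq_lintegral_ofReal (integrable_ev_apply f ω).integrableOn]
  exact ae_restrict_of_ae ((ev_mem_simplex f).mono fun x hx => hx.1 ω)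

lemma measurable_setIntegral_ev (U : Set ℝ) (ω : Ω) :
    Measurable fun f : SigmaSp Ω => ∫ x in U, ev Ω f x ω ∂lam01 := by
  have hcont : Continuous fun f : SigmaSp Ω => ∫ x in U, ev Ω f x ∂lam01 :=
    (continuous_setIntegral (μ := lam01) (E := Ω → ℝ) U).comp continuous_subtype_val
  have hcoord (f : SigmaSp Ω) : ∫ x in U, ev Ω f x ω ∂lam01 = (∫ x in U, ev Ω f x ∂lam01) ω :=
    (eval_integral (fun i => (integrable_ev_apply f i).integrableOn) ω).symm
  simp only [hcoord]
  exact ((continuous_apply ω).comp hcont).measurable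

/-- The kernel sending `f ∈ Σ_Ω` to the measure on `[0, 1)` with density `x ↦ f x ω`. -/
def evKernel (ω : Ω) : ProbabilityTheory.Kernel (SigmaSp Ω) ℝ where
  toFun f := lam01.withDensity fun x => ENNReal.ofReal (ev Ω f x ω)
  measurable' := Measure.measurable_of_measurable_coe _ fun U hU => by
    simpa only [withDensity_ev_apply _ ω hU] using
      (measurable_setIntegral_ev U ω).ennreal_ofReal

instance isFiniteKernel_evKernel (ω : Ω) : ProbabilityTheory.IsFiniteKernel (evKernel ω) where
  exists_univ_le := by
    refine ⟨1, ENNReal.one_lt_top, fun f => ?_⟩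
    have hle : ∀ᵐ x ∂lam01, ENNReal.ofReal (ev Ω f x ω) ≤ 1 := by
      filter_upwards [ev_mem_simplex f] with x hx
      rw [← ENNReal.ofReal_one, ← hx.2]
      exact ENNReal.ofReal_le_ofReal
        (Finset.single_le_sum (fun i _ => hx.1 i) (Finset.mem_univ ω))
    calc evKernel ω f univ = ∫⁻ x, ENNReal.ofReal (ev Ω f x ω) ∂lam01 := by
          rw [evKernel, ProbabilityTheory.Kernel.coe_mk, withDensity_apply _ .univ,
            Measure.restrict_univ]
      _ ≤ ∫⁻ _, 1 ∂lam01 := lintegral_mono_ae hle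
      _ = 1 := by simp

/-- The Radon–Nikodym derivatives of the kernels `evKernel ω`, a version of evaluation that is
measurable in both variables but takes values in the simplex only almost everywhere. -/
def evDensity (p : SigmaSp Ω × ℝ) (ω : Ω) : ℝ :=
  ((evKernel ω).rnDeriv (.const _ lam01) p.1 p.2).toReal

lemma measurable_evDensity : Measurable (evDensity : SigmaSp Ω × ℝ → Ω → ℝ) :=
  measurable_pi_lambda _ fun ω =>
    (ProbabilityTheory.Kernel.measurable_rnDeriv (evKernel ω) _).ennreal_toReal

lemma ae_evDensity_eq_ev (f : SigmaSp Ω) : ∀ᵐ x ∂lam01, evDensity (f, x) = ev Ω f x := by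
  have hcoord (ω : Ω) : ∀ᵐ x ∂lam01, (evKernel ω).rnDeriv (.const _ lam01) f x =
      ENNReal.ofReal (ev Ω f x ω) :=
    ((evKernel ω).rnDeriv_eq_rnDeriv_measure (η := .const _ lam01) (a := f)).trans
      (Measure.rnDeriv_withDensity₀ lam01 (integrable_ev_apply f ω).aemeasurable.ennreal_ofReal)
  filter_upwards [ae_all_iff.mpr hcoord, ev_mem_simplex f] with x hx hsimplex
  exact funext fun ω => by rw [evDensity, hx, ENNReal.toReal_ofReal (hsimplex.1 ω)]

lemma measurableSet_simplex : MeasurableSet (simplex Ω) :=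
  (isClosed_stdSimplex ℝ Ω).measurableSet

open Classical in
/-- A version of evaluation on `Σ_Ω × [0, 1)` that is measurable in both variables jointly and
takes values in the simplex everywhere. -/
def jointEv (p : SigmaSp Ω × ℝ) : Ω → ℝ :=
  if evDensity p ∈ simplex Ω then evDensity p else fun _ => (Fintype.card Ω : ℝ)⁻¹

lemma ae_jointEv_eq_ev (f : SigmaSp Ω) : ∀ᵐ x ∂lam01, jointEv (f, x) = ev Ω f x := by
  filter_upwards [ae_evDensity_eq_ev f, ev_mem_simplex f] with x hx hsimplex
  rw [jointEv, hx, if_pos hsimplex]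

lemma nonempty_of_sigmaSp (f : SigmaSp Ω) : Nonempty Ω := by
  obtain ⟨x, hx⟩ := (ev_mem_simplex f).exists
  by_contra hΩ
  rw [not_nonempty_iff] at hΩ
  simpa using hx.2

lemma jointEv_mem_simplex (p : SigmaSp Ω × ℝ) : jointEv p ∈ simplex Ω := by
  have := nonempty_of_sigmaSp p.1
  rw [jointEv]
  split_ifs with h
  · exact h
  · exact ⟨fun ω => by positivity, by simp⟩

lemma isStochastic_jointEv : IsStochastic (jointEv : SigmaSp Ω × ℝ → Ω → ℝ) where
  measurable ω := (measurable_pi_apply ω).comp <|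
    .ite (measurable_evDensity measurableSet_simplex) measurable_evDensity measurable_const
  nonneg p := (jointEv_mem_simplex p).1
  sum_eq_one p := (jointEv_mem_simplex p).2

end JointEv

section AtomlessTransport

open ProbabilityTheory unitInterval

lemma continuous_cdf (ν : Measure ℝ) [IsProbabilityMeasure ν] [NullSingletonClass ν] :
    Continuous (cdf ν) := by
  refine continuous_iff_continuousAt.mpr fun x => ?_
  rw [(monotone_cdf ν).continuousAt_iff_leftLim_eq_rightLim, (cdf ν).rightLim_eq]
  refine le_antisymm ((monotone_cdf ν).leftLim_le le_rfl) ?_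
  have hx := (cdf ν).measure_singleton x
  rw [measure_cdf, measure_singleton] at hx
  exact sub_nonpos.mp (ENNReal.ofReal_eq_zero.mp hx.symm)

lemma exists_cdf_eq (ν : Measure ℝ) [IsProbabilityMeasure ν] [NullSingletonClass ν] {a : ℝ}
    (ha : a ∈ Ioo 0 1) : ∃ x, cdf ν x = a :=
  mem_range_of_exists_le_of_exists_ge (continuous_cdf ν)
    (((tendsto_cdf_atBot ν).eventually_le_const ha.1).exists)
    (((tendsto_cdf_atTop ν).eventually_const_le ha.2).exists)

lemma measure_setOf_cdf_le (ν : Measure ℝ) [IsProbabilityMeasure ν] [NullSingletonClass ν]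
    (a : I) :
    ν {x | cdf ν x ≤ a} = .ofReal a := by
  rcases a.2.2.eq_or_lt with h1 | h1
  · simp only [h1, cdf_le_one, ofPred_true, measure_univ, ENNReal.ofReal_one]
  refine le_antisymm ?_ ?_
  · refine ge_of_tendsto
      (ENNReal.continuous_ofReal.continuousWithinAt (s := Ioi (a : ℝ))).tendsto ?_
    filter_upwards [Ioo_mem_nhdsGT h1] with b hb
    obtain ⟨x, hx⟩ := exists_cdf_eq ν ⟨a.2.1.trans_lt hb.1, hb.2⟩
    rw [← hx, ofReal_cdf]
    refine measure_mono fun y (hy : cdf ν y ≤ a) => mem_Iic.mpr (le_of_not_gt fun hxy => ?_)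
    exact (hy.trans_lt hb.1).not_ge (hx.symm.le.trans (monotone_cdf ν hxy.le))
  · rcases a.2.1.eq_or_lt with h0 | h0
    · rw [← h0, ENNReal.ofReal_zero]
      exact zero_le
    obtain ⟨x, hx⟩ := exists_cdf_eq ν ⟨h0, h1⟩
    rw [← hx, ofReal_cdf]
    exact measure_mono fun y hy => monotone_cdf ν hy

lemma exists_measurable_map_eq_of_nullSingletonClass {Y : Type*} [MeasurableSpace Y]
    [StandardBorelSpace Y] (ν : Measure ℝ) [IsProbabilityMeasure ν] [NullSingletonClass ν]
    (τ : Measure Y) [IsProbabilityMeasure τ] :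
    ∃ T : ℝ → Y, Measurable T ∧ ν.map T = τ := by
  let F : ℝ → I := fun x => ⟨cdf ν x, cdf_nonneg ν x, cdf_le_one ν x⟩
  have hF : Measurable F := (monotone_cdf ν).measurable.subtype_mk
  have hmap : ν.map F = volume := by
    refine Measure.ext_of_Iic _ _ fun a => ?_
    rw [Measure.map_apply hF measurableSet_Iic, unitInterval.volume_Iic]
    exact measure_setOf_cdf_le ν a
  have := nonempty_of_isProbabilityMeasure τ
  obtain ⟨q, hq, hqτ⟩ := τ.exists_measurable_map_eq
  exact ⟨q ∘ F, hq.comp hF, by rw [← Measure.map_map hq hF, hmap, hqτ]⟩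

lemma ext_of_singleton_prod {L Y : Type*} [MeasurableSpace L] [Countable L]
    [MeasurableSingletonClass L] [MeasurableSpace Y] {μ ν : Measure (L × Y)}
    (h : ∀ (j : L) (V : Set Y), MeasurableSet V → μ ({j} ×ˢ V) = ν ({j} ×ˢ V)) : μ = ν := by
  refine Measure.ext_of_iUnion_eq_univ (s := fun j => Prod.fst ⁻¹' {j})
    (by ext; simp) fun j => Measure.ext fun S hS => ?_
  have hslice : S ∩ Prod.fst ⁻¹' {j} = {j} ×ˢ (Prod.mk j ⁻¹' S) := by
    ext ⟨l, y⟩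
    simp only [mem_inter_iff, mem_preimage, mem_singleton_iff, mem_prod]
    grind
  rw [Measure.restrict_apply hS, Measure.restrict_apply hS, hslice]
  exact h j _ (measurable_prodMk_left hS)

/-- A coupling of a discretised atomless variable is realised as a function of that variable:
inside each cell the conditional law is still atomless, hence can be transported to the
conditional law prescribed by the coupling. -/
lemma exists_measurable_map_prodMk_eq {L Y : Type*} [MeasurableSpace L] [Countable L]
    [MeasurableSingletonClass L] [MeasurableSpace Y] [StandardBorelSpace Y] [Nonempty Y]
    {κ : Measure ℝ} [IsProbabilityMeasure κ] [NullSingletonClass κ] {β : ℝ → L} (hβ : Measurable β)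
    {π : Measure (L × Y)} [IsFiniteMeasure π] (hπ : π.map Prod.fst = κ.map β) :
    ∃ s : ℝ → Y, Measurable s ∧ κ.map (fun x => (β x, s x)) = π := by
  have cell (j : L) : ∃ T : ℝ → Y, Measurable T ∧
      (κ (β ⁻¹' {j}) ≠ 0 → κ[|β ⁻¹' {j}].map T = π.condKernel j) := by
    by_cases hj : κ (β ⁻¹' {j}) = 0
    · exact ⟨fun _ => Classical.arbitrary Y, measurable_const, fun h => absurd hj h⟩
    have := cond_isProbabilityMeasure hj
    have : NullSingletonClass κ[|β ⁻¹' {j}] :=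
      ⟨fun x => cond_absolutelyContinuous (measure_singleton x)⟩
    obtain ⟨T, hT, hTj⟩ :=
      exists_measurable_map_eq_of_nullSingletonClass κ[|β ⁻¹' {j}] (π.condKernel j)
    exact ⟨T, hT, fun _ => hTj⟩
  choose T hT hTmap using cell
  have hs : Measurable fun x => T (β x) x :=
    (measurable_from_prod_countable_right (f := fun p : L × ℝ => T p.1 p.2) hT).comp
      (hβ.prodMk measurable_id)
  refine ⟨fun x => T (β x) x, hs, ext_of_singleton_prod fun j V hV => ?_⟩
  have hj := hβ (measurableSet_singleton j)
  calc κ.map (fun x => (β x, T (β x) x)) ({j} ×ˢ V)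
      = κ (β ⁻¹' {j} ∩ T j ⁻¹' V) := by
        rw [Measure.map_apply (hβ.prodMk hs) ((measurableSet_singleton j).prod hV)]
        congr 1 with x
        simp only [mem_preimage, mem_prod, mem_singleton_iff, mem_inter_iff]
        grind
    _ = κ[|β ⁻¹' {j}].map (T j) V * κ (β ⁻¹' {j}) := by
        rw [Measure.map_apply (hT j) hV, cond_mul_eq_inter hj]
    _ = π.condKernel j V * κ (β ⁻¹' {j}) := by
        rcases eq_or_ne (κ (β ⁻¹' {j})) 0 with h0 | h0
        · rw [h0, mul_zero, mul_zero]
        · rw [hTmap j h0]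
    _ = (π.fst ⊗ₘ π.condKernel) ({j} ×ˢ V) := by
        rw [Measure.compProd_apply_prod (measurableSet_singleton j) hV, lintegral_singleton,
          Measure.fst, hπ, Measure.map_apply hβ (measurableSet_singleton j)]
    _ = π ({j} ×ˢ V) := by rw [π.disintegrate]

end AtomlessTransport

section KernelDiffTransport

variable {R R' C C' A : Type*} [MeasurableSpace R] [MeasurableSpace R'] [MeasurableSpace C]
  [MeasurableSpace C'] [Fintype A] {W : R × C → A → ℝ} {W' : R' × C' → A → ℝ} {c η : ℝ}

lemma CutBound.of_map_eq {P Q Q' S : Type*} [MeasurableSpace P] [MeasurableSpace Q]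
    [MeasurableSpace Q'] [MeasurableSpace S] {γ : Measure P} [SFinite γ] {π : Measure Q}
    [SFinite π] {π' : Measure Q'} [SFinite π'] {φ : Q → S} {φ' : Q' → S} (hφ : Measurable φ)
    (hφ' : Measurable φ') (hmap : π.map φ = π'.map φ') {D : P × S → ℝ} (hD : Measurable D)
    (hDi : Integrable (fun z => D (z.1, φ z.2)) (γ.prod π))
    (h : CutBound γ π (fun z => D (z.1, φ z.2)) c) :
    CutBound γ π' (fun z => D (z.1, φ' z.2)) c := by
  have hprod : γ.prod (π.map φ) = (γ.prod π).map (Prod.map id φ) := by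
    rw [← Measure.map_prod_map _ _ measurable_id hφ, Measure.map_id]
  have hDi' : Integrable D (γ.prod (π'.map φ')) := by
    rw [← hmap, hprod]
    exact (integrable_map_measure hD.aestronglyMeasurable (by fun_prop)).mpr hDi
  refine .comp_snd hφ' hD hDi' ?_
  rw [← hmap]
  exact .of_comp_snd hφ hD h

lemma measurePreserving_fst_fst (γ : Measure (R × R')) [IsFiniteMeasure γ] (π : Measure (C × C'))
    [IsFiniteMeasure π] :
    MeasurePreserving (fun z : (R × R') × (C × C') => (z.1.1, z.2.1)) (γ.prod π)
      ((γ.map Prod.fst).prod (π.map Prod.fst)) :=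
  (MeasurePreserving.mk measurable_fst rfl).prod (.mk measurable_fst rfl)

/-- The column-simple approximation `G (·, β ·)` of the first kernel only sees the columns through
`β`, so the cut norm of the difference barely depends on the finer details of the coupling. -/
lemma CutBound.kernelDiff_of_map_eq {L : Type*} [MeasurableSpace L] {γ : Measure (R × R')}
    [IsFiniteMeasure γ] {π π' : Measure (C × C')} [IsFiniteMeasure π] [IsFiniteMeasure π']
    (hW : IsStochastic W) (hW' : IsStochastic W') {ω : A} {β : C → L} (hβ : Measurable β)
    {G : R × L → ℝ} (hG : Measurable G)
    (hGi : Integrable (fun z => G (z.1, β z.2)) ((γ.map Prod.fst).prod (π.map Prod.fst)))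
    (hη : ∫ z, |W z ω - G (z.1, β z.2)| ∂(γ.map Prod.fst).prod (π.map Prod.fst) ≤ η)
    (hfst : π.map Prod.fst = π'.map Prod.fst)
    (hmap : π.map (Prod.map β id) = π'.map (Prod.map β id))
    (h : CutBound γ π (kernelDiff W W' ω) c) :
    CutBound γ π' (kernelDiff W W' ω) (c + η + η) := by
  let D : (R × R') × (L × C') → ℝ := fun z => G (z.1.1, z.2.1) - W' (z.1.2, z.2.2) ω
  have hD : Measurable D := by
    have := hW'.measurable ω
    fun_prop
  have hK : Measurable (kernelDiff W W' ω) := measurable_kernelDiff hW hW' ω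
  have integrable_kernelDiff (τ : Measure (C × C')) [IsFiniteMeasure τ] :
      Integrable (kernelDiff W W' ω) (γ.prod τ) :=
    integrable_of_abs_le hK (abs_kernelDiff_le_one hW hW' ω)
  have integrable_D (τ : Measure (C × C')) [IsFiniteMeasure τ]
      (hτ : π.map Prod.fst = τ.map Prod.fst) :
      Integrable (fun z => D (z.1, Prod.map β id z.2)) (γ.prod τ) := by
    rw [hτ] at hGi
    exact ((measurePreserving_fst_fst γ τ).integrable_comp_of_integrable hGi).sub
      (integrable_of_abs_le (c := 1) (by have := hW'.measurable ω; fun_prop)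
        fun z => hW'.abs_le_one _ ω)
  have integral_le (τ : Measure (C × C')) [IsFiniteMeasure τ]
      (hτ : π.map Prod.fst = τ.map Prod.fst) :
      ∫ z, |kernelDiff W W' ω z - D (z.1, Prod.map β id z.2)| ∂γ.prod τ ≤ η := by
    have hWG : Measurable fun z => |W z ω - G (z.1, β z.2)| := by
      have := hW.measurable ω
      fun_prop
    rw [hτ, ← (measurePreserving_fst_fst γ τ).map_eq,
      integral_map (by fun_prop) hWG.aestronglyMeasurable] at hη
    simpa only [kernelDiff, D, Prod.map, id, sub_sub_sub_cancel_right] using hη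
  have hsimple : CutBound γ π (fun z => D (z.1, Prod.map β id z.2)) (c + η) :=
    h.of_integral_abs_sub_le (integrable_D π rfl) (integrable_kernelDiff π) <| by
      simpa only [abs_sub_comm] using integral_le π rfl
  have hsimple' : CutBound γ π' (fun z => D (z.1, Prod.map β id z.2)) (c + η) :=
    .of_map_eq (by fun_prop) (by fun_prop) hmap hD (integrable_D π rfl) hsimple
  exact hsimple'.of_integral_abs_sub_le (integrable_kernelDiff π') (integrable_D π' hfst)
    (integral_le π' hfst)

theorem exists_measurable_map_cutBound_kernelDiff [StandardBorelSpace C'] {W : R × ℝ → A → ℝ}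
    (hW : IsStochastic W) (hW' : IsStochastic W') {γ : Measure (R × R')} [IsFiniteMeasure γ]
    {π : Measure (ℝ × C')} {κ : Measure ℝ} [IsProbabilityMeasure κ] [NullSingletonClass κ]
    (hfst : π.map Prod.fst = κ) (h : ∀ ω, CutBound γ π (kernelDiff W W' ω) c) (hη : 0 < η) :
    ∃ s : ℝ → C', Measurable s ∧ κ.map s = π.map Prod.snd ∧
      ∀ ω, CutBound γ (κ.map fun x => (x, s x)) (kernelDiff W W' ω) (c + η + η) := by
  subst hfst
  have : IsProbabilityMeasure π := π.isProbabilityMeasure_of_map Prod.fst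
  have : Nonempty C' := (nonempty_of_isProbabilityMeasure π).map Prod.snd
  have hint (ω : A) : Integrable (W · ω) ((γ.map Prod.fst).prod (π.map Prod.fst)) :=
    integrable_of_abs_le (hW.measurable ω) fun z => hW.abs_le_one z ω
  choose G hG hGi hWG using fun ω => exists_isColumnSimple_integral_abs_sub_le (hint ω) hη
  choose N b w hb hw hGw using hG
  have hβ : Measurable fun y ω => b ω y := measurable_pi_lambda _ hb
  obtain ⟨s, hs, hmap⟩ := exists_measurable_map_prodMk_eq hβ
    (π := π.map (Prod.map (fun y ω => b ω y) id)) (by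
      rw [Measure.map_map measurable_fst (by fun_prop), Measure.map_map hβ measurable_fst]
      rfl)
  have hgraph : Measurable fun x => (x, s x) := measurable_id.prodMk hs
  refine ⟨s, hs, ?_, fun ω => ?_⟩
  · have := congrArg (Measure.map Prod.snd) hmap
    rw [Measure.map_map measurable_snd (by fun_prop),
      Measure.map_map measurable_snd (by fun_prop)] at this
    exact this
  · refine (h ω).kernelDiff_of_map_eq hW hW' hβ (G := fun z => w ω z.1 (z.2 ω))
      (measurable_comp_fin (b := fun l : ∀ ω, Fin (N ω) => l ω) (measurable_pi_apply ω) (hw ω))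
      (by simpa only [hGw] using hGi ω) (by simpa only [hGw] using hWG ω) ?_ ?_
    · rw [Measure.map_map measurable_fst hgraph]
      exact Measure.map_id.symm
    · rw [Measure.map_map (by fun_prop) hgraph, ← hmap]
      rfl

end KernelDiffTransport

section CutBoundHomDensity

variable {R R' C C' I J : Type*} [MeasurableSpace R] [MeasurableSpace R'] [MeasurableSpace C]
  [MeasurableSpace C'] [Fintype I] [Fintype J]

lemma homDensity_comp_map {ρ : Measure R} {κ : Measure C} [IsProbabilityMeasure ρ]
    [IsProbabilityMeasure κ] {f : R → R'} {g : C → C'} (hf : Measurable f) (hg : Measurable g)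
    {F : I → J → R' × C' → ℝ} (hF : ∀ i j, Measurable (F i j)) :
    homDensity ρ κ (fun i j z => F i j (f z.1, g z.2)) = homDensity (ρ.map f) (κ.map g) F := by
  have := Measure.isProbabilityMeasure_map (μ := ρ) hf.aemeasurable
  have := Measure.isProbabilityMeasure_map (μ := κ) hg.aemeasurable
  have hmp := (measurePreserving_pi (fun _ : I => ρ) (fun _ => ρ.map f) fun _ => ⟨hf, rfl⟩).prod
    (measurePreserving_pi (fun _ : J => κ) (fun _ => κ.map g) fun _ => ⟨hg, rfl⟩)
  rw [homDensity, homDensity, ← hmp.map_eq,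
    integral_map hmp.aemeasurable (measurable_prod_prod hF).aestronglyMeasurable]
  rfl

lemma abs_homDensity_sub_le_of_cutBound_kernelDiff {A : Type*} [Fintype A] {W : R × C → A → ℝ}
    {W' : R' × C' → A → ℝ} (hW : IsStochastic W) (hW' : IsStochastic W')
    {γ : Measure (R × R')} [IsProbabilityMeasure γ] {π : Measure (C × C')} [IsProbabilityMeasure π]
    {c : ℝ} (h : ∀ ω, CutBound γ π (kernelDiff W W' ω) c) (a : I → J → A) :
    |homDensity (γ.map Prod.fst) (π.map Prod.fst) (fun i j z => W z (a i j)) -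
        homDensity (γ.map Prod.snd) (π.map Prod.snd) fun i j z => W' z (a i j)| ≤
      Fintype.card (I × J) * c := by
  rw [← homDensity_comp_map measurable_fst measurable_fst fun i j => hW.measurable (a i j),
    ← homDensity_comp_map measurable_snd measurable_snd fun i j => hW'.measurable (a i j)]
  exact abs_homDensity_sub_le (fun i j => (hW.measurable (a i j)).comp (by fun_prop))
    (fun i j z => hW.mem_Icc _ _) (fun i j => (hW'.measurable (a i j)).comp (by fun_prop))
    (fun i j z => hW'.mem_Icc _ _) fun i j => h (a i j)

end CutBoundHomDensity

lemma CutBound.of_abs_le_one {P Q : Type*} [MeasurableSpace P] [MeasurableSpace Q] {γ : Measure P}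
    {π : Measure Q} [IsProbabilityMeasure γ] [IsProbabilityMeasure π] {D : P × Q → ℝ}
    (hD : ∀ z, |D z| ≤ 1) : CutBound γ π D 1 := by
  intro B V _ _
  rw [← Real.norm_eq_abs]
  refine (norm_setIntegral_le_of_norm_le_const (C := 1) (measure_lt_top _ _)
    fun z _ => hD z).trans ?_
  rw [one_mul]
  exact measureReal_le_one

section WeakCutMetric

instance nullSingletonClass_lam01 : NullSingletonClass lam01 := by
  unfold lam01
  infer_instance

lemma arrayProb_eq_homDensity (μ : PM Ω) (k : ℕ) (a : Fin k → Fin k → Ω) :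
    arrayProb Ω μ k a =
      homDensity (μ : Measure (SigmaSp Ω)) lam01 fun i j z => jointEv z (a i j) := by
  rw [homDensity, integral_prod _ (integrable_prod_prod
    (fun i j => isStochastic_jointEv.measurable _) fun i j z => isStochastic_jointEv.mem_Icc z _)]
  refine integral_congr_ae (.of_forall fun f => integral_congr_ae ?_)
  have heval (i j : Fin k) :
      ∀ᵐ x ∂Measure.pi fun _ : Fin k => lam01, jointEv (f i, x j) = ev Ω (f i) (x j) :=
    (measurePreserving_eval (fun _ : Fin k => lam01) j).quasiMeasurePreserving.ae
      (ae_jointEv_eq_ev (f i))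
  filter_upwards [ae_all_iff.mpr fun i => ae_all_iff.mpr (heval i)] with x hx
  simp only [hx]

/-- The difference of evaluations underlying `cutPair Ω γ s`, with `ev` replaced by its jointly
measurable version. -/
def rearrangedDiff (s : ℝ → ℝ) (ω : Ω) (z : (SigmaSp Ω × SigmaSp Ω) × ℝ) : ℝ :=
  kernelDiff jointEv jointEv ω (z.1, (z.2, s z.2))

variable {γ : Measure (SigmaSp Ω × SigmaSp Ω)} [IsProbabilityMeasure γ] {s : ℝ → ℝ} {c : ℝ}

lemma setIntegral_rearrangedDiff (hs : MeasurePreserving s lam01 lam01) (ω : Ω)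
    (B : Set (SigmaSp Ω × SigmaSp Ω)) (U : Set ℝ) :
    ∫ z in B ×ˢ U, rearrangedDiff s ω z ∂γ.prod lam01 =
      ∫ p in B, ∫ x in U, (ev Ω p.1 x ω - ev Ω p.2 (s x) ω) ∂lam01 ∂γ := by
  have hmeas : Measurable (rearrangedDiff s ω) :=
    (measurable_kernelDiff isStochastic_jointEv isStochastic_jointEv ω).comp
      (measurable_fst.prodMk (measurable_snd.prodMk (hs.measurable.comp measurable_snd)))
  have hint : Integrable (rearrangedDiff s ω) (γ.prod lam01) := integrable_of_abs_le hmeas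
    fun z => abs_kernelDiff_le_one isStochastic_jointEv isStochastic_jointEv ω _
  rw [← Measure.prod_restrict, integral_prod _ (by
    rw [Measure.prod_restrict]
    exact hint.integrableOn)]
  refine integral_congr_ae (.of_forall fun p => integral_congr_ae (ae_restrict_of_ae ?_))
  filter_upwards [ae_jointEv_eq_ev p.1,
    hs.quasiMeasurePreserving.ae (ae_jointEv_eq_ev p.2)] with x hfst hsnd
  simp only [rearrangedDiff, kernelDiff, hfst, hsnd]

lemma tv_le {v : Ω → ℝ} (hv : ∀ ω, |v ω| ≤ c) : tv Ω v ≤ Fintype.card Ω * c / 2 := by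
  rw [tv, ← nsmul_eq_mul]
  gcongr
  exact Finset.sum_le_card_nsmul _ _ _ fun ω _ => hv ω

lemma abs_le_two_mul_tv (v : Ω → ℝ) (ω : Ω) : |v ω| ≤ 2 * tv Ω v := by
  rw [tv, mul_div_cancel₀ _ two_ne_zero]
  exact Finset.single_le_sum (f := fun ω => |v ω|) (fun _ _ => abs_nonneg _) (Finset.mem_univ ω)

lemma cutPair_nonneg (γ : Measure (SigmaSp Ω × SigmaSp Ω)) (s : ℝ → ℝ) : 0 ≤ cutPair Ω γ s :=
  Real.iSup_nonneg fun _ => Real.iSup_nonneg fun _ => Real.iSup_nonneg fun _ =>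
    Real.iSup_nonneg fun _ => by unfold tv; positivity

lemma tv_setIntegral_le (hs : MeasurePreserving s lam01 lam01)
    (h : ∀ ω : Ω, CutBound γ lam01 (rearrangedDiff s ω) c) {B : Set (SigmaSp Ω × SigmaSp Ω)}
    (hB : MeasurableSet B) {U : Set ℝ} (hU : MeasurableSet U) :
    tv Ω (fun ω => ∫ p in B, ∫ x in U, (ev Ω p.1 x ω - ev Ω p.2 (s x) ω) ∂lam01 ∂γ) ≤
      Fintype.card Ω * c / 2 := by
  refine tv_le fun ω => ?_
  rw [← setIntegral_rearrangedDiff hs]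
  exact h ω hB hU

lemma cutPair_le (hs : MeasurePreserving s lam01 lam01) (hc : 0 ≤ c)
    (h : ∀ ω : Ω, CutBound γ lam01 (rearrangedDiff s ω) c) :
    cutPair Ω γ s ≤ Fintype.card Ω * c / 2 := by
  have hnonneg : 0 ≤ Fintype.card Ω * c / 2 := by positivity
  exact Real.iSup_le (fun B => Real.iSup_le (fun hB => Real.iSup_le (fun U => Real.iSup_le
    (fun hU => tv_setIntegral_le hs h hB hU) hnonneg) hnonneg) hnonneg) hnonneg

lemma le_iSup_iSup_of_forall_le {α : Type*} {p : α → Prop} {f : ∀ a, p a → ℝ} {b : ℝ}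
    (hb : 0 ≤ b) (hf : ∀ a ha, f a ha ≤ b) (a : α) (ha : p a) : f a ha ≤ ⨆ a, ⨆ ha, f a ha :=
  (le_ciSup (Set.finite_range _).bddAbove ha).trans
    (le_ciSup ⟨b, forall_mem_range.mpr fun a => Real.iSup_le (hf a) hb⟩ a)

lemma cutBound_rearrangedDiff_cutPair (hs : MeasurePreserving s lam01 lam01) (ω : Ω) :
    CutBound γ lam01 (rearrangedDiff s ω) (2 * cutPair Ω γ s) := by
  intro B U hB hU
  let v (B : Set (SigmaSp Ω × SigmaSp Ω)) (U : Set ℝ) (ω : Ω) : ℝ :=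
    ∫ p in B, ∫ x in U, (ev Ω p.1 x ω - ev Ω p.2 (s x) ω) ∂lam01 ∂γ
  have hbdd : (0 : ℝ) ≤ Fintype.card Ω * 1 / 2 := by positivity
  have htv (B : Set (SigmaSp Ω × SigmaSp Ω)) (hB : MeasurableSet B) (U : Set ℝ)
      (hU : MeasurableSet U) : tv Ω (v B U) ≤ Fintype.card Ω * 1 / 2 :=
    tv_setIntegral_le hs (fun ω => .of_abs_le_one fun z =>
      abs_kernelDiff_le_one isStochastic_jointEv isStochastic_jointEv ω _) hB hU
  have hle : tv Ω (v B U) ≤ cutPair Ω γ s :=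
    (le_iSup_iSup_of_forall_le hbdd (htv B hB) U hU).trans
      (le_iSup_iSup_of_forall_le hbdd (fun B hB => Real.iSup_le (fun U => Real.iSup_le
        (htv B hB U) hbdd) hbdd) B hB)
  rw [setIntegral_rearrangedDiff hs]
  exact (abs_le_two_mul_tv (v B U) ω).trans (mul_le_mul_of_nonneg_left hle zero_le_two)

lemma cutBound_map_prodMk_iff (hs : Measurable s) {ω : Ω} :
    CutBound γ (lam01.map fun x => (x, s x)) (kernelDiff jointEv jointEv ω) c ↔
      CutBound γ lam01 (rearrangedDiff s ω) c := by
  have hgraph : Measurable fun x => (x, s x) := measurable_id.prodMk hs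
  have hK := measurable_kernelDiff isStochastic_jointEv isStochastic_jointEv ω
  exact ⟨.comp_snd hgraph hK <| integrable_of_abs_le hK <|
    abs_kernelDiff_le_one isStochastic_jointEv isStochastic_jointEv ω, .of_comp_snd hgraph hK⟩

end WeakCutMetric

section Cutd

variable {μ ν : PM Ω} {γ : Measure (SigmaSp Ω × SigmaSp Ω)} {s : ℝ → ℝ} {c : ℝ}

lemma IsCoupling.isProbabilityMeasure (hγ : IsCoupling Ω μ ν γ) : IsProbabilityMeasure γ :=
  have : IsProbabilityMeasure (γ.map Prod.fst) := by
    rw [hγ.1]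
    infer_instance
  γ.isProbabilityMeasure_of_map Prod.fst

lemma isCoupling_prod (μ ν : PM Ω) :
    IsCoupling Ω μ ν ((μ : Measure (SigmaSp Ω)).prod (ν : Measure (SigmaSp Ω))) :=
  ⟨measurePreserving_fst.map_eq, measurePreserving_snd.map_eq⟩

lemma isMPS_id : IsMPS id :=
  ⟨.id lam01, fun _ hx => hx⟩

lemma cutd_nonneg (μ ν : PM Ω) : 0 ≤ cutd Ω μ ν :=
  Real.iInf_nonneg fun _ => Real.iInf_nonneg fun _ => cutPair_nonneg _ _

lemma cutd_le_cutPair (hγ : IsCoupling Ω μ ν γ) (hs : IsMPS s) :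
    cutd Ω μ ν ≤ cutPair Ω γ s :=
  (ciInf_le ⟨0, forall_mem_range.mpr fun _ => Real.iInf_nonneg fun _ => cutPair_nonneg _ _⟩
    (⟨γ, hγ⟩ : {γ // IsCoupling Ω μ ν γ})).trans
      (ciInf_le ⟨0, forall_mem_range.mpr fun _ => cutPair_nonneg _ _⟩
        (⟨s, hs⟩ : {s // IsMPS s}))

lemma abs_arrayProb_sub_le_cutPair (hγ : IsCoupling Ω μ ν γ) (hs : IsMPS s) (k : ℕ)
    (a : Fin k → Fin k → Ω) :
    |arrayProb Ω μ k a - arrayProb Ω ν k a| ≤ k ^ 2 * (2 * cutPair Ω γ s) := by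
  have := hγ.isProbabilityMeasure
  set π := lam01.map fun x => (x, s x)
  have : IsProbabilityMeasure π := Measure.isProbabilityMeasure_map
    (measurable_id.prodMk hs.1.measurable).aemeasurable
  have hfst : π.map Prod.fst = lam01 :=
    (Measure.fst_map_prodMk hs.1.measurable).trans Measure.map_id
  have hsnd : π.map Prod.snd = lam01 :=
    (Measure.snd_map_prodMk measurable_id).trans hs.1.map_eq
  have hcount := abs_homDensity_sub_le_of_cutBound_kernelDiff isStochastic_jointEv
    isStochastic_jointEv (γ := γ) (fun ω => (cutBound_map_prodMk_iff hs.1.measurable).mpr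
      (cutBound_rearrangedDiff_cutPair hs.1 ω)) a
  rw [hγ.1, hγ.2, hfst, hsnd, ← arrayProb_eq_homDensity,
    ← arrayProb_eq_homDensity] at hcount
  simpa only [Fintype.card_prod, Fintype.card_fin, Nat.cast_mul, sq] using hcount

theorem abs_arrayProb_sub_le (μ ν : PM Ω) (k : ℕ) (a : Fin k → Fin k → Ω) :
    |arrayProb Ω μ k a - arrayProb Ω ν k a| ≤ 2 * k ^ 2 * cutd Ω μ ν := by
  have : Nonempty {γ // IsCoupling Ω μ ν γ} := ⟨⟨_, isCoupling_prod μ ν⟩⟩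
  have : Nonempty {s // IsMPS s} := ⟨⟨id, isMPS_id⟩⟩
  have hk : (0 : ℝ) ≤ 2 * k ^ 2 := by positivity
  simp only [cutd, Real.mul_iInf_of_nonneg hk]
  refine le_ciInf fun γ => le_ciInf fun s => ?_
  rw [mul_comm 2, mul_assoc]
  exact abs_arrayProb_sub_le_cutPair γ.2 s.2 k a

lemma exists_isMPS_ae_eq (hs : MeasurePreserving s lam01 lam01) :
    ∃ s', IsMPS s' ∧ s' =ᵐ[lam01] s := by
  classical
  have hmem : ∀ᵐ x ∂lam01, s x ∈ Ico (0 : ℝ) 1 :=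
    hs.quasiMeasurePreserving.ae (ae_restrict_mem measurableSet_Ico)
  have heq : (fun x => if s x ∈ Ico (0 : ℝ) 1 then s x else 0) =ᵐ[lam01] s :=
    hmem.mono fun x hx => if_pos hx
  refine ⟨_, ⟨⟨.ite (hs.measurable measurableSet_Ico) hs.measurable measurable_const, ?_⟩,
    fun x _ => ?_⟩, heq⟩
  · rw [Measure.map_congr heq, hs.map_eq]
  · split_ifs with h
    · exact h
    · exact ⟨le_rfl, zero_lt_one⟩

/-- Since `[0, 1)` has no atoms, the coupling `π` of the columns can be replaced, at an arbitrarily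
small cost, by a rearrangement `s`. -/
theorem cutd_le_of_cutBound (hγ : IsCoupling Ω μ ν γ) {π : Measure (ℝ × ℝ)}
    (hfst : π.map Prod.fst = lam01) (hsnd : π.map Prod.snd = lam01) (hc : 0 ≤ c)
    (h : ∀ ω : Ω, CutBound γ π (kernelDiff jointEv jointEv ω) c) :
    cutd Ω μ ν ≤ Fintype.card Ω * c / 2 := by
  have := hγ.isProbabilityMeasure
  have hlim : Tendsto (fun η : ℝ => Fintype.card Ω * (c + η + η) / 2) (𝓝[>] 0)
      (𝓝 (Fintype.card Ω * c / 2)) :=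
    (Continuous.tendsto' (by fun_prop) _ _ (by simp)).mono_left nhdsWithin_le_nhds
  refine ge_of_tendsto hlim ?_
  filter_upwards [self_mem_nhdsWithin] with η (hη : 0 < η)
  obtain ⟨s, hs, hmap, hcut⟩ := exists_measurable_map_cutBound_kernelDiff isStochastic_jointEv
    isStochastic_jointEv hfst h hη
  obtain ⟨s', hs', heq⟩ := exists_isMPS_ae_eq ⟨hs, hmap.trans hsnd⟩
  refine (cutd_le_cutPair hγ hs').trans (cutPair_le hs'.1 (by positivity) fun ω => ?_)
  rw [← cutBound_map_prodMk_iff hs'.1.measurable,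
    Measure.map_congr (heq.mono fun x hx => congrArg (Prod.mk x) hx)]
  exact hcut ω

theorem eventually_cutd_le {ι : Type*} {l : Filter ι} {μn : ι → PM Ω} {μ : PM Ω}
    (h : ∀ (k : ℕ) (a : Fin k → Fin k → Ω),
      Tendsto (fun n => arrayProb Ω (μn n) k a) l (𝓝 (arrayProb Ω μ k a))) (hc : 0 < c) :
    ∀ᶠ n in l, cutd Ω (μn n) μ ≤ Fintype.card Ω * c / 2 := by
  simp only [arrayProb_eq_homDensity] at h
  have harrays : ArraysConverge (fun n => (μn n : Measure (SigmaSp Ω))) (fun _ => lam01)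
      (fun _ => jointEv) μ lam01 jointEv l := h
  filter_upwards [harrays.eventually_exists_cutBound_kernelDiff (fun _ => isStochastic_jointEv)
    isStochastic_jointEv hc] with n ⟨γ, π, hγ, hπ, hcut⟩
  exact cutd_le_of_cutBound hγ hπ.1 hπ.2 hc.le hcut

theorem tendsto_weak_cut_iff_arrays_converge_general {ι : Type*} {l : Filter ι} (μn : ι → PM Ω)
    (μ : PM Ω) :
    Tendsto (fun n => cutd Ω (μn n) μ) l (𝓝 0) ↔
      ∀ (k : ℕ) (a : Fin k → Fin k → Ω),
        Tendsto (fun n => arrayProb Ω (μn n) k a) l (𝓝 (arrayProb Ω μ k a)) := by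
  refine ⟨fun hcut k a => ?_, fun harrays => ?_⟩
  · have hbound : Tendsto (fun n => 2 * k ^ 2 * cutd Ω (μn n) μ) l (𝓝 0) := by
      simpa only [mul_zero] using hcut.const_mul (2 * (k : ℝ) ^ 2)
    exact tendsto_iff_norm_sub_tendsto_zero.mpr <|
      squeeze_zero (fun _ => norm_nonneg _) (fun n => abs_arrayProb_sub_le (μn n) μ k a) hbound
  · refine tendsto_order.mpr ⟨fun b hb => .of_forall fun n => hb.trans_le (cutd_nonneg _ _),
      fun ε hε => ?_⟩
    have hlim : Tendsto (fun c : ℝ => Fintype.card Ω * c / 2) (𝓝[>] 0) (𝓝 0) :=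
      (Continuous.tendsto' (by fun_prop) _ _ (by simp)).mono_left nhdsWithin_le_nhds
    obtain ⟨c, hcε, hc⟩ := ((hlim.eventually_lt_const hε).and self_mem_nhdsWithin).exists
    exact (eventually_cutd_le harrays hc).mono fun n hn => hn.trans_lt hcε

end Cutd

/-- Corollary: Aldous–Hoover correspondence. A sequence `(μ̄_n)` converges to
`μ̄` in `𝓜_Ω` (i.e. the representatives converge in the weak cut metric `cut□`) iff the
associated random arrays converge in distribution, i.e. all finite-dimensional cylinder
probabilities converge. -/
theorem tendsto_weak_cut_iff_arrays_converge
    (μn : ℕ → PM Ω) (μ : PM Ω) :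
    Tendsto (fun n => cutd Ω (μn n) μ) atTop (nhds 0) ↔
      (∀ (kk : ℕ) (a : Fin kk → Fin kk → Ω),
        Tendsto (fun n => arrayProb Ω (μn n) kk a) atTop (nhds (arrayProb Ω μ kk a))) :=
  tendsto_weak_cut_iff_arrays_converge_general μn μ

end Paper
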